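/- For every reduced word i ∈ Σ_{n+1} and every dominant integral weight λ, the N-dimensional Euclidean volume of the string polytope Δ_i(λ) equals the N-dimensional Euclidean volume of the Gelfand–Cetlin polytope GC(λ). -/

import Mathlib

open scoped Classical

noncomputable section

namespace StringPolytope

/-! ### Words, reduced words, two-moves -/

/-- the simple transposition `s_a = (a, a+1)` acting on `ℕ` (wires are `1, …, n+1`). -/
def sTrans (a : ℕ) : Equiv.Perm ℕ := Equiv.swap a (a + 1)

/-- product `s_{i₁} ⋯ s_{i_N}` of the simple transpositions of a word. -/
def wordProd (w : List ℕ) : Equiv.Perm ℕ := (w.map sTrans).prod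

/-- the longest element `w₀` of the symmetric group on `{1, …, n+1}`,
sending `k ↦ n + 2 - k` there and fixing everything else. -/
def longestPerm (n : ℕ) : Equiv.Perm ℕ :=
  Function.Involutive.toPerm
    (fun k => if 1 ≤ k ∧ k ≤ n + 1 then n + 2 - k else k)
    (by intro k; dsimp only; split_ifs <;> omega)

/-- `w ∈ Σ_{n+1}`: a reduced word of the longest element of `S_{n+1}`,
i.e. a word over `[n] = {1,…,n}` of length `N = n(n+1)/2` whose product is `w₀`. -/
def IsReduced (n : ℕ) (w : List ℕ) : Prop :=
  w.length = n * (n + 1) / 2 ∧ (∀ a ∈ w, 1 ≤ a ∧ a ≤ n) ∧ wordProd w = longestPerm n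

/-- a single 2-move: exchange two adjacent letters `(a, b)` with `|a - b| > 1`. -/
def TwoMoveStep (w w' : List ℕ) : Prop :=
  ∃ u v a b, (a + 1 < b ∨ b + 1 < a) ∧ w = u ++ a :: b :: v ∧ w' = u ++ b :: a :: v

/-- 2-move equivalence of words. -/
def TwoMoveEquiv : List ℕ → List ℕ → Prop := Relation.ReflTransGen TwoMoveStep

/-- `A_n = (1, 2, …, n)`. -/
def ascWord (n : ℕ) : List ℕ := (List.range n).map (· + 1)

/-- `D_n = (n, n-1, …, 1)`. -/
def descWord (n : ℕ) : List ℕ := (ascWord n).reverse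

/-! ### The wiring diagram -/

/-- the letter `i_j` of `w` (1-based index `j`); the node `t_j` lies in column `i_j`. -/
def letterAt (w : List ℕ) (j : ℕ) : ℕ := w.getD (j - 1) 0

/-- `1 ≤ j ≤ N`: `t_j` is an actual node of the diagram. -/
def ValidNode (w : List ℕ) (j : ℕ) : Prop := 1 ≤ j ∧ j ≤ w.length

/-- the column-to-wire assignment just above node `t_j`
(at the top of the diagram, wire `k` is in column `k`). -/
def stateAbove (w : List ℕ) (j : ℕ) : Equiv.Perm ℕ := wordProd (w.take (j - 1))

/-- the column-to-wire assignment just below node `t_j`. -/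
def stateBelow (w : List ℕ) (j : ℕ) : Equiv.Perm ℕ := wordProd (w.take j)

/-- one of the two wires crossing at node `t_j` (the one leaving upward-left). -/
def wireX (w : List ℕ) (j : ℕ) : ℕ := stateAbove w j (letterAt w j)

/-- the other wire crossing at node `t_j` (the one leaving upward-right). -/
def wireY (w : List ℕ) (j : ℕ) : ℕ := stateAbove w j (letterAt w j + 1)

/-- the node `t_j` lies on the wire `ℓ_r`. -/
def NodeOnWire (w : List ℕ) (j r : ℕ) : Prop := wireX w j = r ∨ wireY w j = r

/-- given one wire `r` at node `t_j`, the other wire crossing there. -/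
def otherWire (w : List ℕ) (j r : ℕ) : ℕ := if wireX w j = r then wireY w j else wireX w j

/-- the column of wire `ℓ_r` at the height of node `t_j`. -/
def wireCol (w : List ℕ) (j r : ℕ) : ℕ := (stateBelow w j).symm r

/-- node `t_j` lies strictly below the wire `ℓ_{n+1}`
(which runs from the bottom-left corner to the top-right corner). -/
def BelowWireLast (n : ℕ) (w : List ℕ) (j : ℕ) : Prop :=
  wireCol w j (n + 1) < letterAt w j

/-- node `t_j` lies strictly above the wire `ℓ_{n+1}`. -/
def AboveWireLast (n : ℕ) (w : List ℕ) (j : ℕ) : Prop :=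
  letterAt w j + 1 < wireCol w j (n + 1)

/-- node `t_j` lies strictly below the wire `ℓ_1`
(which runs from the bottom-right corner to the top-left corner). -/
def BelowWireOne (w : List ℕ) (j : ℕ) : Prop :=
  letterAt w j + 1 < wireCol w j 1

/-- node `t_j` lies strictly above the wire `ℓ_1`. -/
def AboveWireOne (w : List ℕ) (j : ℕ) : Prop :=
  wireCol w j 1 < letterAt w j

/-! ### Rigorous (Gleizer–Postnikov) paths

A path in `G(i, k)` is encoded by `k` together with the list of its switching
nodes, in order of travel.  Wires `ℓ_1, …, ℓ_k` are oriented upward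
(decreasing node index) and the remaining wires downward. -/

/-- the (1-based indices of the) nodes lying on wire `ℓ_r`, in order of increasing index. -/
def nodesOn (w : List ℕ) (r : ℕ) : List ℕ :=
  ((List.range w.length).map (· + 1)).filter (fun j => decide (NodeOnWire w j r))

/-- nodes on wire `ℓ_r` strictly between the nodes `t_a` and `t_b`. -/
def segList (w : List ℕ) (r a b : ℕ) : List ℕ :=
  (nodesOn w r).filter (fun j => decide (min a b < j ∧ j < max a b))

/-- nodes on wire `ℓ_r` strictly below the node `t_a`. -/
def tailList (w : List ℕ) (r a : ℕ) : List ℕ :=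
  (nodesOn w r).filter (fun j => decide (a < j))

/-- a forbidden fragment of `G(i, k)`: the path passes straight through node `t_j`
travelling along the wire `ℓ_r`, where the other wire `ℓ_b` crossing there has the same
orientation as `ℓ_r` and (`r < b` if both upward, `r > b` if both downward). -/
def Forbidden (w : List ℕ) (k j r : ℕ) : Prop :=
  (r ≤ k ∧ otherWire w j r ≤ k ∧ r < otherWire w j r) ∨
  (k < r ∧ k < otherWire w j r ∧ otherWire w j r < r)

/-- travelling in `G(i,k)`: currently on wire `ℓ_r` at node `t_a` (just switched there),
with future switching nodes `ms`; the travel is legal and ends at `L_{k+1}`. -/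
def TravelOK (w : List ℕ) (k : ℕ) : ℕ → ℕ → List ℕ → Prop
  | r, a, [] => r = k + 1 ∧ ∀ j ∈ tailList w r a, ¬ Forbidden w k j r
  | r, a, m :: ms =>
      ValidNode w m ∧ NodeOnWire w m r ∧
      (if r ≤ k then m < a else a < m) ∧
      (∀ j ∈ segList w r a m, ¬ Forbidden w k j r) ∧
      TravelOK w k (otherWire w m r) m ms

/-- all nodes visited after the switch at node `t_a` onto wire `ℓ_r`. -/
def visitTail (w : List ℕ) : ℕ → ℕ → List ℕ → List ℕ
  | r, a, [] => tailList w r a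
  | r, a, m :: ms => segList w r a m ++ m :: visitTail w (otherWire w m r) m ms

/-- the list of all nodes visited by the path (switching nodes and straight passes). -/
def visitList (w : List ℕ) (k : ℕ) : List ℕ → List ℕ
  | [] => []
  | m :: ms => tailList w k m ++ m :: visitTail w (otherWire w m k) m ms

/-- `(k, ms)` encodes a rigorous (Gleizer–Postnikov) path in `G(i, k)`:
it starts at `L_k` going up the wire `ℓ_k`, switches wires exactly at the nodes
listed in `ms`, respects the orientation, ends at `L_{k+1}`, contains no forbidden
fragment and passes through each node at most once. -/
def IsGPPath (n : ℕ) (w : List ℕ) (k : ℕ) (ms : List ℕ) : Prop :=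
  1 ≤ k ∧ k ≤ n ∧
  (match ms with
   | [] => False
   | m :: rest =>
       ValidNode w m ∧ NodeOnWire w m k ∧
       (∀ j ∈ tailList w k m, ¬ Forbidden w k j k) ∧
       TravelOK w k (otherWire w m k) m rest) ∧
  (visitList w k ms).Nodup

/-- the set `GP(i)` of all rigorous paths of `G(i)`. -/
def GP (n : ℕ) (w : List ℕ) : Set (ℕ × List ℕ) := {p | IsGPPath n w p.1 p.2}

/-- `|GP(i)|`, the number of rigorous paths. -/
def numGP (n : ℕ) (w : List ℕ) : ℕ := (GP n w).ncard

/-- the successive switches of a path: `(node, from-wire, to-wire)`. -/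
def pathSwitches (w : List ℕ) : ℕ → List ℕ → List (ℕ × ℕ × ℕ)
  | _, [] => []
  | r, m :: ms => (m, r, otherWire w m r) :: pathSwitches w (otherWire w m r) ms

/-- the wire-expression of a path: the successive wires travelled. -/
def wireSeq (w : List ℕ) : ℕ → List ℕ → List ℕ
  | r, [] => [r]
  | r, m :: ms => r :: wireSeq w (otherWire w m r) ms

/-- the peaks of a path: switching nodes where the path switches from an
upward wire to a downward wire. -/
def peaks (w : List ℕ) (k : ℕ) (ms : List ℕ) : List ℕ :=
  ((pathSwitches w k ms).filter (fun e => decide (e.2.1 ≤ k ∧ k < e.2.2))).map (·.1)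

/-! ### String cone, `λ`-cone, string polytope -/

/-- `N = n(n+1)/2`, the number of nodes. -/
abbrev Dim (n : ℕ) : ℕ := n * (n + 1) / 2

/-- the coefficient `a_j` of `t_j` in the string inequality of the path `(k, ms)`:
`+1` if the path switches at `t_j` from `ℓ_r` to `ℓ_s` with `r < s`,
`-1` if it switches with `r > s`, and `0` otherwise. -/
def coeff (w : List ℕ) (k : ℕ) (ms : List ℕ) (j : ℕ) : ℝ :=
  ((pathSwitches w k ms).map (fun e =>
    if e.1 = j then (if e.2.1 < e.2.2 then (1 : ℝ) else -1) else 0)).sum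

/-- the (primitive inward normal) coefficient vector of the string inequality of a path. -/
def normalVec (n : ℕ) (w : List ℕ) (p : ℕ × List ℕ) : Fin (Dim n) → ℝ :=
  fun j => coeff w p.1 p.2 ((j : ℕ) + 1)

/-- the left-hand side `∑ a_j t_j` of the string inequality of the path `p`. -/
def stringIneq (n : ℕ) (w : List ℕ) (p : ℕ × List ℕ) (t : Fin (Dim n) → ℝ) : ℝ :=
  ∑ j : Fin (Dim n), normalVec n w p j * t j

/-- the string cone `C_i ⊆ ℝ^N`. -/
def stringCone (n : ℕ) (w : List ℕ) : Set (Fin (Dim n) → ℝ) :=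
  {t | ∀ p ∈ GP n w, 0 ≤ stringIneq n w p t}

/-- the polyhedron cut out by all string inequalities except the one of `p₀`. -/
def stringConeExcept (n : ℕ) (w : List ℕ) (p₀ : ℕ × List ℕ) : Set (Fin (Dim n) → ℝ) :=
  {t | ∀ p ∈ GP n w, p ≠ p₀ → 0 ≤ stringIneq n w p t}

/-- the coefficient `a_k` in the `λ`-inequality of node `t_j`:
`1` if `t_k` is one column left or right of `t_j`, `-2` if in the same column. -/
def lamCoeff (w : List ℕ) (j k : ℕ) : ℝ :=
  if letterAt w k = letterAt w j then -2
  else if letterAt w k = letterAt w j + 1 ∨ letterAt w k + 1 = letterAt w j then 1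
  else 0

/-- the `λ`-inequality of node `t_{j+1}`:
`t_j ≤ λ_{i_j} + ∑_{k > j} a_k t_k`. -/
def LamIneq (n : ℕ) (w : List ℕ) (lam : ℕ → ℤ) (j : Fin (Dim n)) (t : Fin (Dim n) → ℝ) : Prop :=
  t j ≤ (lam (letterAt w ((j : ℕ) + 1)) : ℝ) +
    ∑ k : Fin (Dim n),
      (if (j : ℕ) < (k : ℕ) then lamCoeff w ((j : ℕ) + 1) ((k : ℕ) + 1) else 0) * t k

/-- the `λ`-cone `C_i^λ ⊆ ℝ^N`. -/
def lamCone (n : ℕ) (w : List ℕ) (lam : ℕ → ℤ) : Set (Fin (Dim n) → ℝ) :=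
  {t | ∀ j, LamIneq n w lam j t}

/-- the polyhedron cut out by all `λ`-inequalities except the one of `j₀`. -/
def lamConeExcept (n : ℕ) (w : List ℕ) (lam : ℕ → ℤ) (j₀ : Fin (Dim n)) :
    Set (Fin (Dim n) → ℝ) :=
  {t | ∀ j, j ≠ j₀ → LamIneq n w lam j t}

/-- the string polytope `Δ_i(λ) = C_i ∩ C_i^λ`. -/
def stringPolytope (n : ℕ) (w : List ℕ) (lam : ℕ → ℤ) : Set (Fin (Dim n) → ℝ) :=
  stringCone n w ∩ lamCone n w lam

/-- `λ = λ_1 ϖ_1 + ⋯ + λ_n ϖ_n` is a dominant integral weight: all `λ_j ≥ 0`. -/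
def Dominant (n : ℕ) (lam : ℕ → ℤ) : Prop := ∀ j, 1 ≤ j → j ≤ n → 0 ≤ lam j

/-- `λ` is a regular dominant integral weight: all `λ_j > 0`. -/
def RegularDominant (n : ℕ) (lam : ℕ → ℤ) : Prop := ∀ j, 1 ≤ j → j ≤ n → 0 < lam j

/-! ### Unimodular equivalence, Gelfand–Cetlin polytope, facets -/

/-- `P` and `Q` are unimodularly equivalent: `Q = M(P) + v` with `M ∈ GL(m, ℤ)`, `v ∈ ℤ^m`. -/
def UnimodEquiv {m : ℕ} (P Q : Set (Fin m → ℝ)) : Prop :=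
  ∃ (M : Matrix (Fin m) (Fin m) ℤ) (v : Fin m → ℤ), IsUnit M.det ∧
    Q = (fun x i => (∑ j, (M i j : ℝ) * x j) + (v i : ℝ)) '' P

/-- the entry `x_{k,j}` (`1 ≤ j ≤ k ≤ n+1`) of a Gelfand–Cetlin pattern, where the
top row is `x_{n+1,j} = λ_j + ⋯ + λ_n` and `x_{n+1,n+1} = 0`; the pair `(k, j)` is
encoded as the coordinate `k(k-1)/2 + (j-1)` of `ℝ^N`. -/
def gcX (n : ℕ) (lam : ℕ → ℤ) (x : Fin (Dim n) → ℝ) (k j : ℕ) : ℝ :=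
  if k = n + 1 then (if j ≤ n then ∑ t ∈ Finset.Icc j n, (lam t : ℝ) else 0)
  else if h : k * (k - 1) / 2 + (j - 1) < Dim n then x ⟨k * (k - 1) / 2 + (j - 1), h⟩ else 0

/-- the Gelfand–Cetlin polytope `GC(λ) ⊆ ℝ^N`. -/
def GCPolytope (n : ℕ) (lam : ℕ → ℤ) : Set (Fin (Dim n) → ℝ) :=
  {x | ∀ k j, 1 ≤ k → k ≤ n → 1 ≤ j → j ≤ k →
      gcX n lam x k j ≤ gcX n lam x (k + 1) j ∧
      gcX n lam x (k + 1) (j + 1) ≤ gcX n lam x k j}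

/-- a face of a convex set: a convex extreme subset. -/
def IsFaceSet {m : ℕ} (S F : Set (Fin m → ℝ)) : Prop := IsExtreme ℝ S F ∧ Convex ℝ F

/-- a facet: a maximal proper face. -/
def IsFacet {m : ℕ} (S F : Set (Fin m → ℝ)) : Prop :=
  IsFaceSet S F ∧ F ≠ S ∧ ∀ G, IsFaceSet S G → G ≠ S → F ⊆ G → F = G

/-- the number of facets. -/
def numFacets {m : ℕ} (S : Set (Fin m → ℝ)) : ℕ := {F | IsFacet S F}.ncard

/-- combinatorial equivalence: an inclusion-preserving bijection between face lattices. -/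
def CombEquiv {m : ℕ} (S T : Set (Fin m → ℝ)) : Prop :=
  ∃ e : {F // IsFaceSet S F} ≃ {F // IsFaceSet T F},
    ∀ F G : {F // IsFaceSet S F}, F.1 ⊆ G.1 ↔ (e F).1 ⊆ (e G).1

/-! ### Indices, contractions and extensions -/

/-- the `D`-index `ind_D(i) = |i_D^+|` for a decomposition `i ∼ i_D^- D_n i_D^+`
(independent of the decomposition). -/
def indD (n : ℕ) (w : List ℕ) : ℕ :=
  sInf {s | ∃ u v : List ℕ, v.length = s ∧ TwoMoveEquiv w (u ++ descWord n ++ v)}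

/-- the `A`-index `ind_A(i) = |i_A^+|` for a decomposition `i ∼ i_A^- A_n i_A^+`. -/
def indA (n : ℕ) (w : List ℕ) : ℕ :=
  sInf {s | ∃ u v : List ℕ, v.length = s ∧ TwoMoveEquiv w (u ++ ascWord n ++ v)}

/-- `w'` is a `D`-contraction `C_D(w) = i_D^- (i_D^+ - 1)` of `w ∈ Σ_{n+1}`. -/
def IsContractionD (n : ℕ) (w w' : List ℕ) : Prop :=
  ∃ u v : List ℕ, TwoMoveEquiv w (u ++ descWord n ++ v) ∧ w' = u ++ v.map (· - 1)

/-- `w'` is an `A`-contraction `C_A(w) = (i_A^- - 1) i_A^+` of `w ∈ Σ_{n+1}`. -/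
def IsContractionA (n : ℕ) (w w' : List ℕ) : Prop :=
  ∃ u v : List ℕ, TwoMoveEquiv w (u ++ ascWord n ++ v) ∧ w' = u.map (· - 1) ++ v

/-- the `D`-extension `E_D(s) : Σ_{n+1} → Σ_{n+2}`,
`i = i^-(s) i^+(s) ↦ i^-(s) D_{n+1} (i^+(s) + 1)` where `|i^+(s)| = s`. -/
def extD (n : ℕ) (s : ℕ) (w : List ℕ) : List ℕ :=
  w.take (w.length - s) ++ descWord (n + 1) ++ (w.drop (w.length - s)).map (· + 1)

/-- the `A`-extension `E_A(s) : Σ_{n+1} → Σ_{n+2}`,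
`i = i^-(s) i^+(s) ↦ (i^-(s) + 1) A_{n+1} i^+(s)`. -/
def extA (n : ℕ) (s : ℕ) (w : List ℕ) : List ℕ :=
  (w.take (w.length - s)).map (· + 1) ++ ascWord (n + 1) ++ w.drop (w.length - s)

/-- there exists `(σ_1, …, σ_n) ∈ {A, D}^n` (here `true = D`, `false = A`) such that
`ind_{σ_k}(C_{σ_{k+1}} ∘ ⋯ ∘ C_{σ_n}(i)) = 0` for all `k = n, …, 1`. -/
def SimplicialWord (n : ℕ) (w : List ℕ) : Prop :=
  ∃ (σ : ℕ → Bool) (c : ℕ → List ℕ), c n = w ∧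
    ∀ k, 1 ≤ k → k ≤ n →
      (if σ k then IsContractionD k (c k) (c (k - 1)) ∧ indD k (c k) = 0
       else IsContractionA k (c k) (c (k - 1)) ∧ indA k (c k) = 0)


/-- the `D`-coindex `coind_D(i) = |i_D^-|`. -/
def coindD (n : ℕ) (w : List ℕ) : ℕ :=
  sInf {s | ∃ u v : List ℕ, u.length = s ∧ TwoMoveEquiv w (u ++ descWord n ++ v)}

/-- the `A`-coindex `coind_A(i) = |i_A^-|`. -/
def coindA (n : ℕ) (w : List ℕ) : ℕ :=
  sInf {s | ∃ u v : List ℕ, u.length = s ∧ TwoMoveEquiv w (u ++ ascWord n ++ v)}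

/-- the `a`-th (0-based) coordinate of a point of `ℝ^N`. -/
def entry (n : ℕ) (t : Fin (Dim n) → ℝ) (a : ℕ) : ℝ :=
  if h : a < Dim n then t ⟨a, h⟩ else 0

/-- the product of cones
`t_1 ≥ 0`, `t_2 ≥ t_3 ≥ 0`, …, `t_{N-n+1} ≥ ⋯ ≥ t_N ≥ 0` (in `ℝ^N`, 1-based:
for `k = 1, …, n` the chain `t_{k(k-1)/2+1} ≥ ⋯ ≥ t_{k(k-1)/2+k} ≥ 0`). -/
def chainCone (n : ℕ) : Set (Fin (Dim n) → ℝ) :=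
  {t | ∀ k j, 1 ≤ k → k ≤ n → 1 ≤ j → j ≤ k →
    (if j = k then 0 else entry n t (k * (k - 1) / 2 + j)) ≤
      entry n t (k * (k - 1) / 2 + (j - 1))}

/-!
A point `t` satisfies the string inequalities of all rigorous paths in `G(i,k)` if and only if the
edges of the wiring diagram carry a potential subject to one local inequality at every crossing:
this is shortest-path duality, with `t_j` and `-t_j` as the lengths of the turns. A time function
increasing along oriented paths shows that such paths never repeat a node, so no cycles have to be
excluded. Being local, potentials transform explicitly under braid moves. A 2-move swaps two
coordinates of `t`, while a 3-move acts by `(x, y, z) ↦ (max z (y - x), x + z, min x (y - z))`;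
both respect the string inequalities and the `λ`-inequalities. These maps are piecewise unimodular,
hence preserve volume. By Matsumoto's theorem any reduced word can be moved to `1, 21, 321, …`,
where the string cone is a product of chains `t ≥ t' ≥ ⋯ ≥ 0` and a unimodular affine map,
taking partial sums of differences of consecutive rows, identifies `GC(λ)` with the string
polytope.
-/

/-! ### Reduced words of permutations -/

lemma sTrans_apply (a x : ℕ) :
    sTrans a x = if x = a then a + 1 else if x = a + 1 then a else x :=
  Equiv.swap_apply_def a (a + 1) x

lemma sTrans_apply_left (a : ℕ) : sTrans a a = a + 1 := Equiv.swap_apply_left a (a + 1)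

lemma sTrans_apply_right (a : ℕ) : sTrans a (a + 1) = a := Equiv.swap_apply_right a (a + 1)

lemma sTrans_apply_of_ne {a x : ℕ} (h₁ : x ≠ a) (h₂ : x ≠ a + 1) : sTrans a x = x :=
  Equiv.swap_apply_of_ne_of_ne h₁ h₂

lemma sTrans_apply_add_two (a : ℕ) : sTrans a (a + 1 + 1) = a + 1 + 1 :=
  sTrans_apply_of_ne (by omega) (by omega)

lemma sTrans_succ_apply_self (a : ℕ) : sTrans (a + 1) a = a :=
  sTrans_apply_of_ne (by omega) (by omega)

lemma sTrans_sTrans (a x : ℕ) : sTrans a (sTrans a x) = x := by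
  rw [← Equiv.Perm.mul_apply, sTrans, Equiv.swap_mul_self, Equiv.Perm.one_apply]

lemma mul_sTrans_mul_sTrans (σ : Equiv.Perm ℕ) (a : ℕ) : σ * sTrans a * sTrans a = σ :=
  Equiv.mul_swap_mul_self a (a + 1) σ

lemma sTrans_comm {a b : ℕ} (h : a + 1 < b ∨ b + 1 < a) :
    sTrans a * sTrans b = sTrans b * sTrans a := by
  ext x
  simp only [Equiv.Perm.mul_apply, sTrans_apply]
  split_ifs <;> omega

lemma sTrans_braid {a b : ℕ} (h : b = a + 1 ∨ a = b + 1) :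
    sTrans a * sTrans b * sTrans a = sTrans b * sTrans a * sTrans b := by
  wlog hb : b = a + 1 generalizing a b with H
  · exact (H h.symm (h.resolve_left hb)).symm
  subst hb
  ext x
  simp only [Equiv.Perm.mul_apply]
  by_cases h₁ : x = a
  · subst h₁
    simp only [sTrans_apply_left, sTrans_apply_add_two, sTrans_succ_apply_self]
  by_cases h₂ : x = a + 1
  · subst h₂
    simp only [sTrans_apply_left, sTrans_apply_right, sTrans_apply_add_two,
      sTrans_succ_apply_self]
  by_cases h₃ : x = a + 1 + 1
  · subst h₃
    simp only [sTrans_apply_right, sTrans_apply_add_two, sTrans_succ_apply_self]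
  rw [sTrans_apply_of_ne h₁ h₂, sTrans_apply_of_ne h₂ h₃, sTrans_apply_of_ne h₁ h₂,
    sTrans_apply_of_ne h₂ h₃]

lemma sTrans_lt_sTrans {a i j : ℕ} (hij : i < j) (h : ¬(i = a ∧ j = a + 1)) :
    sTrans a i < sTrans a j := by
  simp only [sTrans_apply]
  split_ifs <;> omega

lemma sTrans_mem_Icc {n a i : ℕ} (ha : 1 ≤ a ∧ a ≤ n) (hi : 1 ≤ i ∧ i ≤ n + 1) :
    1 ≤ sTrans a i ∧ sTrans a i ≤ n + 1 := by
  simp only [sTrans_apply]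
  split_ifs <;> omega

lemma wordProd_nil : wordProd [] = 1 := rfl

lemma wordProd_cons (a : ℕ) (v : List ℕ) : wordProd (a :: v) = sTrans a * wordProd v := by
  simp only [wordProd, List.map_cons, List.prod_cons]

lemma wordProd_append (u v : List ℕ) : wordProd (u ++ v) = wordProd u * wordProd v := by
  simp only [wordProd, List.map_append, List.prod_append]

lemma wordProd_concat (u : List ℕ) (a : ℕ) : wordProd (u ++ [a]) = wordProd u * sTrans a := by
  rw [wordProd_append, wordProd_cons, wordProd_nil, mul_one]

/-- The inversions of `σ` among the pairs in `{1, …, n+1}`. -/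
def inversions (n : ℕ) (σ : Equiv.Perm ℕ) : Finset (ℕ × ℕ) :=
  ((Finset.Icc 1 (n + 1)) ×ˢ (Finset.Icc 1 (n + 1))).filter
    (fun p => p.1 < p.2 ∧ σ p.2 < σ p.1)

lemma mem_inversions {n : ℕ} {σ : Equiv.Perm ℕ} {p : ℕ × ℕ} :
    p ∈ inversions n σ ↔ (1 ≤ p.1 ∧ p.1 ≤ n + 1) ∧ (1 ≤ p.2 ∧ p.2 ≤ n + 1) ∧
      p.1 < p.2 ∧ σ p.2 < σ p.1 := by
  simp only [inversions, Finset.mem_filter, Finset.mem_product, Finset.mem_Icc, and_assoc]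

lemma inversions_one (n : ℕ) : inversions n 1 = ∅ := by
  rw [Finset.eq_empty_iff_forall_notMem]
  intro p hp
  simp only [mem_inversions, Equiv.Perm.one_apply] at hp
  omega

lemma card_inversions_mul_sTrans {n a : ℕ} (ha : 1 ≤ a ∧ a ≤ n) {σ : Equiv.Perm ℕ}
    (h : σ a < σ (a + 1)) :
    (inversions n (σ * sTrans a)).card = (inversions n σ).card + 1 := by
  have hmem : (a, a + 1) ∈ inversions n (σ * sTrans a) := by
    simp only [mem_inversions, Equiv.Perm.mul_apply, sTrans_apply_left, sTrans_apply_right]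
    omega
  rw [← Finset.card_erase_add_one hmem]
  congr 1
  refine Finset.card_nbij' (fun p => (sTrans a p.1, sTrans a p.2))
    (fun p => (sTrans a p.1, sTrans a p.2)) ?_ ?_ ?_ ?_
  · rintro ⟨i, j⟩ hp
    simp only [Finset.mem_coe, Finset.mem_erase, mem_inversions, Equiv.Perm.mul_apply, ne_eq,
      Prod.mk.injEq] at hp ⊢
    obtain ⟨hne, hi, hj, hlt, hs⟩ := hp
    exact ⟨sTrans_mem_Icc ha hi, sTrans_mem_Icc ha hj, sTrans_lt_sTrans hlt hne, hs⟩
  · rintro ⟨i, j⟩ hp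
    simp only [Finset.mem_coe, Finset.mem_erase, mem_inversions, Equiv.Perm.mul_apply, ne_eq,
      Prod.mk.injEq, sTrans_sTrans] at hp ⊢
    obtain ⟨hi, hj, hlt, hs⟩ := hp
    have hne : ¬(i = a ∧ j = a + 1) := by
      rintro ⟨rfl, rfl⟩
      omega
    refine ⟨?_, sTrans_mem_Icc ha hi, sTrans_mem_Icc ha hj, sTrans_lt_sTrans hlt hne, hs⟩
    simp only [sTrans_apply]
    split_ifs <;> omega
  · rintro ⟨i, j⟩ _
    simp only [sTrans_sTrans]
  · rintro ⟨i, j⟩ _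
    simp only [sTrans_sTrans]

lemma card_inversions_of_descent {n a : ℕ} (ha : 1 ≤ a ∧ a ≤ n) {σ : Equiv.Perm ℕ}
    (h : σ (a + 1) < σ a) :
    (inversions n σ).card = (inversions n (σ * sTrans a)).card + 1 := by
  have := card_inversions_mul_sTrans ha (σ := σ * sTrans a)
    (by simpa only [Equiv.Perm.mul_apply, sTrans_apply_left, sTrans_apply_right] using h)
  rwa [mul_sTrans_mul_sTrans] at this

/-- `w` is a reduced word (of the permutation `wordProd w`): appending each letter `a` in turn
creates a new inversion, i.e. the wires in columns `a < a + 1` have not crossed before. -/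
def IsReducedWord (w : List ℕ) : Prop :=
  ∀ u a v, w = u ++ a :: v → wordProd u a < wordProd u (a + 1)

lemma isReducedWord_nil : IsReducedWord [] := fun _ _ _ h =>
  absurd h.symm (List.append_ne_nil_of_right_ne_nil _ (List.cons_ne_nil _ _))

lemma IsReducedWord.of_append {u v : List ℕ} (h : IsReducedWord (u ++ v)) : IsReducedWord u :=
  fun x a y hxy => h x a (y ++ v) (by rw [hxy, List.append_assoc, List.cons_append])

lemma isReducedWord_concat {w : List ℕ} {a : ℕ} :
    IsReducedWord (w ++ [a]) ↔ IsReducedWord w ∧ wordProd w a < wordProd w (a + 1) := by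
  refine ⟨fun h => ⟨h.of_append, h w a [] rfl⟩, fun ⟨hw, ha⟩ u b v huv => ?_⟩
  rcases List.eq_nil_or_concat v with rfl | ⟨v', c, rfl⟩
  · obtain ⟨rfl, hab⟩ := List.append_inj' huv rfl
    rwa [← List.singleton_inj.1 hab]
  · rw [List.concat_eq_append, ← List.cons_append, ← List.append_assoc] at huv
    exact hw u b v' (List.append_inj' huv rfl).1

/-- `w` is a word over the alphabet `[n] = {1, …, n}`. -/
def IsWordOver (n : ℕ) (w : List ℕ) : Prop := ∀ a ∈ w, 1 ≤ a ∧ a ≤ n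

lemma isWordOver_append {n : ℕ} {u v : List ℕ} :
    IsWordOver n (u ++ v) ↔ IsWordOver n u ∧ IsWordOver n v := List.forall_mem_append

lemma isWordOver_singleton {n a : ℕ} : IsWordOver n [a] ↔ 1 ≤ a ∧ a ≤ n :=
  List.forall_mem_singleton

lemma card_inversions_wordProd {n : ℕ} {w : List ℕ} (hw : IsWordOver n w) :
    (inversions n (wordProd w)).card ≤ w.length ∧
      ((inversions n (wordProd w)).card = w.length ↔ IsReducedWord w) := by
  induction w using List.reverseRecOn with
  | nil => simp only [wordProd_nil, inversions_one, Finset.card_empty, List.length_nil, le_refl,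
      isReducedWord_nil, and_self]
  | append_singleton w a ih =>
    obtain ⟨hw, ha⟩ := isWordOver_append.1 hw
    rw [isWordOver_singleton] at ha
    obtain ⟨hle, heq⟩ := ih hw
    rw [wordProd_concat, isReducedWord_concat, List.length_append, List.length_singleton, ← heq]
    rcases lt_trichotomy (wordProd w a) (wordProd w (a + 1)) with h | h | h
    · rw [card_inversions_mul_sTrans ha h]
      omega
    · exact absurd ((wordProd w).injective h) (Nat.succ_ne_self a).symm
    · have := card_inversions_of_descent ha h
      omega

lemma IsReducedWord.card_inversions {n : ℕ} {w : List ℕ} (h : IsReducedWord w)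
    (hw : IsWordOver n w) : (inversions n (wordProd w)).card = w.length :=
  (card_inversions_wordProd hw).2.2 h

/-- `σ` fixes everything outside `{1, …, n+1}`, i.e. `σ` is an element of `S_{n+1}`. -/
def FixesOutside (n : ℕ) (σ : Equiv.Perm ℕ) : Prop := ∀ x, ¬(1 ≤ x ∧ x ≤ n + 1) → σ x = x

lemma FixesOutside.mul_sTrans {n a : ℕ} {σ : Equiv.Perm ℕ} (hσ : FixesOutside n σ)
    (ha : 1 ≤ a ∧ a ≤ n) : FixesOutside n (σ * sTrans a) := by
  intro x hx
  rw [Equiv.Perm.mul_apply, sTrans_apply_of_ne (by omega) (by omega), hσ x hx]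

lemma IsWordOver.fixesOutside {n : ℕ} {w : List ℕ} (hw : IsWordOver n w) :
    FixesOutside n (wordProd w) := by
  induction w using List.reverseRecOn with
  | nil => exact fun _ _ => rfl
  | append_singleton w a ih =>
    obtain ⟨hw, ha⟩ := isWordOver_append.1 hw
    rw [wordProd_concat]
    exact (ih hw).mul_sTrans (isWordOver_singleton.1 ha)

lemma FixesOutside.apply_mem {n x : ℕ} {σ : Equiv.Perm ℕ} (hσ : FixesOutside n σ)
    (hx : 1 ≤ x ∧ x ≤ n + 1) : 1 ≤ σ x ∧ σ x ≤ n + 1 := by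
  by_contra h
  have := σ.injective (hσ _ h)
  omega

lemma FixesOutside.eq_one_of_no_descent {n : ℕ} {σ : Equiv.Perm ℕ} (hσ : FixesOutside n σ)
    (h : ∀ a, 1 ≤ a → a ≤ n → σ a < σ (a + 1)) : σ = 1 := by
  have hmono : StrictMono σ := strictMono_nat_of_lt_succ fun a => by
    rcases Nat.eq_zero_or_pos a with rfl | ha
    · have := hσ 0 (by omega)
      have := hσ.apply_mem (x := 1) (by omega)
      simp only [zero_add]
      omega
    rcases lt_trichotomy a (n + 1) with han | rfl | han
    · exact h a ha (by omega)
    · have := hσ (n + 1 + 1) (by omega)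
      have := hσ.apply_mem (x := n + 1) (by omega)
      omega
    · have := hσ a (by omega)
      have := hσ (a + 1) (by omega)
      omega
  let e : ℕ ≃o ℕ := hmono.orderIsoOfSurjective _ σ.surjective
  have he : e = OrderIso.refl ℕ := Subsingleton.elim _ _
  ext x
  exact congrArg (fun f : ℕ ≃o ℕ => f x) he

/-- `w` is a reduced expression over `[n]` of the permutation `σ`. -/
structure IsReducedExpr (n : ℕ) (w : List ℕ) (σ : Equiv.Perm ℕ) : Prop where
  reduced : IsReducedWord w
  letters : IsWordOver n w
  prod : wordProd w = σ

namespace IsReducedExpr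

variable {n a : ℕ} {u v w w' : List ℕ} {σ : Equiv.Perm ℕ}

lemma fixesOutside (h : IsReducedExpr n w σ) : FixesOutside n σ := h.prod ▸ h.letters.fixesOutside

lemma length_eq (h : IsReducedExpr n w σ) : w.length = (inversions n σ).card := by
  rw [← h.reduced.card_inversions h.letters, h.prod]

lemma concat (h : IsReducedExpr n v (σ * sTrans a)) (ha : 1 ≤ a ∧ a ≤ n)
    (hd : σ (a + 1) < σ a) : IsReducedExpr n (v ++ [a]) σ where
  reduced := isReducedWord_concat.2 ⟨h.reduced, by
    rwa [h.prod, Equiv.Perm.mul_apply, Equiv.Perm.mul_apply, sTrans_apply_left,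
      sTrans_apply_right]⟩
  letters := isWordOver_append.2 ⟨h.letters, isWordOver_singleton.2 ha⟩
  prod := by rw [wordProd_concat, h.prod, mul_sTrans_mul_sTrans]

lemma of_concat (h : IsReducedExpr n (u ++ [a]) σ) :
    IsReducedExpr n u (σ * sTrans a) ∧ (1 ≤ a ∧ a ≤ n) ∧ σ (a + 1) < σ a := by
  obtain ⟨hred, hasc⟩ := isReducedWord_concat.1 h.reduced
  obtain ⟨hletters, ha⟩ := isWordOver_append.1 h.letters
  refine ⟨⟨hred, hletters, ?_⟩, isWordOver_singleton.1 ha, ?_⟩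
  · rw [← h.prod, wordProd_concat, mul_sTrans_mul_sTrans]
  · rwa [← h.prod, wordProd_concat, Equiv.Perm.mul_apply, Equiv.Perm.mul_apply,
      sTrans_apply_left, sTrans_apply_right]

end IsReducedExpr

lemma FixesOutside.exists_isReducedExpr {n : ℕ} {σ : Equiv.Perm ℕ} (hσ : FixesOutside n σ) :
    ∃ w, IsReducedExpr n w σ := by
  induction hm : (inversions n σ).card using Nat.strong_induction_on generalizing σ with
  | _ m ih =>
    by_cases hdesc : ∃ a, (1 ≤ a ∧ a ≤ n) ∧ σ (a + 1) < σ a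
    · obtain ⟨a, ha, hd⟩ := hdesc
      have := card_inversions_of_descent ha hd
      obtain ⟨w, hw⟩ := ih _ (by omega) (hσ.mul_sTrans ha) rfl
      exact ⟨w ++ [a], hw.concat ha hd⟩
    · refine ⟨[], isReducedWord_nil, List.forall_mem_nil _, ?_⟩
      refine (hσ.eq_one_of_no_descent fun a ha han => ?_).symm
      push Not at hdesc
      exact lt_of_le_of_ne (hdesc a ⟨ha, han⟩) (σ.injective.ne (Nat.succ_ne_self a).symm)

/-! ### Matsumoto's theorem -/

/-- A braid move: `ab ↔ ba` for distant letters, `aba ↔ bab` for adjacent ones. -/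
def BraidMove (w w' : List ℕ) : Prop :=
  (∃ u v a b, (a + 1 < b ∨ b + 1 < a) ∧ w = u ++ [a, b] ++ v ∧ w' = u ++ [b, a] ++ v) ∨
  (∃ u v a b, (b = a + 1 ∨ a = b + 1) ∧ w = u ++ [a, b, a] ++ v ∧ w' = u ++ [b, a, b] ++ v)

/-- Two words are braid equivalent if a sequence of braid moves connects them. -/
def BraidEquiv : List ℕ → List ℕ → Prop := Relation.ReflTransGen BraidMove

lemma BraidMove.symm {w w' : List ℕ} (h : BraidMove w w') : BraidMove w' w :=
  h.imp (fun ⟨u, v, a, b, h, hw, hw'⟩ => ⟨u, v, b, a, h.symm, hw', hw⟩)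
    (fun ⟨u, v, a, b, h, hw, hw'⟩ => ⟨u, v, b, a, h.symm, hw', hw⟩)

lemma BraidEquiv.symm {w w' : List ℕ} (h : BraidEquiv w w') : BraidEquiv w' w :=
  by
  induction h with
  | refl => exact Relation.ReflTransGen.refl
  | tail _ hs ih => exact ih.head hs.symm

lemma BraidEquiv.append_right {w w' : List ℕ} (h : BraidEquiv w w') (c : List ℕ) :
    BraidEquiv (w ++ c) (w' ++ c) := by
  refine Relation.ReflTransGen.lift (p := BraidMove) (· ++ c) ?_ _ _ h
  rintro _ _ (⟨u, v, a, b, h, rfl, rfl⟩ | ⟨u, v, a, b, h, rfl, rfl⟩)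
  · exact Or.inl ⟨u, v ++ c, a, b, h, List.append_assoc .., List.append_assoc ..⟩
  · exact Or.inr ⟨u, v ++ c, a, b, h, List.append_assoc .., List.append_assoc ..⟩

section TwoDescents

variable {n a b : ℕ} {σ : Equiv.Perm ℕ}

lemma exists_braidMove_of_descents_of_far (hσ : FixesOutside n σ) (ha : 1 ≤ a ∧ a ≤ n)
    (hb : 1 ≤ b ∧ b ≤ n) (hab : a + 1 < b ∨ b + 1 < a) (hda : σ (a + 1) < σ a)
    (hdb : σ (b + 1) < σ b) :
    ∃ x y, IsReducedExpr n x (σ * sTrans a) ∧ IsReducedExpr n y (σ * sTrans b) ∧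
      BraidMove (x ++ [a]) (y ++ [b]) := by
  obtain ⟨v, hv⟩ := ((hσ.mul_sTrans ha).mul_sTrans hb).exists_isReducedExpr
  have hv' : IsReducedExpr n v (σ * sTrans b * sTrans a) := by
    rwa [mul_assoc, ← sTrans_comm hab, ← mul_assoc]
  refine ⟨v ++ [b], v ++ [a], hv.concat hb ?_, hv'.concat ha ?_,
    Or.inl ⟨v, [], b, a, hab.symm, by simp, by simp⟩⟩
  · simpa only [Equiv.Perm.mul_apply, sTrans_apply_of_ne (a := a) (x := b) (by omega) (by omega),
      sTrans_apply_of_ne (a := a) (x := b + 1) (by omega) (by omega)] using hdb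
  · simpa only [Equiv.Perm.mul_apply, sTrans_apply_of_ne (a := b) (x := a) (by omega) (by omega),
      sTrans_apply_of_ne (a := b) (x := a + 1) (by omega) (by omega)] using hda

lemma exists_braidMove_of_descents_of_adjacent (hσ : FixesOutside n σ) (ha : 1 ≤ a ∧ a ≤ n)
    (hb : 1 ≤ b ∧ b ≤ n) (hab : b = a + 1 ∨ a = b + 1) (hda : σ (a + 1) < σ a)
    (hdb : σ (b + 1) < σ b) :
    ∃ x y, IsReducedExpr n x (σ * sTrans a) ∧ IsReducedExpr n y (σ * sTrans b) ∧
      BraidMove (x ++ [a]) (y ++ [b]) := by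
  obtain ⟨v, hv⟩ := (((hσ.mul_sTrans ha).mul_sTrans hb).mul_sTrans ha).exists_isReducedExpr
  have hv' : IsReducedExpr n v (σ * sTrans b * sTrans a * sTrans b) := by
    rwa [mul_assoc σ, mul_assoc σ, ← sTrans_braid hab, ← mul_assoc, ← mul_assoc]
  refine ⟨v ++ [a] ++ [b], v ++ [b] ++ [a], (hv.concat ha ?_).concat hb ?_,
    (hv'.concat hb ?_).concat ha ?_, Or.inr ⟨v, [], a, b, hab, by simp, by simp⟩⟩
  all_goals
    rcases hab with rfl | rfl
  all_goals
    simp only [Equiv.Perm.mul_apply, sTrans_apply_left, sTrans_apply_right, sTrans_apply_add_two,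
      sTrans_succ_apply_self]
    first | exact hda | exact hdb | exact hda.trans hdb | exact hdb.trans hda

end TwoDescents

lemma IsReducedExpr.braidEquiv {n : ℕ} {w w' : List ℕ} {σ : Equiv.Perm ℕ}
    (h : IsReducedExpr n w σ) (h' : IsReducedExpr n w' σ) : BraidEquiv w w' := by
  induction hm : w.length generalizing w w' σ with
  | zero =>
    have hlen : w'.length = 0 := by rw [h'.length_eq, ← h.length_eq, hm]
    rw [List.length_eq_zero_iff.1 hm, List.length_eq_zero_iff.1 hlen]
    exact Relation.ReflTransGen.refl
  | succ m ih =>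
    have hlen : w'.length = m + 1 := by rw [h'.length_eq, ← h.length_eq, hm]
    obtain ⟨u, a, rfl⟩ := (List.eq_nil_or_concat' w).resolve_left (by rintro rfl; simp at hm)
    obtain ⟨u', b, rfl⟩ := (List.eq_nil_or_concat' w').resolve_left (by rintro rfl; simp at hlen)
    rw [List.length_append, List.length_singleton, Nat.add_right_cancel_iff] at hm hlen
    obtain ⟨hu, ha, hda⟩ := h.of_concat
    obtain ⟨hu', hb, hdb⟩ := h'.of_concat
    by_cases hab : a = b
    · subst hab
      exact (ih hu hu' hm).append_right [a]
    obtain ⟨x, y, hx, hy, hxy⟩ : ∃ x y, IsReducedExpr n x (σ * sTrans a) ∧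
        IsReducedExpr n y (σ * sTrans b) ∧ BraidMove (x ++ [a]) (y ++ [b]) := by
      by_cases hfar : a + 1 < b ∨ b + 1 < a
      · exact exists_braidMove_of_descents_of_far h.fixesOutside ha hb hfar hda hdb
      · exact exists_braidMove_of_descents_of_adjacent h.fixesOutside ha hb (by omega) hda hdb
    exact (((ih hu hx hm).append_right [a]).tail hxy).trans
      (((ih hu' hy hlen).append_right [b]).symm)

/-! ### The base word -/

lemma Dim_succ (n : ℕ) : Dim (n + 1) = Dim n + (n + 1) := by
  have h : (n + 1) * (n + 1 + 1) = n * (n + 1) + (n + 1) * 2 := by ring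
  rw [Dim, h, Nat.add_mul_div_right _ _ (by norm_num)]

lemma Dim_mono {m n : ℕ} (h : m ≤ n) : Dim m ≤ Dim n :=
  Nat.div_le_div_right (Nat.mul_le_mul h (Nat.add_le_add_right h 1))

lemma Dim_add_lt_Dim {m n i : ℕ} (hm : m < n) (hi : i ≤ m) : Dim m + i < Dim n := by
  have h := Dim_mono (show m + 1 ≤ n from hm)
  rw [Dim_succ] at h
  omega

lemma exists_eq_Dim_add {n j : ℕ} (h : j < Dim n) : ∃ m i, m < n ∧ i ≤ m ∧ j = Dim m + i := by
  induction n with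
  | zero => simp [Dim] at h
  | succ n ih =>
    by_cases hj : j < Dim n
    · obtain ⟨m, i, hm, hi, rfl⟩ := ih hj
      exact ⟨m, i, by omega, hi, rfl⟩
    · rw [Dim_succ] at h
      exact ⟨n, j - Dim n, by omega, by omega, by omega⟩

lemma Dim_add_inj {m i m' i' : ℕ} (hi : i ≤ m) (hi' : i' ≤ m')
    (h : Dim m + i = Dim m' + i') : m = m' ∧ i = i' := by
  rcases lt_trichotomy m m' with hlt | rfl | hlt
  · have := Dim_add_lt_Dim hlt hi
    omega
  · exact ⟨rfl, by omega⟩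
  · have := Dim_add_lt_Dim hlt hi'
    omega

/-- The first `i` letters of the word `(n + 1, n, …, 1)`. -/
def descPrefix (n i : ℕ) : List ℕ := (List.range i).map (fun j => n + 1 - j)

/-- The reduced word `1, 21, 321, …` of the longest element, whose string polytope is
unimodularly equivalent to the Gelfand–Cetlin polytope. -/
def baseWord : ℕ → List ℕ
  | 0 => []
  | n + 1 => baseWord n ++ descPrefix n (n + 1)

lemma length_baseWord (n : ℕ) : (baseWord n).length = Dim n := by
  induction n with
  | zero => rfl
  | succ n ih => simp [Dim_succ, ← ih, baseWord, descPrefix]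

lemma isWordOver_baseWord (n : ℕ) : IsWordOver n (baseWord n) := by
  induction n with
  | zero => simp [IsWordOver, baseWord]
  | succ n ih =>
    refine isWordOver_append.2 ⟨fun a ha => ⟨(ih a ha).1, (ih a ha).2.trans n.le_succ⟩, ?_⟩
    simp only [IsWordOver, descPrefix, List.mem_map, List.mem_range]
    rintro a ⟨j, hj, rfl⟩
    omega

lemma wordProd_descPrefix_apply {n i : ℕ} (hi : i ≤ n + 1) (x : ℕ) :
    wordProd (descPrefix n i) x =
      if x = n + 2 - i then n + 2 else if n + 2 - i < x ∧ x ≤ n + 2 then x - 1 else x := by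
  induction i generalizing x with
  | zero =>
    simp only [descPrefix, List.range_zero, List.map_nil, wordProd_nil, Equiv.Perm.one_apply]
    split_ifs <;> omega
  | succ i ih =>
    have hconcat : descPrefix n (i + 1) = descPrefix n i ++ [n + 1 - i] := by
      simp [descPrefix, List.range_succ]
    rw [hconcat, wordProd_concat, Equiv.Perm.mul_apply, ih (by omega), sTrans_apply]
    split_ifs <;> omega

lemma longestPerm_apply (n k : ℕ) :
    longestPerm n k = if 1 ≤ k ∧ k ≤ n + 1 then n + 2 - k else k := rfl

lemma wordProd_baseWord (n : ℕ) : wordProd (baseWord n) = longestPerm n := by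
  induction n with
  | zero =>
    ext x
    rw [longestPerm_apply, baseWord, wordProd_nil, Equiv.Perm.one_apply]
    split_ifs <;> omega
  | succ n ih =>
    ext x
    rw [baseWord, wordProd_append, ih, Equiv.Perm.mul_apply, wordProd_descPrefix_apply le_rfl,
      longestPerm_apply, longestPerm_apply]
    split_ifs <;> omega

lemma isReduced_baseWord (n : ℕ) : IsReduced n (baseWord n) :=
  ⟨length_baseWord n, isWordOver_baseWord n, wordProd_baseWord n⟩

lemma letterAt_succ (w : List ℕ) (j : ℕ) : letterAt w (j + 1) = w.getD j 0 := rfl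

lemma wireX_succ (w : List ℕ) (j : ℕ) :
    wireX w (j + 1) = wordProd (w.take j) (w.getD j 0) := rfl

lemma wireY_succ (w : List ℕ) (j : ℕ) :
    wireY w (j + 1) = wordProd (w.take j) (w.getD j 0 + 1) := rfl

section Append

variable {u v : List ℕ} {j : ℕ}

lemma letterAt_append_left (h : j < u.length) :
    letterAt (u ++ v) (j + 1) = letterAt u (j + 1) := by
  rw [letterAt_succ, letterAt_succ, List.getD_append _ _ _ _ h]

lemma letterAt_append_right (u v : List ℕ) (i : ℕ) :
    letterAt (u ++ v) (u.length + i + 1) = letterAt v (i + 1) := by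
  rw [letterAt_succ, letterAt_succ, List.getD_append_right _ _ _ _ (by omega),
    Nat.add_sub_cancel_left]

lemma wireX_append_left (h : j < u.length) : wireX (u ++ v) (j + 1) = wireX u (j + 1) := by
  rw [wireX_succ, wireX_succ, List.getD_append _ _ _ _ h, List.take_append_of_le_length h.le]

lemma wireY_append_left (h : j < u.length) : wireY (u ++ v) (j + 1) = wireY u (j + 1) := by
  rw [wireY_succ, wireY_succ, List.getD_append _ _ _ _ h, List.take_append_of_le_length h.le]

lemma wireX_append_right (u v : List ℕ) (i : ℕ) :
    wireX (u ++ v) (u.length + i + 1) = wordProd u (wireX v (i + 1)) := by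
  rw [wireX_succ, wireX_succ, List.getD_append_right _ _ _ _ (by omega),
    List.take_length_add_append, wordProd_append, Equiv.Perm.mul_apply, Nat.add_sub_cancel_left]

lemma wireY_append_right (u v : List ℕ) (i : ℕ) :
    wireY (u ++ v) (u.length + i + 1) = wordProd u (wireY v (i + 1)) := by
  rw [wireY_succ, wireY_succ, List.getD_append_right _ _ _ _ (by omega),
    List.take_length_add_append, wordProd_append, Equiv.Perm.mul_apply, Nat.add_sub_cancel_left]

end Append

lemma take_descPrefix {n i m : ℕ} (h : i ≤ m) : (descPrefix n m).take i = descPrefix n i := by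
  simp [descPrefix, ← List.map_take, List.take_range, h]

lemma getD_descPrefix {n i m : ℕ} (h : i < m) : (descPrefix n m).getD i 0 = n + 1 - i := by
  simp [descPrefix, h]

lemma baseWord_prefix {m n : ℕ} (h : m ≤ n) : baseWord m <+: baseWord n := by
  induction h with
  | refl => exact List.prefix_rfl
  | step _ ih => exact ih.trans (List.prefix_append _ _)

section Row

variable {n m i : ℕ}

lemma exists_baseWord_eq_append (hm : m < n) :
    ∃ v, baseWord n = baseWord m ++ (descPrefix m (m + 1) ++ v) := by
  obtain ⟨v, hv⟩ := baseWord_prefix (show m + 1 ≤ n from hm)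
  exact ⟨v, by rw [← hv, baseWord, List.append_assoc]⟩

lemma letterAt_baseWord (hm : m < n) (hi : i ≤ m) :
    letterAt (baseWord n) (Dim m + i + 1) = m + 1 - i := by
  obtain ⟨v, hv⟩ := exists_baseWord_eq_append hm
  rw [hv, ← length_baseWord m, letterAt_append_right,
    letterAt_append_left (by simp [descPrefix]; omega), letterAt_succ, getD_descPrefix (by omega)]

lemma wireX_baseWord (hm : m < n) (hi : i ≤ m) :
    wireX (baseWord n) (Dim m + i + 1) = i + 1 := by
  obtain ⟨v, hv⟩ := exists_baseWord_eq_append hm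
  rw [hv, ← length_baseWord m, wireX_append_right,
    wireX_append_left (by simp [descPrefix]; omega), wordProd_baseWord, wireX_succ,
    take_descPrefix (by omega), getD_descPrefix (by omega), wordProd_descPrefix_apply (by omega),
    longestPerm_apply]
  split_ifs <;> omega

lemma wireY_baseWord (hm : m < n) (hi : i ≤ m) :
    wireY (baseWord n) (Dim m + i + 1) = m + 2 := by
  obtain ⟨v, hv⟩ := exists_baseWord_eq_append hm
  rw [hv, ← length_baseWord m, wireY_append_right,
    wireY_append_left (by simp [descPrefix]; omega), wordProd_baseWord, wireY_succ,
    take_descPrefix (by omega), getD_descPrefix (by omega), wordProd_descPrefix_apply (by omega),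
    longestPerm_apply]
  split_ifs <;> omega

end Row

lemma isReducedWord_iff {w : List ℕ} :
    IsReducedWord w ↔ ∀ j < w.length, wireX w (j + 1) < wireY w (j + 1) := by
  constructor
  · intro h j hj
    rw [wireX_succ, wireY_succ]
    refine h (w.take j) (w.getD j 0) (w.drop (j + 1)) ?_
    rw [List.getD_eq_getElem _ _ hj, List.cons_getElem_drop_succ, List.take_append_drop]
  · rintro h u a v rfl
    simpa [wireX_succ, wireY_succ] using h u.length (by simp)

lemma isReducedWord_baseWord (n : ℕ) : IsReducedWord (baseWord n) := by
  refine isReducedWord_iff.2 fun j hj => ?_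
  rw [length_baseWord] at hj
  obtain ⟨m, i, hm, hi, rfl⟩ := exists_eq_Dim_add hj
  rw [wireX_baseWord hm hi, wireY_baseWord hm hi]
  omega

lemma card_inversions_longestPerm (n : ℕ) : (inversions n (longestPerm n)).card = Dim n := by
  rw [← wordProd_baseWord, (isReducedWord_baseWord n).card_inversions (isWordOver_baseWord n),
    length_baseWord]

lemma IsReduced.isReducedExpr {n : ℕ} {w : List ℕ} (h : IsReduced n w) :
    IsReducedExpr n w (longestPerm n) where
  reduced := by
    rw [← (card_inversions_wordProd h.2.1).2, h.2.2, card_inversions_longestPerm, h.1]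
  letters := h.2.1
  prod := h.2.2

lemma wordProd_pair_comm {a b : ℕ} (h : a + 1 < b ∨ b + 1 < a) :
    wordProd [b, a] = wordProd [a, b] := by
  simp only [wordProd_cons, wordProd_nil, mul_one, sTrans_comm h]

lemma wordProd_triple_braid {a b : ℕ} (h : b = a + 1 ∨ a = b + 1) :
    wordProd [b, a, b] = wordProd [a, b, a] := by
  simp only [wordProd_cons, wordProd_nil, mul_one, ← mul_assoc, sTrans_braid h]

lemma BraidMove.isReduced {n : ℕ} {w w' : List ℕ} (h : BraidMove w w') (hw : IsReduced n w) :
    IsReduced n w' := by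
  obtain ⟨hlen, hletters, hprod⟩ := hw
  rcases h with ⟨u, v, a, b, hab, rfl, rfl⟩ | ⟨u, v, a, b, hab, rfl, rfl⟩
  · refine ⟨by simpa using hlen, fun c hc => hletters c (by simp at hc ⊢; tauto), ?_⟩
    rwa [wordProd_append, wordProd_append, wordProd_pair_comm hab, ← wordProd_append,
      ← wordProd_append]
  · refine ⟨by simpa using hlen, fun c hc => hletters c (by simp at hc ⊢; tauto), ?_⟩
    rwa [wordProd_append, wordProd_append, wordProd_triple_braid hab, ← wordProd_append,
      ← wordProd_append]

lemma IsReduced.braid_induction {n : ℕ} {Q : List ℕ → Prop} (base : Q (baseWord n))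
    (move : ∀ w w', IsReduced n w → IsReduced n w' → BraidMove w w' → Q w → Q w')
    {w : List ℕ} (hw : IsReduced n w) : Q w := by
  have hQ : ∀ {w'}, BraidEquiv (baseWord n) w' → IsReduced n w' ∧ Q w' := by
    intro w' h
    induction h with
    | refl => exact ⟨isReduced_baseWord n, base⟩
    | tail _ hs ih => exact ⟨hs.isReduced ih.1, move _ _ ih.1 (hs.isReduced ih.1) hs ih.2⟩
  exact (hQ ((isReduced_baseWord n).isReducedExpr.braidEquiv hw.isReducedExpr)).2

/-! ### Potentials and time functions at a crossing -/

/-- The inequalities imposed on a potential of `G(i, k)` by a crossing of the wires `p < q` with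
string parameter `t`: every passage through the crossing that is not forbidden raises the potential
by at most its contribution (`0` or `±t`) to the string inequality. The values just above the
crossing are `fp` and `fq`, those just below it `gp` and `gq`. -/
def PotentialStep (k : ℕ) (t : ℝ) (p q : ℕ) (fp fq gp gq : ℝ) : Prop :=
  if q ≤ k then fq ≤ gq ∧ fq ≤ gp + t ∧ fp ≤ gq - t
  else if k < p then gp ≤ fp ∧ gq ≤ fp + t ∧ gp ≤ fq - t
  else fp ≤ gp ∧ gq ≤ fq ∧ gq ≤ gp + t ∧ fp ≤ fq - t

/-- The inequalities imposed by a crossing of the wires `p < q` on a time function of `G(i, k)`: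
time increases by at least `e` from each incoming to each outgoing edge. -/
def TimeStep (k : ℕ) (e : ℝ) (p q : ℕ) (fp fq gp gq : ℝ) : Prop :=
  if q ≤ k then (gq + e ≤ fq ∧ gp + e ≤ fq) ∧ (gq + e ≤ fp ∧ gp + e ≤ fp)
  else if k < p then (fq + e ≤ gq ∧ fp + e ≤ gq) ∧ (fq + e ≤ gp ∧ fp + e ≤ gp)
  else (gp + e ≤ fp ∧ fq + e ≤ fp) ∧ (gp + e ≤ gq ∧ fq + e ≤ gq)

section Crossing

variable {k p q : ℕ} {t e fp fq gp gq : ℝ}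

lemma potentialStep_up (hq : q ≤ k) :
    PotentialStep k t p q fp fq gp gq ↔ fq ≤ gq ∧ fq ≤ gp + t ∧ fp ≤ gq - t := by
  rw [PotentialStep, if_pos hq]

lemma potentialStep_down (hpq : p < q) (hp : k < p) :
    PotentialStep k t p q fp fq gp gq ↔ gp ≤ fp ∧ gq ≤ fp + t ∧ gp ≤ fq - t := by
  rw [PotentialStep, if_neg (by omega), if_pos hp]

lemma potentialStep_mixed (hp : p ≤ k) (hq : k < q) :
    PotentialStep k t p q fp fq gp gq ↔ fp ≤ gp ∧ gq ≤ fq ∧ gq ≤ gp + t ∧ fp ≤ fq - t := by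
  rw [PotentialStep, if_neg (by omega), if_neg (by omega)]

lemma potentialStep_neg :
    PotentialStep k (-t) p q (-gp) (-gq) (-fp) (-fq) ↔ PotentialStep k t p q fp fq gp gq := by
  simp only [PotentialStep]
  split_ifs <;> grind

lemma timeStep_up (hq : q ≤ k) : TimeStep k e p q fp fq gp gq ↔
    (gq + e ≤ fq ∧ gp + e ≤ fq) ∧ (gq + e ≤ fp ∧ gp + e ≤ fp) := by
  rw [TimeStep, if_pos hq]

lemma timeStep_down (hpq : p < q) (hp : k < p) : TimeStep k e p q fp fq gp gq ↔
    (fq + e ≤ gq ∧ fp + e ≤ gq) ∧ (fq + e ≤ gp ∧ fp + e ≤ gp) := by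
  rw [TimeStep, if_neg (by omega), if_pos hp]

lemma timeStep_mixed (hp : p ≤ k) (hq : k < q) : TimeStep k e p q fp fq gp gq ↔
    (gp + e ≤ fp ∧ fq + e ≤ fp) ∧ (gp + e ≤ gq ∧ fq + e ≤ gq) := by
  rw [TimeStep, if_neg (by omega), if_neg (by omega)]

lemma timeStep_neg :
    TimeStep k e p q (-gp) (-gq) (-fp) (-fq) ↔ TimeStep k e p q fp fq gp gq := by
  simp only [TimeStep]
  split_ifs <;> grind

lemma TimeStep.mono {e' : ℝ} (h : TimeStep k e p q fp fq gp gq) (he : e' ≤ e) :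
    TimeStep k e' p q fp fq gp gq := by
  simp only [TimeStep] at h ⊢
  split_ifs at h ⊢ <;> grind

lemma TimeStep.smul {c : ℝ} (h : TimeStep k 1 p q fp fq gp gq) (hc : 0 ≤ c) :
    TimeStep k c p q (c * fp) (c * fq) (c * gp) (c * gq) := by
  have hmul : ∀ {x y : ℝ}, x + 1 ≤ y → c * x + c ≤ c * y := fun hxy => by nlinarith
  simp only [TimeStep] at h ⊢
  split_ifs at h ⊢ <;>
    exact ⟨⟨hmul h.1.1, hmul h.1.2⟩, hmul h.2.1, hmul h.2.2⟩

end Crossing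

/-- The piecewise linear map by which a braid move changes the string parameters `(x, y, z)` of
the three crossings, with values `(x', y', z')`. -/
structure IsTropicalMove (x y z x' y' z' : ℝ) : Prop where
  fst : x' = max z (y - x)
  snd : y' = x + z
  trd : z' = min x (y - z)

namespace IsTropicalMove

variable {x y z x' y' z' : ℝ}

lemma cases (h : IsTropicalMove x y z x' y' z') :
    (x + z ≤ y ∧ x' = y - x ∧ y' = x + z ∧ z' = x) ∨
      (y ≤ x + z ∧ x' = z ∧ y' = x + z ∧ z' = y - z) := by
  obtain ⟨rfl, rfl, rfl⟩ := h
  rcases le_total (x + z) y with hxz | hxz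
  · exact Or.inl ⟨hxz, max_eq_right (by linarith), rfl, min_eq_left (by linarith)⟩
  · exact Or.inr ⟨hxz, max_eq_left (by linarith), rfl, min_eq_right (by linarith)⟩

lemma inverse (h : IsTropicalMove x y z x' y' z') :
    IsTropicalMove (-z') (-y') (-x') (-z) (-y) (-x) := by
  obtain ⟨rfl, rfl, rfl⟩ := h
  refine ⟨?_, ?_, ?_⟩ <;> grind

end IsTropicalMove

/-! ### The braid relation for potentials and time functions -/

section Triangle

variable {k A B C : ℕ} {x y z x' y' z' fA fB fC bA bB gA cC gB gC : ℝ}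

lemma exists_potential_triangle_of_le (hBC : B < C) (hC : C ≤ k)
    (h : IsTropicalMove x y z x' y' z') (h₁ : PotentialStep k x A B fA fB bA bB)
    (h₂ : PotentialStep k y A C bA fC gA cC) (h₃ : PotentialStep k z B C bB cC gB gC) :
    ∃ a b c, PotentialStep k x' B C fB fC b c ∧ PotentialStep k y' A C fA c a gC ∧
      PotentialStep k z' A B a b gA gB := by
  rw [potentialStep_up (by omega)] at h₁ h₂ h₃
  refine ⟨gB - z', min gB (gA + z'), min gC (gB - z' + y'), ?_⟩
  rw [potentialStep_up (by omega), potentialStep_up (by omega), potentialStep_up (by omega)]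
  rcases h.cases with ⟨h, rfl, rfl, rfl⟩ | ⟨h, rfl, rfl, rfl⟩ <;>
    simp only [min_def] <;> split_ifs <;> grind

lemma exists_potential_triangle_of_le_of_lt (hAB : A < B) (hB : B ≤ k) (hC : k < C)
    (h : IsTropicalMove x y z x' y' z') (h₁ : PotentialStep k x A B fA fB bA bB)
    (h₂ : PotentialStep k y A C bA fC gA cC) (h₃ : PotentialStep k z B C bB cC gB gC) :
    ∃ a b c, PotentialStep k x' B C fB fC b c ∧ PotentialStep k y' A C fA c a gC ∧
      PotentialStep k z' A B a b gA gB := by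
  rw [potentialStep_up (by omega)] at h₁
  rw [potentialStep_mixed (by omega) (by omega)] at h₂ h₃
  refine ⟨gB - z', min gB (gA + z'), min fC (min gB (gA + z') + x'), ?_⟩
  rw [potentialStep_mixed (by omega) (by omega), potentialStep_mixed (by omega) (by omega),
    potentialStep_up (by omega)]
  rcases h.cases with ⟨h, rfl, rfl, rfl⟩ | ⟨h, rfl, rfl, rfl⟩ <;>
    simp only [min_def] <;> split_ifs <;> grind

lemma exists_potential_triangle_of_lt_of_le (hBC : B < C) (hA : A ≤ k) (hB : k < B)
    (h : IsTropicalMove x y z x' y' z') (h₁ : PotentialStep k x A B fA fB bA bB)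
    (h₂ : PotentialStep k y A C bA fC gA cC) (h₃ : PotentialStep k z B C bB cC gB gC) :
    ∃ a b c, PotentialStep k x' B C fB fC b c ∧ PotentialStep k y' A C fA c a gC ∧
      PotentialStep k z' A B a b gA gB := by
  rw [potentialStep_down (by omega) (by omega)] at h₃
  rw [potentialStep_mixed (by omega) (by omega)] at h₁ h₂
  refine ⟨min gA (min fB (fC - x') - z'), min fB (fC - x'), fB + x', ?_⟩
  rw [potentialStep_down (by omega) (by omega), potentialStep_mixed (by omega) (by omega),
    potentialStep_mixed (by omega) (by omega)]
  rcases h.cases with ⟨h, rfl, rfl, rfl⟩ | ⟨h, rfl, rfl, rfl⟩ <;>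
    simp only [min_def] <;> split_ifs <;> grind

lemma exists_potential_triangle_of_lt (hAB : A < B) (hBC : B < C) (hA : k < A)
    (h : IsTropicalMove x y z x' y' z') (h₁ : PotentialStep k x A B fA fB bA bB)
    (h₂ : PotentialStep k y A C bA fC gA cC) (h₃ : PotentialStep k z B C bB cC gB gC) :
    ∃ a b c, PotentialStep k x' B C fB fC b c ∧ PotentialStep k y' A C fA c a gC ∧
      PotentialStep k z' A B a b gA gB := by
  rw [potentialStep_down (by omega) (by omega)] at h₁ h₂ h₃
  refine ⟨min fA (fB + x' - y'), min fB (fC - x'), fB + x', ?_⟩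
  rw [potentialStep_down (by omega) (by omega), potentialStep_down (by omega) (by omega),
    potentialStep_down (by omega) (by omega)]
  rcases h.cases with ⟨h, rfl, rfl, rfl⟩ | ⟨h, rfl, rfl, rfl⟩ <;>
    simp only [min_def] <;> split_ifs <;> grind

lemma exists_potential_triangle (hAB : A < B) (hBC : B < C) (h : IsTropicalMove x y z x' y' z')
    (h₁ : PotentialStep k x A B fA fB bA bB) (h₂ : PotentialStep k y A C bA fC gA cC)
    (h₃ : PotentialStep k z B C bB cC gB gC) :
    ∃ a b c, PotentialStep k x' B C fB fC b c ∧ PotentialStep k y' A C fA c a gC ∧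
      PotentialStep k z' A B a b gA gB := by
  rcases le_or_gt C k with hC | hC
  · exact exists_potential_triangle_of_le hBC hC h h₁ h₂ h₃
  rcases le_or_gt B k with hB | hB
  · exact exists_potential_triangle_of_le_of_lt hAB hB hC h h₁ h₂ h₃
  rcases le_or_gt A k with hA | hA
  · exact exists_potential_triangle_of_lt_of_le hBC hA hB h h₁ h₂ h₃
  · exact exists_potential_triangle_of_lt hAB hBC hA h h₁ h₂ h₃

lemma exists_potential_triangle_symm {a b c : ℝ} (hAB : A < B) (hBC : B < C)
    (h : IsTropicalMove x y z x' y' z') (h₁ : PotentialStep k x' B C fB fC b c)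
    (h₂ : PotentialStep k y' A C fA c a gC) (h₃ : PotentialStep k z' A B a b gA gB) :
    ∃ bA bB cC, PotentialStep k x A B fA fB bA bB ∧ PotentialStep k y A C bA fC gA cC ∧
      PotentialStep k z B C bB cC gB gC := by
  obtain ⟨bA, bB, cC, h₁', h₂', h₃'⟩ := exists_potential_triangle hAB hBC h.inverse
    (potentialStep_neg.2 h₃) (potentialStep_neg.2 h₂) (potentialStep_neg.2 h₁)
  refine ⟨-bA, -bB, -cC, ?_, ?_, ?_⟩
  · simpa only [neg_neg] using potentialStep_neg.2 h₃'
  · simpa only [neg_neg] using potentialStep_neg.2 h₂'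
  · simpa only [neg_neg] using potentialStep_neg.2 h₁'

lemma exists_timeStep_triangle (hAB : A < B) (hBC : B < C) (h₁ : TimeStep k 3 A B fA fB bA bB)
    (h₂ : TimeStep k 3 A C bA fC gA cC) (h₃ : TimeStep k 3 B C bB cC gB gC) :
    ∃ a b c, TimeStep k 1 B C fB fC b c ∧ TimeStep k 1 A C fA c a gC ∧
      TimeStep k 1 A B a b gA gB := by
  rcases le_or_gt C k with hC | hC
  · rw [timeStep_up (by omega)] at h₁ h₂ h₃
    refine ⟨max gA (max gB gC) + 1, max gA (max gB gC) + 1, max gA (max gB gC) + 2, ?_⟩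
    rw [timeStep_up (by omega), timeStep_up (by omega), timeStep_up (by omega)]
    simp only [max_def]
    split_ifs <;> grind
  rcases le_or_gt B k with hB | hB
  · rw [timeStep_up (by omega)] at h₁
    rw [timeStep_mixed (by omega) (by omega)] at h₂ h₃
    refine ⟨max gA (max gB fC) + 1, max gA (max gB fC) + 1, max gA (max gB fC) + 2, ?_⟩
    rw [timeStep_mixed (by omega) (by omega), timeStep_mixed (by omega) (by omega),
      timeStep_up (by omega)]
    simp only [max_def]
    split_ifs <;> grind
  rcases le_or_gt A k with hA | hA
  · rw [timeStep_down (by omega) (by omega)] at h₃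
    rw [timeStep_mixed (by omega) (by omega)] at h₁ h₂
    refine ⟨max gA (max fB fC) + 2, max gA (max fB fC) + 1, max gA (max fB fC) + 1, ?_⟩
    rw [timeStep_down (by omega) (by omega), timeStep_mixed (by omega) (by omega),
      timeStep_mixed (by omega) (by omega)]
    simp only [max_def]
    split_ifs <;> grind
  · rw [timeStep_down (by omega) (by omega)] at h₁ h₂ h₃
    refine ⟨max fA (max fB fC) + 2, max fA (max fB fC) + 1, max fA (max fB fC) + 1, ?_⟩
    rw [timeStep_down (by omega) (by omega), timeStep_down (by omega) (by omega),
      timeStep_down (by omega) (by omega)]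
    simp only [max_def]
    split_ifs <;> grind

lemma exists_timeStep_triangle_symm {a b c : ℝ} (hAB : A < B) (hBC : B < C)
    (h₁ : TimeStep k 3 B C fB fC b c) (h₂ : TimeStep k 3 A C fA c a gC)
    (h₃ : TimeStep k 3 A B a b gA gB) :
    ∃ bA bB cC, TimeStep k 1 A B fA fB bA bB ∧ TimeStep k 1 A C bA fC gA cC ∧
      TimeStep k 1 B C bB cC gB gC := by
  obtain ⟨bA, bB, cC, h₁', h₂', h₃'⟩ := exists_timeStep_triangle hAB hBC
    (timeStep_neg.2 h₃) (timeStep_neg.2 h₂) (timeStep_neg.2 h₁)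
  refine ⟨-bA, -bB, -cC, ?_, ?_, ?_⟩
  · simpa only [neg_neg] using timeStep_neg.2 h₃'
  · simpa only [neg_neg] using timeStep_neg.2 h₂'
  · simpa only [neg_neg] using timeStep_neg.2 h₁'

end Triangle

/-! ### Labellings of wiring diagrams -/

/-- A crossing of the wires `p` and `q` with labels `Φ` above and `Ψ` below it: all other wires keep
their label, and the four labels at the crossing are related by `R`. -/
def CrossingRel (R : ℝ → ℝ → ℝ → ℝ → Prop) (p q : ℕ) (Φ Ψ : ℕ → ℝ) : Prop :=
  (∀ r, r ≠ p → r ≠ q → Φ r = Ψ r) ∧ R (Φ p) (Φ q) (Ψ p) (Ψ q)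

/-- A labelling of the edges of the wiring diagram of `w` that satisfies, at each crossing, the
relation prescribed by `S`: `φ j r` is the label of the wire `r` between the `j`-th and the
`(j + 1)`-st crossing, and `S j p q` is the relation imposed by the `(j + 1)`-st crossing. -/
def IsLabelling (w : List ℕ) (S : ℕ → ℕ → ℕ → ℝ → ℝ → ℝ → ℝ → Prop) (φ : ℕ → ℕ → ℝ) : Prop :=
  ∀ j < w.length, CrossingRel (S j (wireX w (j + 1)) (wireY w (j + 1)))
    (wireX w (j + 1)) (wireY w (j + 1)) (φ j) (φ (j + 1))

namespace CrossingRel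

variable {R R' R₁ R₂ R₃ R₁' R₂' R₃' : ℝ → ℝ → ℝ → ℝ → Prop} {A B C p q r s : ℕ}
  {Φ Ψ Φ₀ Φ₁ Φ₂ Φ₃ : ℕ → ℝ}

lemma mono (h : CrossingRel R p q Φ Ψ) (hR : ∀ f f' g g', R f f' g g' → R' f f' g g') :
    CrossingRel R' p q Φ Ψ :=
  ⟨h.1, hR _ _ _ _ h.2⟩

lemma swap (h : CrossingRel R p q Φ Ψ) :
    CrossingRel (fun f' f g' g => R f f' g g') q p Φ Ψ :=
  ⟨fun r hq hp => h.1 r hp hq, h.2⟩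

lemma comm (hpr : p ≠ r) (hps : p ≠ s) (hqr : q ≠ r) (hqs : q ≠ s)
    (h₁ : CrossingRel R₁ p q Φ₀ Φ₁) (h₂ : CrossingRel R₂ r s Φ₁ Φ₂) :
    ∃ P, CrossingRel R₂ r s Φ₀ P ∧ CrossingRel R₁ p q P Φ₂ := by
  obtain ⟨e₁, n₁⟩ := h₁
  obtain ⟨e₂, n₂⟩ := h₂
  rw [← e₁ r hpr.symm hqr.symm, ← e₁ s hps.symm hqs.symm] at n₂
  rw [e₂ p hpr hps, e₂ q hqr hqs] at n₁
  refine ⟨fun i => if i = p ∨ i = q then Φ₀ i else Φ₂ i, ⟨fun i hr hs => ?_, ?_⟩,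
    ⟨fun i hp hq => ?_, ?_⟩⟩
  · grind
  · simpa [hpr.symm, hps.symm, hqr.symm, hqs.symm] using n₂
  · simp [hp, hq]
  · simpa using n₁

lemma triangle (hAB : A ≠ B) (hAC : A ≠ C) (hBC : B ≠ C)
    (hR : ∀ fA fB fC bA bB gA cC gB gC, R₁ fA fB bA bB → R₂ bA fC gA cC → R₃ bB cC gB gC →
      ∃ a b c, R₁' fB fC b c ∧ R₂' fA c a gC ∧ R₃' a b gA gB)
    (h₁ : CrossingRel R₁ A B Φ₀ Φ₁) (h₂ : CrossingRel R₂ A C Φ₁ Φ₂)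
    (h₃ : CrossingRel R₃ B C Φ₂ Φ₃) :
    ∃ P Q, CrossingRel R₁' B C Φ₀ P ∧ CrossingRel R₂' A C P Q ∧ CrossingRel R₃' A B Q Φ₃ := by
  obtain ⟨e₁, n₁⟩ := h₁
  obtain ⟨e₂, n₂⟩ := h₂
  obtain ⟨e₃, n₃⟩ := h₃
  rw [← e₁ C hAC.symm hBC.symm, e₃ A hAB hAC] at n₂
  rw [← e₂ B hAB.symm hBC] at n₃
  obtain ⟨a, b, c, m₁, m₂, m₃⟩ := hR _ _ _ _ _ _ _ _ _ n₁ n₂ n₃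
  refine ⟨Function.update (Function.update Φ₀ B b) C c,
    Function.update (Function.update Φ₃ B b) A a, ⟨fun r hB hC => ?_, ?_⟩,
    ⟨fun r hA hC => ?_, ?_⟩, ⟨fun r hA hB => ?_, ?_⟩⟩
  · simp [hB, hC]
  · simpa [Function.update_apply, hBC] using m₁
  · by_cases hB : r = B
    · simp [hB, hAB.symm, hBC]
    · simp only [Function.update_apply, hA, hC, hB, if_false]
      rw [e₁ r hA hB, e₂ r hA hC, e₃ r hB hC]
  · simpa [Function.update_apply, hAB, hAC, hAC.symm, hBC.symm] using m₂
  · simp [hA, hB]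
  · simpa [Function.update_apply, hAB.symm] using m₃

lemma triangle_symm (hAB : A ≠ B) (hAC : A ≠ C) (hBC : B ≠ C)
    (hR : ∀ fA fB fC a b c gA gB gC, R₁' fB fC b c → R₂' fA c a gC → R₃' a b gA gB →
      ∃ bA bB cC, R₁ fA fB bA bB ∧ R₂ bA fC gA cC ∧ R₃ bB cC gB gC)
    (h₁ : CrossingRel R₁' B C Φ₀ Φ₁) (h₂ : CrossingRel R₂' A C Φ₁ Φ₂)
    (h₃ : CrossingRel R₃' A B Φ₂ Φ₃) :
    ∃ P Q, CrossingRel R₁ A B Φ₀ P ∧ CrossingRel R₂ A C P Q ∧ CrossingRel R₃ B C Q Φ₃ := by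
  obtain ⟨P, Q, m₁, m₂, m₃⟩ := triangle
    (R₁' := fun fB fA bB bA => R₁ fA fB bA bB) (R₂' := fun fC bA cC gA => R₂ bA fC gA cC)
    (R₃' := fun cC bB gC gB => R₃ bB cC gB gC) hBC.symm hAC.symm hAB.symm
    (fun fC fB fA c b gC a gB gA n₁ n₂ n₃ => by
      obtain ⟨bA, bB, cC, m⟩ := hR fA fB fC a b c gA gB gC n₁ n₂ n₃
      exact ⟨cC, bB, bA, m⟩)
    h₁.swap h₂.swap h₃.swap
  exact ⟨P, Q, m₁.swap, m₂.swap, m₃.swap⟩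

end CrossingRel

section BlockReplacement

variable {u v mid mid' : List ℕ}

lemma wireX_block {i : ℕ} (hi : i < mid.length) :
    wireX (u ++ mid ++ v) (u.length + i + 1) = wordProd u (wireX mid (i + 1)) := by
  rw [List.append_assoc, wireX_append_right, wireX_append_left hi]

lemma wireY_block {i : ℕ} (hi : i < mid.length) :
    wireY (u ++ mid ++ v) (u.length + i + 1) = wordProd u (wireY mid (i + 1)) := by
  rw [List.append_assoc, wireY_append_right, wireY_append_left hi]

lemma letterAt_block {i : ℕ} (hi : i < mid.length) :
    letterAt (u ++ mid ++ v) (u.length + i + 1) = letterAt mid (i + 1) := by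
  rw [List.append_assoc, letterAt_append_right, letterAt_append_left hi]

lemma letterAt_congr_block (hlen : mid'.length = mid.length) {j : ℕ}
    (hj : j < u.length ∨ u.length + mid.length ≤ j) :
    letterAt (u ++ mid' ++ v) (j + 1) = letterAt (u ++ mid ++ v) (j + 1) := by
  rcases hj with hj | hj
  · rw [List.append_assoc, List.append_assoc, letterAt_append_left hj, letterAt_append_left hj]
  · obtain ⟨i, rfl⟩ := Nat.exists_eq_add_of_le hj
    rw [← List.length_append, letterAt_append_right, List.length_append, ← hlen,
      ← List.length_append, letterAt_append_right]

lemma wireX_congr_block (hlen : mid'.length = mid.length) (hprod : wordProd mid' = wordProd mid)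
    {j : ℕ} (hj : j < u.length ∨ u.length + mid.length ≤ j) :
    wireX (u ++ mid' ++ v) (j + 1) = wireX (u ++ mid ++ v) (j + 1) := by
  rcases hj with hj | hj
  · rw [List.append_assoc, List.append_assoc, wireX_append_left hj, wireX_append_left hj]
  · obtain ⟨i, rfl⟩ := Nat.exists_eq_add_of_le hj
    rw [← List.length_append, wireX_append_right, List.length_append, ← hlen,
      ← List.length_append, wireX_append_right, wordProd_append, wordProd_append, hprod]

lemma wireY_congr_block (hlen : mid'.length = mid.length) (hprod : wordProd mid' = wordProd mid)
    {j : ℕ} (hj : j < u.length ∨ u.length + mid.length ≤ j) :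
    wireY (u ++ mid' ++ v) (j + 1) = wireY (u ++ mid ++ v) (j + 1) := by
  rcases hj with hj | hj
  · rw [List.append_assoc, List.append_assoc, wireY_append_left hj, wireY_append_left hj]
  · obtain ⟨i, rfl⟩ := Nat.exists_eq_add_of_le hj
    rw [← List.length_append, wireY_append_right, List.length_append, ← hlen,
      ← List.length_append, wireY_append_right, wordProd_append, wordProd_append, hprod]

variable {S S' : ℕ → ℕ → ℕ → ℝ → ℝ → ℝ → ℝ → Prop} {φ ψ : ℕ → ℕ → ℝ}

lemma IsLabelling.crossingRel_block (h : IsLabelling (u ++ mid ++ v) S φ) {i : ℕ}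
    (hi : i < mid.length) : CrossingRel
      (S (u.length + i) (wordProd u (wireX mid (i + 1))) (wordProd u (wireY mid (i + 1))))
      (wordProd u (wireX mid (i + 1))) (wordProd u (wireY mid (i + 1)))
      (φ (u.length + i)) (φ (u.length + (i + 1))) := by
  have hj := h (u.length + i) (by simp only [List.length_append]; omega)
  rwa [wireX_block hi, wireY_block hi] at hj

lemma IsLabelling.replace_block (h : IsLabelling (u ++ mid ++ v) S φ)
    (hlen : mid'.length = mid.length) (hprod : wordProd mid' = wordProd mid)
    (hS : ∀ j, (j < u.length ∨ u.length + mid.length ≤ j) →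
      ∀ p q f f' g g', S j p q f f' g g' → S' j p q f f' g g')
    (hψ₀ : ψ 0 = φ u.length) (hψ₁ : ψ mid.length = φ (u.length + mid.length))
    (hψ : ∀ i < mid.length, CrossingRel
      (S' (u.length + i) (wordProd u (wireX mid' (i + 1))) (wordProd u (wireY mid' (i + 1))))
      (wordProd u (wireX mid' (i + 1))) (wordProd u (wireY mid' (i + 1))) (ψ i) (ψ (i + 1))) :
    ∃ φ', IsLabelling (u ++ mid' ++ v) S' φ' ∧
      φ' (u ++ mid' ++ v).length = φ (u ++ mid ++ v).length := by
  set φ' : ℕ → ℕ → ℝ := fun j =>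
    if u.length ≤ j ∧ j ≤ u.length + mid.length then ψ (j - u.length) else φ j with hφ'
  have hin : ∀ i ≤ mid.length, φ' (u.length + i) = ψ i := fun i hi => by
    simp only [hφ']
    rw [if_pos (by omega), Nat.add_sub_cancel_left]
  have hout : ∀ j, (j ≤ u.length ∨ u.length + mid.length ≤ j) → φ' j = φ j := fun j hj => by
    simp only [hφ']
    split_ifs with hj'
    · obtain rfl | rfl : j = u.length ∨ j = u.length + mid.length := by omega
      · rw [Nat.sub_self, hψ₀]
      · rw [Nat.add_sub_cancel_left, hψ₁]
    · rfl
  refine ⟨φ', fun j hj => ?_, ?_⟩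
  · simp only [List.length_append, hlen] at hj
    by_cases hj' : j < u.length ∨ u.length + mid.length ≤ j
    · rw [wireX_congr_block hlen hprod hj', wireY_congr_block hlen hprod hj', hout j (by omega),
        hout (j + 1) (by omega)]
      exact (h j (by simpa only [List.length_append] using hj)).mono (hS j hj' _ _)
    · obtain ⟨i, rfl⟩ := Nat.exists_eq_add_of_le (show u.length ≤ j by omega)
      rw [wireX_block (by omega), wireY_block (by omega), add_assoc, hin i (by omega),
        hin (i + 1) (by omega)]
      exact hψ i (by omega)
  · have hlen' : (u ++ mid' ++ v).length = (u ++ mid ++ v).length := by simp [hlen]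
    rw [hlen']
    exact hout _ (Or.inr (by simp))

end BlockReplacement

section BraidLabelling

variable {u v : List ℕ} {a b : ℕ} {S S' : ℕ → ℕ → ℕ → ℝ → ℝ → ℝ → ℝ → Prop} {φ : ℕ → ℕ → ℝ}

lemma wires_pair (hab : a + 1 < b ∨ b + 1 < a) :
    (wireX [a, b] 1 = a ∧ wireY [a, b] 1 = a + 1) ∧
      wireX [a, b] 2 = b ∧ wireY [a, b] 2 = b + 1 := by
  have hb : sTrans a b = b := sTrans_apply_of_ne (by omega) (by omega)
  have hb' : sTrans a (b + 1) = b + 1 := sTrans_apply_of_ne (by omega) (by omega)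
  simp [wireX, wireY, stateAbove, letterAt, wordProd, hb, hb']

lemma wires_triple (a : ℕ) :
    (wireX [a, a + 1, a] 1 = a ∧ wireY [a, a + 1, a] 1 = a + 1) ∧
      (wireX [a, a + 1, a] 2 = a ∧ wireY [a, a + 1, a] 2 = a + 2) ∧
      wireX [a, a + 1, a] 3 = a + 1 ∧ wireY [a, a + 1, a] 3 = a + 2 := by
  simp [wireX, wireY, stateAbove, letterAt, wordProd, sTrans_apply_left, sTrans_apply_right,
    sTrans_succ_apply_self, sTrans_apply_add_two]

lemma wires_triple_succ (a : ℕ) :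
    (wireX [a + 1, a, a + 1] 1 = a + 1 ∧ wireY [a + 1, a, a + 1] 1 = a + 2) ∧
      (wireX [a + 1, a, a + 1] 2 = a ∧ wireY [a + 1, a, a + 1] 2 = a + 2) ∧
      wireX [a + 1, a, a + 1] 3 = a ∧ wireY [a + 1, a, a + 1] 3 = a + 1 := by
  simp [wireX, wireY, stateAbove, letterAt, wordProd, sTrans_apply_left, sTrans_apply_right,
    sTrans_succ_apply_self, sTrans_apply_add_two]

lemma IsReducedWord.wordProd_lt_of_triple (h : IsReducedWord (u ++ [a, a + 1, a] ++ v)) :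
    wordProd u a < wordProd u (a + 1) ∧ wordProd u (a + 1) < wordProd u (a + 2) := by
  have h₁ := h u a ([a + 1, a] ++ v) (by simp)
  have h₂ := h (u ++ [a, a + 1]) a v (by simp)
  refine ⟨h₁, ?_⟩
  simpa [wordProd, sTrans_apply_left, sTrans_apply_right, sTrans_succ_apply_self,
    sTrans_apply_add_two] using h₂

lemma IsReducedWord.wordProd_lt_of_triple_succ (h : IsReducedWord (u ++ [a + 1, a, a + 1] ++ v)) :
    wordProd u a < wordProd u (a + 1) ∧ wordProd u (a + 1) < wordProd u (a + 2) := by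
  have h₁ := h u (a + 1) ([a, a + 1] ++ v) (by simp)
  have h₂ := h (u ++ [a + 1, a]) (a + 1) v (by simp)
  refine ⟨?_, h₁⟩
  simpa [wordProd, sTrans_apply_left, sTrans_apply_right, sTrans_succ_apply_self,
    sTrans_apply_add_two] using h₂

lemma IsLabelling.pair_comm (h : IsLabelling (u ++ [a, b] ++ v) S φ)
    (hab : a + 1 < b ∨ b + 1 < a)
    (hS : ∀ j, (j < u.length ∨ u.length + 2 ≤ j) →
      ∀ p q f f' g g', S j p q f f' g g' → S' j p q f f' g g')
    (hS₀ : ∀ p q f f' g g', S u.length p q f f' g g' → S' (u.length + 1) p q f f' g g')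
    (hS₁ : ∀ p q f f' g g', S (u.length + 1) p q f f' g g' → S' u.length p q f f' g g') :
    ∃ φ', IsLabelling (u ++ [b, a] ++ v) S' φ' ∧
      φ' (u ++ [b, a] ++ v).length = φ (u ++ [a, b] ++ v).length := by
  have n₁ := h.crossingRel_block (i := 0) (by simp)
  have n₂ := h.crossingRel_block (i := 1) (by simp)
  simp only [Nat.reduceAdd, wires_pair hab] at n₁ n₂
  have hne : ∀ {c d : ℕ}, c ≠ d → wordProd u c ≠ wordProd u d := (wordProd u).injective.ne
  obtain ⟨P, m₁, m₂⟩ := n₁.comm (hne (by omega)) (hne (by omega)) (hne (by omega))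
    (hne (by omega)) n₂
  refine h.replace_block (ψ := fun | 0 => φ u.length | 1 => P | _ => φ (u.length + 2)) rfl
    (wordProd_pair_comm hab) hS rfl rfl fun i (hi : i < 2) => ?_
  interval_cases i <;> simp only [Nat.reduceAdd, wires_pair hab.symm]
  · exact m₁.mono (hS₁ _ _)
  · exact m₂.mono (hS₀ _ _)

lemma IsLabelling.triple_braid (h : IsLabelling (u ++ [a, a + 1, a] ++ v) S φ)
    (hw : IsReducedWord (u ++ [a, a + 1, a] ++ v))
    (hS : ∀ j, (j < u.length ∨ u.length + 3 ≤ j) →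
      ∀ p q f f' g g', S j p q f f' g g' → S' j p q f f' g g')
    (hblock : ∀ A B C, A < B → B < C → ∀ fA fB fC bA bB gA cC gB gC,
      S u.length A B fA fB bA bB → S (u.length + 1) A C bA fC gA cC →
      S (u.length + 2) B C bB cC gB gC →
      ∃ a b c, S' u.length B C fB fC b c ∧ S' (u.length + 1) A C fA c a gC ∧
        S' (u.length + 2) A B a b gA gB) :
    ∃ φ', IsLabelling (u ++ [a + 1, a, a + 1] ++ v) S' φ' ∧
      φ' (u ++ [a + 1, a, a + 1] ++ v).length = φ (u ++ [a, a + 1, a] ++ v).length := by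
  obtain ⟨hAB, hBC⟩ := hw.wordProd_lt_of_triple
  have n₁ := h.crossingRel_block (i := 0) (by simp)
  have n₂ := h.crossingRel_block (i := 1) (by simp)
  have n₃ := h.crossingRel_block (i := 2) (by simp)
  simp only [Nat.reduceAdd, wires_triple] at n₁ n₂ n₃
  obtain ⟨P, Q, m₁, m₂, m₃⟩ := CrossingRel.triangle hAB.ne (hAB.trans hBC).ne hBC.ne
    (hblock _ _ _ hAB hBC) n₁ n₂ n₃
  refine h.replace_block (ψ := fun | 0 => φ u.length | 1 => P | 2 => Q | _ => φ (u.length + 3))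
    rfl (wordProd_triple_braid (Or.inl rfl)) hS rfl rfl fun i (hi : i < 3) => ?_
  interval_cases i <;> simp only [Nat.reduceAdd, wires_triple_succ]
  exacts [m₁, m₂, m₃]

lemma IsLabelling.triple_braid_symm (h : IsLabelling (u ++ [a + 1, a, a + 1] ++ v) S φ)
    (hw : IsReducedWord (u ++ [a + 1, a, a + 1] ++ v))
    (hS : ∀ j, (j < u.length ∨ u.length + 3 ≤ j) →
      ∀ p q f f' g g', S j p q f f' g g' → S' j p q f f' g g')
    (hblock : ∀ A B C, A < B → B < C → ∀ fA fB fC a b c gA gB gC,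
      S u.length B C fB fC b c → S (u.length + 1) A C fA c a gC → S (u.length + 2) A B a b gA gB →
      ∃ bA bB cC, S' u.length A B fA fB bA bB ∧ S' (u.length + 1) A C bA fC gA cC ∧
        S' (u.length + 2) B C bB cC gB gC) :
    ∃ φ', IsLabelling (u ++ [a, a + 1, a] ++ v) S' φ' ∧
      φ' (u ++ [a, a + 1, a] ++ v).length = φ (u ++ [a + 1, a, a + 1] ++ v).length := by
  obtain ⟨hAB, hBC⟩ := hw.wordProd_lt_of_triple_succ
  have n₁ := h.crossingRel_block (i := 0) (by simp)
  have n₂ := h.crossingRel_block (i := 1) (by simp)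
  have n₃ := h.crossingRel_block (i := 2) (by simp)
  simp only [Nat.reduceAdd, wires_triple_succ] at n₁ n₂ n₃
  obtain ⟨P, Q, m₁, m₂, m₃⟩ := CrossingRel.triangle_symm hAB.ne (hAB.trans hBC).ne hBC.ne
    (hblock _ _ _ hAB hBC) n₁ n₂ n₃
  refine h.replace_block (ψ := fun | 0 => φ u.length | 1 => P | 2 => Q | _ => φ (u.length + 3))
    rfl (wordProd_triple_braid (Or.inr rfl)) hS rfl rfl fun i (hi : i < 3) => ?_
  interval_cases i <;> simp only [Nat.reduceAdd, wires_triple]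
  exacts [m₁, m₂, m₃]

end BraidLabelling

/-! ### Potentials and time functions under braid moves -/

/-- `φ` is a potential of `G(i, k)`, where `i = w`, for the string parameters `t` (`0`-based). -/
def IsPotential (w : List ℕ) (k : ℕ) (t : ℕ → ℝ) (φ : ℕ → ℕ → ℝ) : Prop :=
  IsLabelling w (fun j p q => PotentialStep k (t j) p q) φ

/-- `τ` is a time function of `G(i, k)`, where `i = w`: it increases by at least `e` at every
crossing passed by an oriented path. -/
def IsTimeFunction (w : List ℕ) (k : ℕ) (e : ℝ) (τ : ℕ → ℕ → ℝ) : Prop :=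
  IsLabelling w (fun _ p q => TimeStep k e p q) τ

/-- The string parameters `t` (`0`-based) for which `G(i, k)`, where `i = w`, has a potential whose
value does not drop from `L_k` to `L_{k+1}`. -/
def potentialCone (w : List ℕ) (k : ℕ) : Set (ℕ → ℝ) :=
  {t | ∃ φ, IsPotential w k t φ ∧ φ w.length k ≤ φ w.length (k + 1)}

/-- `t'` arises from `t` by a tropical move of the coordinates `m, m + 1, m + 2`. -/
structure IsTropicalMoveAt (m : ℕ) (t t' : ℕ → ℝ) : Prop where
  eq_of_outside : ∀ j, (j < m ∨ m + 3 ≤ j) → t' j = t j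
  isTropicalMove : IsTropicalMove (t m) (t (m + 1)) (t (m + 2)) (t' m) (t' (m + 1)) (t' (m + 2))

lemma IsTimeFunction.smul {w : List ℕ} {k : ℕ} {τ : ℕ → ℕ → ℝ} (h : IsTimeFunction w k 1 τ)
    {c : ℝ} (hc : 0 ≤ c) : IsTimeFunction w k c (fun j r => c * τ j r) := fun j hj =>
  ⟨fun r hp hq => congrArg (c * ·) ((h j hj).1 r hp hq), (h j hj).2.smul hc⟩

lemma exists_isTimeFunction_of_braidMove {w w' : List ℕ} {k : ℕ} (hw : IsReducedWord w)
    (hww' : BraidMove w w') (h : ∃ τ, IsTimeFunction w k 1 τ) :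
    ∃ τ, IsTimeFunction w' k 1 τ := by
  obtain ⟨τ, hτ⟩ := h
  have hτ₃ := hτ.smul (c := 3) (by norm_num)
  have hmono : ∀ p q f f' g g', TimeStep k 3 p q f f' g g' → TimeStep k 1 p q f f' g g' :=
    fun p q f f' g g' h => h.mono (by norm_num)
  rcases hww' with ⟨u, v, a, b, hab, rfl, rfl⟩ | ⟨u, v, a, b, rfl | rfl, rfl, rfl⟩
  · obtain ⟨τ', hτ', -⟩ := IsLabelling.pair_comm hτ hab (fun _ _ _ _ _ _ _ _ => id)
      (fun _ _ _ _ _ _ => id) (fun _ _ _ _ _ _ => id)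
    exact ⟨τ', hτ'⟩
  · obtain ⟨τ', hτ', -⟩ := IsLabelling.triple_braid hτ₃ hw (fun _ _ => hmono)
      fun A B C hAB hBC _ _ _ _ _ _ _ _ _ => exists_timeStep_triangle hAB hBC
    exact ⟨τ', hτ'⟩
  · obtain ⟨τ', hτ', -⟩ := IsLabelling.triple_braid_symm hτ₃ hw (fun _ _ => hmono)
      fun A B C hAB hBC _ _ _ _ _ _ _ _ _ => exists_timeStep_triangle_symm hAB hBC
    exact ⟨τ', hτ'⟩

section PotentialCone

variable {u v : List ℕ} {a b k : ℕ} {t t' : ℕ → ℝ}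

lemma comp_sTrans_mem_potentialCone (hab : a + 1 < b ∨ b + 1 < a)
    (h : t ∈ potentialCone (u ++ [a, b] ++ v) k) :
    t ∘ sTrans u.length ∈ potentialCone (u ++ [b, a] ++ v) k := by
  obtain ⟨φ, hφ, hle⟩ := h
  obtain ⟨φ', hφ', heq⟩ := IsLabelling.pair_comm
    (S' := fun j p q => PotentialStep k ((t ∘ sTrans u.length) j) p q) hφ hab
    (fun j hj p q f f' g g' => by
      rw [Function.comp_apply, sTrans_apply_of_ne (by omega) (by omega)]; exact id)
    (fun p q f f' g g' => by rw [Function.comp_apply, sTrans_apply_right]; exact id)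
    (fun p q f f' g g' => by rw [Function.comp_apply, sTrans_apply_left]; exact id)
  exact ⟨φ', hφ', by rwa [heq]⟩

lemma IsTropicalMoveAt.mem_potentialCone (ht : IsTropicalMoveAt u.length t t')
    (hw : IsReducedWord (u ++ [a, a + 1, a] ++ v))
    (h : t ∈ potentialCone (u ++ [a, a + 1, a] ++ v) k) :
    t' ∈ potentialCone (u ++ [a + 1, a, a + 1] ++ v) k := by
  obtain ⟨φ, hφ, hle⟩ := h
  obtain ⟨φ', hφ', heq⟩ := IsLabelling.triple_braid
    (S' := fun j p q => PotentialStep k (t' j) p q) hφ hw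
    (fun j hj p q f f' g g' => by rw [ht.eq_of_outside j hj]; exact id)
    fun A B C hAB hBC _ _ _ _ _ _ _ _ _ => exists_potential_triangle hAB hBC ht.isTropicalMove
  exact ⟨φ', hφ', by rwa [heq]⟩

lemma IsTropicalMoveAt.mem_potentialCone_symm (ht : IsTropicalMoveAt u.length t t')
    (hw : IsReducedWord (u ++ [a + 1, a, a + 1] ++ v))
    (h : t' ∈ potentialCone (u ++ [a + 1, a, a + 1] ++ v) k) :
    t ∈ potentialCone (u ++ [a, a + 1, a] ++ v) k := by
  obtain ⟨φ, hφ, hle⟩ := h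
  obtain ⟨φ', hφ', heq⟩ := IsLabelling.triple_braid_symm
    (S' := fun j p q => PotentialStep k (t j) p q) hφ hw
    (fun j hj p q f f' g g' => by rw [ht.eq_of_outside j hj]; exact id)
    fun A B C hAB hBC _ _ _ _ _ _ _ _ _ =>
      exists_potential_triangle_symm hAB hBC ht.isTropicalMove
  exact ⟨φ', hφ', by rwa [heq]⟩

end PotentialCone

/-! ### Travelling along the wires -/

/-- The level of the edge on which a traveller in `G(i, k)` following the wire `r` arrives at the
node `m`; the edge of a wire between the nodes `l` and `l + 1` has level `l`. -/
def inLevel (k r m : ℕ) : ℕ := if r ≤ k then m else m - 1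

/-- The level of the edge on which a traveller in `G(i, k)` following the wire `r` leaves the
node `m`. -/
def outLevel (k r m : ℕ) : ℕ := if r ≤ k then m - 1 else m

/-- The node just before the level `l` on the wire `r` of `G(i, k)`: this is the point of departure
in the encoding of paths by `TravelOK`. -/
def startNode (k r l : ℕ) : ℕ := if r ≤ k then l + 1 else l

/-- A traveller in `G(i, k)` following the wire `r` reaches the level `l` no later than `l'`. -/
def Precedes (k r l l' : ℕ) : Prop := if r ≤ k then l' ≤ l else l ≤ l'

section Wires

variable {w : List ℕ} {k r l l' m x j : ℕ} {ms : List ℕ}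

lemma inLevel_le (hm : ValidNode w m) : inLevel k r m ≤ w.length := by
  have := hm.2
  unfold inLevel
  split_ifs <;> omega

lemma outLevel_le (hm : ValidNode w m) : outLevel k r m ≤ w.length := by
  have := hm.2
  unfold outLevel
  split_ifs <;> omega

lemma startNode_outLevel (hm : ValidNode w m) : startNode k r (outLevel k r m) = m := by
  have := hm.1
  unfold startNode outLevel
  split_ifs <;> omega

lemma precedes_inLevel_iff (hm : ValidNode w m) : Precedes k r l (inLevel k r m) ↔
    if r ≤ k then m < startNode k r l else startNode k r l < m := by
  have := hm.1
  unfold Precedes inLevel startNode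
  split_ifs <;> omega

lemma validNode_of_precedes (hl : l ≤ w.length) (hl' : l' ≤ w.length) (hm₁ : 1 ≤ m)
    (hm : Precedes k r l (inLevel k r m)) (hm' : Precedes k r (outLevel k r m) l') :
    ValidNode w m := by
  refine ⟨hm₁, ?_⟩
  by_cases hr : r ≤ k
  · exact (by simpa only [Precedes, inLevel, if_pos hr] using hm : m ≤ l).trans hl
  · exact (by simpa only [Precedes, outLevel, if_neg hr] using hm' : m ≤ l').trans hl'

lemma apply_le_apply_of_precedes {α : Type*} [Preorder α] {f : ℕ → α} (h : Precedes k r l l')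
    (hf : ∀ m, 1 ≤ m → Precedes k r l (inLevel k r m) → Precedes k r (outLevel k r m) l' →
      f (outLevel k r m) ≤ f (inLevel k r m)) : f l' ≤ f l := by
  by_cases hr : r ≤ k
  · simp only [Precedes, inLevel, outLevel, if_pos hr] at h hf
    induction l, h using Nat.le_induction with
    | base => rfl
    | succ l hl ih =>
      exact (ih fun m h₁ h₂ => hf m h₁ (by omega)).trans (hf (l + 1) (by omega) le_rfl hl)
  · simp only [Precedes, inLevel, outLevel, if_neg hr] at h hf
    induction l', h using Nat.le_induction with
    | base => rfl
    | succ l' hl ih =>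
      exact (hf (l' + 1) (by omega) hl le_rfl).trans (ih fun m h₁ h₂ h₃ => hf m h₁ h₂ (by omega))

lemma nodeOnWire_iff : NodeOnWire w m r ↔ r = wireX w m ∨ r = wireY w m :=
  or_congr eq_comm eq_comm

lemma nodeOnWire_otherWire : NodeOnWire w m (otherWire w m r) := by
  unfold NodeOnWire otherWire
  split_ifs <;> simp

lemma otherWire_wireX : otherWire w m (wireX w m) = wireY w m := if_pos rfl

lemma otherWire_wireY (h : wireX w m < wireY w m) : otherWire w m (wireY w m) = wireX w m :=
  if_neg h.ne

lemma mem_nodesOn : x ∈ nodesOn w r ↔ ValidNode w x ∧ NodeOnWire w x r := by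
  simp only [nodesOn, List.mem_filter, List.mem_map, List.mem_range, decide_eq_true_eq]
  refine and_congr_left fun _ => ⟨?_, fun h => ⟨x - 1, ?_, Nat.sub_add_cancel h.1⟩⟩
  · rintro ⟨j, hj, rfl⟩
    exact ⟨by omega, by omega⟩
  · have := h.1
    have := h.2
    omega

lemma nodup_nodesOn : (nodesOn w r).Nodup :=
  (List.nodup_range.map (add_left_injective 1)).filter _

lemma mem_tailList : x ∈ tailList w r m ↔ ValidNode w x ∧ NodeOnWire w x r ∧ m < x := by
  rw [tailList, List.mem_filter, mem_nodesOn, decide_eq_true_eq, and_assoc]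

lemma mem_segList : x ∈ segList w r m j ↔
    ValidNode w x ∧ NodeOnWire w x r ∧ min m j < x ∧ x < max m j := by
  rw [segList, List.mem_filter, mem_nodesOn, decide_eq_true_eq, and_assoc]

lemma mem_tailList_succ : x ∈ tailList w (k + 1) (startNode k (k + 1) l) ↔
    ValidNode w x ∧ NodeOnWire w x (k + 1) ∧ Precedes k (k + 1) l (inLevel k (k + 1) x) := by
  rw [mem_tailList]
  refine and_congr_right fun hx => and_congr_right fun _ => ?_
  rw [precedes_inLevel_iff hx, if_neg (by omega)]

lemma mem_segList_startNode (hm : ValidNode w m) (hlm : Precedes k r l (inLevel k r m)) :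
    x ∈ segList w r (startNode k r l) m ↔ ValidNode w x ∧ NodeOnWire w x r ∧
      Precedes k r l (inLevel k r x) ∧ Precedes k r (outLevel k r x) (inLevel k r m) := by
  rw [mem_segList]
  refine and_congr_right fun hx => and_congr_right fun _ => ?_
  rw [precedes_inLevel_iff hm] at hlm
  rw [precedes_inLevel_iff hx]
  have := hm.1
  have := hx.1
  unfold Precedes outLevel inLevel
  split_ifs at hlm ⊢ <;> omega

lemma segList_eq_tailList (hm : ValidNode w m) :
    segList w r (w.length + 1) m = tailList w r m := by
  refine List.filter_congr fun x hx => ?_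
  have := hm.2
  have := (mem_nodesOn.1 hx).1.2
  rw [decide_eq_decide]
  omega

lemma travelOK_nil : TravelOK w k (k + 1) (startNode k (k + 1) w.length) [] := by
  refine ⟨rfl, fun x hx => absurd hx ?_⟩
  rw [mem_tailList]
  rintro ⟨hx, -, h⟩
  have := hx.2
  simp only [startNode, Nat.not_succ_le_self, if_false] at h
  omega

lemma travelOK_cons : TravelOK w k r (startNode k r l) (m :: ms) ↔
    ValidNode w m ∧ NodeOnWire w m r ∧ Precedes k r l (inLevel k r m) ∧
      (∀ x ∈ segList w r (startNode k r l) m, ¬ Forbidden w k x r) ∧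
      TravelOK w k (otherWire w m r) m ms := by
  rw [TravelOK]
  exact and_congr_right fun hm => by rw [precedes_inLevel_iff hm]

lemma travelOK_switch (hm : ValidNode w m) (hr : NodeOnWire w m r)
    (h : TravelOK w k (otherWire w m r)
      (startNode k (otherWire w m r) (outLevel k (otherWire w m r) m)) ms) :
    TravelOK w k r (startNode k r (inLevel k r m)) (m :: ms) := by
  rw [startNode_outLevel hm] at h
  refine travelOK_cons.2 ⟨hm, hr, by simp [Precedes], fun x hx => absurd hx ?_, h⟩
  have := hm.1
  rw [mem_segList]
  rintro ⟨hx, -, h⟩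
  have := hx.1
  unfold startNode inLevel at h
  split_ifs at h <;> omega

lemma TravelOK.of_outLevel (hm : ValidNode w m) (hf : NodeOnWire w m r → ¬ Forbidden w k m r)
    (h : TravelOK w k r (startNode k r (outLevel k r m)) ms) :
    TravelOK w k r (startNode k r (inLevel k r m)) ms := by
  rw [startNode_outLevel hm] at h
  have := hm.1
  cases ms with
  | nil =>
    obtain ⟨rfl, h⟩ := h
    refine ⟨rfl, fun x hx => ?_⟩
    rw [mem_tailList] at hx
    by_cases hxm : x = m
    · exact hxm ▸ hf (hxm ▸ hx.2.1)
    · refine h x (mem_tailList.2 ⟨hx.1, hx.2.1, ?_⟩)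
      have := hx.2.2
      simp only [startNode, inLevel, Nat.not_succ_le_self, if_false] at this
      omega
  | cons m' ms =>
    obtain ⟨hm', hr, hlt, h, hms⟩ := h
    refine ⟨hm', hr, ?_, fun x hx => ?_, hms⟩
    · unfold startNode inLevel
      split_ifs at hlt ⊢ <;> omega
    · rw [mem_segList] at hx
      by_cases hxm : x = m
      · exact hxm ▸ hf (hxm ▸ hx.2.1)
      · refine h x (mem_segList.2 ⟨hx.1, hx.2.1, ?_⟩)
        unfold startNode inLevel at hx
        split_ifs at hx hlt <;> omega

lemma TravelOK.of_inLevel (hm : ValidNode w m) (hr : ¬ NodeOnWire w m r)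
    (h : TravelOK w k r (startNode k r (inLevel k r m)) ms) :
    TravelOK w k r (startNode k r (outLevel k r m)) ms := by
  rw [startNode_outLevel hm]
  have := hm.1
  cases ms with
  | nil =>
    obtain ⟨rfl, h⟩ := h
    refine ⟨rfl, fun x hx => h x ?_⟩
    rw [mem_tailList] at hx ⊢
    refine ⟨hx.1, hx.2.1, ?_⟩
    simp only [startNode, inLevel, Nat.not_succ_le_self, if_false]
    omega
  | cons m' ms =>
    obtain ⟨hm', hr', hlt, h, hms⟩ := h
    have hne : m' ≠ m := by rintro rfl; exact hr hr'
    refine ⟨hm', hr', ?_, fun x hx => h x ?_, hms⟩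
    · unfold startNode inLevel at hlt
      split_ifs at hlt ⊢ <;> omega
    · rw [mem_segList] at hx ⊢
      refine ⟨hx.1, hx.2.1, ?_⟩
      unfold startNode inLevel at hlt ⊢
      split_ifs at hlt ⊢ <;> omega

lemma TravelOK.validNode {a : ℕ} (h : TravelOK w k r a ms) : ∀ m ∈ ms, ValidNode w m := by
  induction ms generalizing r a with
  | nil => simp
  | cons m ms ih =>
    exact List.forall_mem_cons.2 ⟨h.1, ih h.2.2.2.2⟩

end Wires

/-! ### Rigorous paths and potentials -/

/-- The contribution to the string inequality of a switch at the node `m` from the wire `r` to the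
wire `s`, for the string parameters `t` (`0`-based). -/
def switchWeight (t : ℕ → ℝ) (m r s : ℕ) : ℝ := if r < s then t (m - 1) else -t (m - 1)

/-- The left-hand side of the string inequality of a path that starts on the wire `r` and switches
at the nodes `ms`, for the string parameters `t` (`0`-based). -/
def pathWeight (w : List ℕ) (t : ℕ → ℝ) : ℕ → List ℕ → ℝ
  | _, [] => 0
  | r, m :: ms => switchWeight t m r (otherWire w m r) + pathWeight w t (otherWire w m r) ms

section Potentials

variable {w : List ℕ} {k r l m : ℕ} {t : ℕ → ℝ} {φ φ₀ : ℕ → ℕ → ℝ} {ms : List ℕ}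

lemma IsLabelling.crossingRel {S : ℕ → ℕ → ℕ → ℝ → ℝ → ℝ → ℝ → Prop} (h : IsLabelling w S φ)
    (hm : ValidNode w m) : CrossingRel (S (m - 1) (wireX w m) (wireY w m)) (wireX w m) (wireY w m)
      (φ (m - 1)) (φ m) := by
  obtain ⟨j, rfl⟩ := Nat.exists_eq_add_of_le' hm.1
  exact h j hm.2

lemma IsReducedWord.wireX_lt_wireY (hw : IsReducedWord w) (hm : ValidNode w m) :
    wireX w m < wireY w m := by
  obtain ⟨j, rfl⟩ := Nat.exists_eq_add_of_le' hm.1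
  exact isReducedWord_iff.1 hw j hm.2

lemma forbidden_wireX_iff (h : wireX w m < wireY w m) :
    Forbidden w k m (wireX w m) ↔ wireY w m ≤ k := by
  rw [Forbidden, otherWire_wireX]
  omega

lemma forbidden_wireY_iff (h : wireX w m < wireY w m) :
    Forbidden w k m (wireY w m) ↔ k < wireX w m := by
  rw [Forbidden, otherWire_wireY h]
  omega

lemma potentialStep_iff_inLevel_outLevel {p q : ℕ} {s : ℝ} (hpq : p < q) :
    PotentialStep k s p q (φ (m - 1) p) (φ (m - 1) q) (φ m p) (φ m q) ↔
      ((¬ q ≤ k → φ (outLevel k p m) p ≤ φ (inLevel k p m) p) ∧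
        (¬ k < p → φ (outLevel k q m) q ≤ φ (inLevel k q m) q)) ∧
      φ (outLevel k q m) q ≤ φ (inLevel k p m) p + s ∧
      φ (outLevel k p m) p ≤ φ (inLevel k q m) q - s := by
  unfold PotentialStep inLevel outLevel
  grind

lemma isPotential_iff (hw : IsReducedWord w) : IsPotential w k t φ ↔ ∀ m, ValidNode w m → ∀ r,
    (¬ NodeOnWire w m r → φ (outLevel k r m) r = φ (inLevel k r m) r) ∧
    (NodeOnWire w m r →
      (¬ Forbidden w k m r → φ (outLevel k r m) r ≤ φ (inLevel k r m) r) ∧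
      φ (outLevel k (otherWire w m r) m) (otherWire w m r) ≤
        φ (inLevel k r m) r + switchWeight t m r (otherWire w m r)) := by
  have hcross : IsPotential w k t φ ↔ ∀ m, ValidNode w m → CrossingRel
      (PotentialStep k (t (m - 1)) (wireX w m) (wireY w m)) (wireX w m) (wireY w m)
      (φ (m - 1)) (φ m) :=
    ⟨fun h m hm => h.crossingRel hm, fun h j hj => h (j + 1) ⟨by omega, hj⟩⟩
  rw [hcross]
  refine forall₂_congr fun m hm => ?_
  have hlt := hw.wireX_lt_wireY hm
  have hoff : ∀ r, φ (outLevel k r m) r = φ (inLevel k r m) r ↔ φ (m - 1) r = φ m r := fun r => by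
    unfold outLevel inLevel
    split_ifs
    exacts [Iff.rfl, eq_comm]
  rw [CrossingRel, potentialStep_iff_inLevel_outLevel hlt]
  simp only [forall_and, nodeOnWire_iff, forall_eq_or_imp, forall_eq, otherWire_wireX,
    otherWire_wireY hlt, forbidden_wireX_iff hlt, forbidden_wireY_iff hlt, switchWeight, hoff,
    if_pos hlt, if_neg hlt.not_gt, ← sub_eq_add_neg, not_or, and_imp]

lemma IsPotential.outLevel_le_inLevel (hφ : IsPotential w k t φ) (hw : IsReducedWord w)
    (hm : ValidNode w m) (hf : NodeOnWire w m r → ¬ Forbidden w k m r) :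
    φ (outLevel k r m) r ≤ φ (inLevel k r m) r := by
  obtain ⟨hoff, hon⟩ := (isPotential_iff hw).1 hφ m hm r
  by_cases hr : NodeOnWire w m r
  exacts [(hon hr).1 (hf hr), (hoff hr).le]

lemma IsPotential.le_add_pathWeight (hφ : IsPotential w k t φ) (hw : IsReducedWord w)
    (hl : l ≤ w.length) (h : TravelOK w k r (startNode k r l) ms) :
    φ w.length (k + 1) ≤ φ l r + pathWeight w t r ms := by
  induction ms generalizing r l with
  | nil =>
    obtain ⟨rfl, h⟩ := h
    have hk : ¬ k + 1 ≤ k := by omega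
    rw [pathWeight, add_zero]
    have hle : Precedes k (k + 1) l w.length := by rwa [Precedes, if_neg hk]
    refine apply_le_apply_of_precedes (f := fun l => φ l (k + 1)) hle fun m hm₁ hm hm₂ => ?_
    have hm' := validNode_of_precedes hl le_rfl hm₁ hm hm₂
    exact hφ.outLevel_le_inLevel hw hm' fun hr => h m (mem_tailList_succ.2 ⟨hm', hr, hm⟩)
  | cons m ms ih =>
    obtain ⟨hm, hr, hlm, h, hms⟩ := travelOK_cons.1 h
    have hwire : φ (inLevel k r m) r ≤ φ l r := by
      refine apply_le_apply_of_precedes (f := fun l => φ l r) hlm fun x hx₁ hx hx' => ?_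
      have hvalid := validNode_of_precedes hl (inLevel_le hm) hx₁ hx hx'
      exact hφ.outLevel_le_inLevel hw hvalid fun hxr =>
        h x ((mem_segList_startNode hm hlm).2 ⟨hvalid, hxr, hx, hx'⟩)
    have hswitch := (((isPotential_iff hw).1 hφ m hm r).2 hr).2
    have hrest := ih (outLevel_le hm) (by rwa [startNode_outLevel hm])
    rw [pathWeight]
    linarith

lemma IsTimeFunction.isPotential {τ : ℕ → ℕ → ℝ} (hτ : IsTimeFunction w k 1 τ) {M : ℝ}
    (hM₀ : 0 ≤ M) (hM : ∀ j < w.length, |t j| ≤ M) :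
    IsPotential w k t fun l r => -(M * τ l r) := fun j hj => by
  obtain ⟨hoff, hstep⟩ := hτ.smul hM₀ j hj
  obtain ⟨hlo, hhi⟩ := abs_le.1 (hM j hj)
  refine ⟨fun r hp hq => congrArg Neg.neg (hoff r hp hq), ?_⟩
  simp only [TimeStep] at hstep
  simp only [PotentialStep]
  split_ifs at hstep ⊢ <;> grind

lemma IsTimeFunction.exists_isPotential {τ : ℕ → ℕ → ℝ} (hτ : IsTimeFunction w k 1 τ)
    (t : ℕ → ℝ) : ∃ φ, IsPotential w k t φ :=
  ⟨_, hτ.isPotential (M := ∑ i ∈ Finset.range w.length, |t i|)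
    (Finset.sum_nonneg fun _ _ => abs_nonneg _) fun _ hj =>
      Finset.single_le_sum (f := fun i => |t i|) (fun _ _ => abs_nonneg _)
        (Finset.mem_range.2 hj)⟩

/-- The weights of all continuations to `L_{k+1}` from the level `l` of the wire `r`. Leaving the
diagram at the cost prescribed by a reference potential `φ₀` is allowed as well, so that the set is
nonempty even if no continuation exists. -/
def continuationWeights (w : List ℕ) (k : ℕ) (t : ℕ → ℝ) (φ₀ : ℕ → ℕ → ℝ) (l r : ℕ) : Set ℝ :=
  insert (φ₀ w.length k - φ₀ l r) (pathWeight w t r '' {ms | TravelOK w k r (startNode k r l) ms})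

lemma bddBelow_continuationWeights (hφ₀ : IsPotential w k t φ₀) (hw : IsReducedWord w)
    (hl : l ≤ w.length) : BddBelow (continuationWeights w k t φ₀ l r) := by
  refine BddBelow.insert _ ⟨φ₀ w.length (k + 1) - φ₀ l r, ?_⟩
  rintro _ ⟨ms, hms, rfl⟩
  exact sub_le_iff_le_add'.2 (hφ₀.le_add_pathWeight hw hl hms)

lemma continuationWeights_outLevel (hφ₀ : IsPotential w k t φ₀) (hw : IsReducedWord w)
    (hm : ValidNode w m) (hr : ¬ NodeOnWire w m r) :
    continuationWeights w k t φ₀ (outLevel k r m) r =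
      continuationWeights w k t φ₀ (inLevel k r m) r := by
  have htravel : ∀ ms, TravelOK w k r (startNode k r (outLevel k r m)) ms ↔
      TravelOK w k r (startNode k r (inLevel k r m)) ms := fun ms =>
    ⟨.of_outLevel hm fun h => absurd h hr, .of_inLevel hm hr⟩
  simp only [continuationWeights, htravel, ((isPotential_iff hw).1 hφ₀ m hm r).1 hr]

lemma isPotential_neg_sInf_continuationWeights (hφ₀ : IsPotential w k t φ₀)
    (hw : IsReducedWord w) :
    IsPotential w k t fun l r => -sInf (continuationWeights w k t φ₀ l r) := by
  have hbdd : ∀ {m r}, ValidNode w m →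
      BddBelow (continuationWeights w k t φ₀ (inLevel k r m) r) := fun {m r} hm =>
    bddBelow_continuationWeights hφ₀ hw (inLevel_le hm)
  rw [isPotential_iff hw]
  refine fun m hm r => ⟨fun hr => ?_, fun hr => ⟨fun hf => neg_le_neg ?_, ?_⟩⟩
  · simp only [continuationWeights_outLevel hφ₀ hw hm hr]
  · refine le_csInf (Set.insert_nonempty _ _) ?_
    rintro _ (rfl | ⟨ms, hms, rfl⟩)
    · refine (csInf_le (hbdd hm) (Set.mem_insert _ _)).trans (sub_le_sub_left ?_ _)
      exact hφ₀.outLevel_le_inLevel hw hm fun _ => hf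
    · exact csInf_le (hbdd hm) (.inr ⟨ms, .of_outLevel hm (fun _ => hf) hms, rfl⟩)
  · rw [neg_le, neg_add, neg_neg, ← sub_eq_add_neg]
    refine le_csInf (Set.insert_nonempty _ _) ?_
    rintro _ (rfl | ⟨ms, hms, rfl⟩)
    · have := csInf_le (hbdd (r := r) hm) (Set.mem_insert _ _)
      have := (((isPotential_iff hw).1 hφ₀ m hm r).2 hr).2
      linarith
    · rw [sub_le_iff_le_add']
      exact csInf_le (hbdd hm) (.inr ⟨m :: ms, travelOK_switch hm hr hms, rfl⟩)

lemma mem_potentialCone_of_pathWeight_nonneg (hφ₀ : IsPotential w k t φ₀) (hw : IsReducedWord w)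
    (h : ∀ ms, TravelOK w k k (startNode k k w.length) ms → 0 ≤ pathWeight w t k ms) :
    t ∈ potentialCone w k := by
  refine ⟨_, isPotential_neg_sInf_continuationWeights hφ₀ hw, neg_le_neg ?_⟩
  calc sInf (continuationWeights w k t φ₀ w.length (k + 1))
      ≤ 0 := csInf_le (bddBelow_continuationWeights hφ₀ hw le_rfl) (.inr ⟨[], travelOK_nil, rfl⟩)
    _ ≤ sInf (continuationWeights w k t φ₀ w.length k) := by
        refine le_csInf (Set.insert_nonempty _ _) ?_
        rintro _ (rfl | ⟨ms, hms, rfl⟩)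
        exacts [(sub_self _).ge, h ms hms]

/-- Shortest-path duality in `G(i, k)`. -/
lemma mem_potentialCone_iff (hφ₀ : IsPotential w k t φ₀) (hw : IsReducedWord w) :
    t ∈ potentialCone w k ↔
      ∀ ms, TravelOK w k k (startNode k k w.length) ms → 0 ≤ pathWeight w t k ms := by
  refine ⟨?_, mem_potentialCone_of_pathWeight_nonneg hφ₀ hw⟩
  rintro ⟨φ, hφ, hle⟩ ms hms
  linarith [hφ.le_add_pathWeight hw le_rfl hms]

end Potentials

/-! ### Acyclicity of `G(i, k)` -/

section Acyclicity

variable {w : List ℕ} {k r s l l' m x : ℕ} {τ : ℕ → ℕ → ℝ} {ms : List ℕ}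

/-- The time at which the later of the two incoming edges of the node `x` is traversed. -/
def nodeTime (w : List ℕ) (k : ℕ) (τ : ℕ → ℕ → ℝ) (x : ℕ) : ℝ :=
  max (τ (inLevel k (wireX w x) x) (wireX w x)) (τ (inLevel k (wireY w x) x) (wireY w x))

lemma IsTimeFunction.add_one_le (hτ : IsTimeFunction w k 1 τ) (hw : IsReducedWord w)
    (hm : ValidNode w m) (hr : NodeOnWire w m r) (hs : NodeOnWire w m s) :
    τ (inLevel k r m) r + 1 ≤ τ (outLevel k s m) s := by
  have hstep := (hτ.crossingRel hm).2
  have hlt := hw.wireX_lt_wireY hm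
  unfold TimeStep at hstep
  unfold inLevel outLevel
  rcases nodeOnWire_iff.1 hr with rfl | rfl <;> rcases nodeOnWire_iff.1 hs with rfl | rfl <;> grind

lemma IsTimeFunction.le_of_precedes (hτ : IsTimeFunction w k 1 τ) (hw : IsReducedWord w)
    (hl : l ≤ w.length) (hl' : l' ≤ w.length) (h : Precedes k r l l') : τ l r ≤ τ l' r := by
  refine apply_le_apply_of_precedes (f := fun l => OrderDual.toDual (τ l r)) h
    fun m hm₁ hm hm' => OrderDual.toDual_le_toDual.2 ?_
  have hvalid := validNode_of_precedes hl hl' hm₁ hm hm'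
  by_cases hr : NodeOnWire w m r
  · linarith [hτ.add_one_le hw hvalid hr hr]
  · rw [nodeOnWire_iff, not_or] at hr
    have heq := (hτ.crossingRel hvalid).1 r hr.1 hr.2
    unfold inLevel outLevel
    split_ifs
    exacts [heq.ge, heq.le]

lemma le_nodeTime (hr : NodeOnWire w x r) : τ (inLevel k r x) r ≤ nodeTime w k τ x := by
  rcases nodeOnWire_iff.1 hr with rfl | rfl
  exacts [le_max_left _ _, le_max_right _ _]

lemma IsTimeFunction.nodeTime_lt (hτ : IsTimeFunction w k 1 τ) (hw : IsReducedWord w)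
    (hx : ValidNode w x) (hr : NodeOnWire w x r) : nodeTime w k τ x < τ (outLevel k r x) r :=
  max_lt (by linarith [hτ.add_one_le hw hx (.inl rfl) hr])
    (by linarith [hτ.add_one_le hw hx (.inr rfl) hr])

lemma IsTimeFunction.le_nodeTime_of_precedes (hτ : IsTimeFunction w k 1 τ) (hw : IsReducedWord w)
    (hl : l ≤ w.length) (hx : ValidNode w x) (hr : NodeOnWire w x r)
    (h : Precedes k r l (inLevel k r x)) : τ l r ≤ nodeTime w k τ x :=
  (hτ.le_of_precedes hw hl (inLevel_le hx) h).trans (le_nodeTime hr)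

lemma IsTimeFunction.nodup_visitTail (hτ : IsTimeFunction w k 1 τ) (hw : IsReducedWord w)
    (hl : l ≤ w.length) (h : TravelOK w k r (startNode k r l) ms) :
    (visitTail w r (startNode k r l) ms).Nodup ∧
      ∀ x ∈ visitTail w r (startNode k r l) ms, τ l r ≤ nodeTime w k τ x := by
  induction ms generalizing r l with
  | nil =>
    obtain ⟨rfl, -⟩ := h
    simp only [visitTail]
    refine ⟨nodup_nodesOn.filter _, fun x hx => ?_⟩
    obtain ⟨hx, hr, hlx⟩ := mem_tailList_succ.1 hx
    exact hτ.le_nodeTime_of_precedes hw hl hx hr hlx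
  | cons m ms ih =>
    obtain ⟨hm, hr, hlm, -, hms⟩ := travelOK_cons.1 h
    obtain ⟨hnodup, hrest⟩ := ih (outLevel_le hm) (by rwa [startNode_outLevel hm])
    rw [startNode_outLevel hm] at hnodup hrest
    have hbefore : τ l r ≤ nodeTime w k τ m := hτ.le_nodeTime_of_precedes hw hl hm hr hlm
    have hafter : ∀ x ∈ visitTail w (otherWire w m r) m ms, nodeTime w k τ m < nodeTime w k τ x :=
      fun x hx => (hτ.nodeTime_lt hw hm nodeOnWire_otherWire).trans_le (hrest x hx)
    have hseg : ∀ x ∈ segList w r (startNode k r l) m,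
        τ l r ≤ nodeTime w k τ x ∧ nodeTime w k τ x < nodeTime w k τ m := fun x hx => by
      obtain ⟨hx, hxr, hlx, hxm⟩ := (mem_segList_startNode hm hlm).1 hx
      exact ⟨hτ.le_nodeTime_of_precedes hw hl hx hxr hlx, (hτ.nodeTime_lt hw hx hxr).trans_le
        (hτ.le_nodeTime_of_precedes hw (outLevel_le hx) hm hr hxm)⟩
    simp only [visitTail, List.nodup_append', List.nodup_cons, List.mem_append, List.mem_cons]
    refine ⟨⟨nodup_nodesOn.filter _, ⟨fun hm => (hafter m hm).false, hnodup⟩, fun x hx hx' => ?_⟩,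
      ?_⟩
    · rcases List.mem_cons.1 hx' with rfl | hx'
      exacts [(hseg x hx).2.false, (hseg x hx).2.asymm (hafter x hx')]
    · rintro x (hx | rfl | hx)
      exacts [(hseg x hx).1, hbefore, hbefore.trans (hafter x hx).le]

lemma IsTimeFunction.isGPPath_iff {n : ℕ} (hτ : IsTimeFunction w k 1 τ) (hw : IsReducedWord w) :
    IsGPPath n w k ms ↔ 1 ≤ k ∧ k ≤ n ∧ TravelOK w k k (startNode k k w.length) ms := by
  refine and_congr_right fun _ => and_congr_right fun _ => ?_
  cases ms with
  | nil => simp [TravelOK]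
  | cons m ms =>
    have hstart : startNode k k w.length = w.length + 1 := if_pos le_rfl
    constructor
    · rintro ⟨⟨hm, hr, hf, hms⟩, -⟩
      refine travelOK_cons.2 ⟨hm, hr, ?_, ?_, hms⟩
      · rw [precedes_inLevel_iff hm, hstart, if_pos le_rfl]
        exact Nat.lt_succ_of_le hm.2
      · rwa [hstart, segList_eq_tailList hm]
    · intro h
      have hnodup := (hτ.nodup_visitTail hw le_rfl h).1
      obtain ⟨hm, hr, -, hf, hms⟩ := h
      rw [hstart, segList_eq_tailList hm] at hf
      rw [visitTail, hstart, segList_eq_tailList hm] at hnodup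
      exact ⟨⟨hm, hr, hf, hms⟩, hnodup⟩

end Acyclicity

/-! ### The string cone in terms of potentials -/

section StringCone

variable {n : ℕ} {w : List ℕ}

lemma sum_coeff_mul_eq_pathWeight (hw : w.length = Dim n) (t : Fin (Dim n) → ℝ) {r : ℕ}
    {ms : List ℕ} (hms : ∀ m ∈ ms, ValidNode w m) :
    ∑ j : Fin (Dim n), coeff w r ms (j + 1) * t j = pathWeight w (entry n t) r ms := by
  induction ms generalizing r with
  | nil => simp [coeff, pathSwitches, pathWeight]
  | cons m ms ih =>
    obtain ⟨hm, hms'⟩ := List.forall_mem_cons.1 hms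
    obtain ⟨i, rfl⟩ := Nat.exists_eq_add_of_le' hm.1
    have hi : i < Dim n := hw ▸ hm.2
    set s := otherWire w (i + 1) r with hs
    have hcoeff : ∀ j : Fin (Dim n), coeff w r ((i + 1) :: ms) (j + 1) =
        (if ⟨i, hi⟩ = j then (if r < s then (1 : ℝ) else -1) else 0) + coeff w s ms (j + 1) :=
      fun j => by simp [coeff, pathSwitches, Fin.ext_iff, hs]
    simp only [hcoeff, add_mul, Finset.sum_add_distrib, ih hms', pathWeight, ite_mul, zero_mul,
      Finset.sum_ite_eq, Finset.mem_univ, if_true]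
    simp [switchWeight, entry, hi, hs]

lemma mem_stringCone_iff (hw : IsReduced n w)
    (hτ : ∀ k, 1 ≤ k → k ≤ n → ∃ τ, IsTimeFunction w k 1 τ) {t : Fin (Dim n) → ℝ} :
    t ∈ stringCone n w ↔ ∀ k, 1 ≤ k → k ≤ n → entry n t ∈ potentialCone w k := by
  have hred := hw.isReducedExpr.reduced
  have hineq : ∀ k ms, TravelOK w k k (startNode k k w.length) ms →
      stringIneq n w (k, ms) t = pathWeight w (entry n t) k ms := fun k ms h =>
    sum_coeff_mul_eq_pathWeight hw.1 t h.validNode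
  constructor
  · intro h k h₁ hn
    obtain ⟨τ, hτ⟩ := hτ k h₁ hn
    obtain ⟨φ₀, hφ₀⟩ := hτ.exists_isPotential (entry n t)
    exact (mem_potentialCone_iff hφ₀ hred).2 fun ms hms =>
      (h (k, ms) ((hτ.isGPPath_iff hred).2 ⟨h₁, hn, hms⟩)).trans_eq (hineq k ms hms)
  · rintro h ⟨k, ms⟩ (hp : IsGPPath n w k ms)
    obtain ⟨τ, hτ⟩ := hτ k hp.1 hp.2.1
    obtain ⟨φ₀, hφ₀⟩ := hτ.exists_isPotential (entry n t)
    obtain ⟨h₁, hn, hms⟩ := (hτ.isGPPath_iff hred).1 hp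
    rw [hineq k ms hms]
    exact (mem_potentialCone_iff hφ₀ hred).1 (h k h₁ hn) ms hms

end StringCone

/-! ### The string cone of the base word -/

section BaseWordLabelling

variable {n : ℕ} {S : ℕ → ℕ → ℕ → ℝ → ℝ → ℝ → ℝ → Prop} {φ : ℕ → ℕ → ℝ} {η Ψ : ℕ → ℝ}

/-- Extends a labelling of `baseWord n` to `baseWord (n + 1)`: the new wire `n + 2` crosses the
wires `1, …, n + 1` in this order, carries the labels `η 0, …, η (n + 1)` between these crossings,
and the wire `r` carries the label `Ψ r` after having been crossed. -/
def extendLabelling (n : ℕ) (φ : ℕ → ℕ → ℝ) (η Ψ : ℕ → ℝ) (l r : ℕ) : ℝ :=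
  if r = n + 2 then η (l - Dim n)
  else if 1 ≤ r ∧ Dim n + r ≤ l then Ψ r
  else φ (min l (Dim n)) r

lemma extendLabelling_new (i : ℕ) : extendLabelling n φ η Ψ (Dim n + i) (n + 2) = η i := by
  rw [extendLabelling, if_pos rfl, Nat.add_sub_cancel_left]

lemma extendLabelling_of_le {l r : ℕ} (hr : r ≠ n + 2) (hl : l ≤ Dim n) :
    extendLabelling n φ η Ψ l r = φ l r := by
  rw [extendLabelling, if_neg hr, if_neg (by omega), min_eq_left hl]

lemma extendLabelling_of_crossed {i r : ℕ} (hr : r ≠ n + 2) (hr1 : 1 ≤ r) (hri : r ≤ i) :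
    extendLabelling n φ η Ψ (Dim n + i) r = Ψ r := by
  rw [extendLabelling, if_neg hr, if_pos (by omega)]

lemma extendLabelling_of_not_crossed {i r : ℕ} (hr : r ≠ n + 2) (hri : r = 0 ∨ i < r) :
    extendLabelling n φ η Ψ (Dim n + i) r = φ (Dim n) r := by
  rw [extendLabelling, if_neg hr, if_neg (by omega), min_eq_right (by omega)]

lemma IsLabelling.extendLabelling (hφ : IsLabelling (baseWord n) S φ)
    (h : ∀ i ≤ n, S (Dim n + i) (i + 1) (n + 2) (φ (Dim n) (i + 1)) (η i) (Ψ (i + 1))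
      (η (i + 1))) :
    IsLabelling (baseWord (n + 1)) S (extendLabelling n φ η Ψ) := by
  intro j hj
  rw [length_baseWord] at hj
  obtain ⟨m, i, hm, hi, rfl⟩ := exists_eq_Dim_add hj
  rw [wireX_baseWord hm hi, wireY_baseWord hm hi]
  rcases Nat.lt_succ_iff_lt_or_eq.1 hm with hmn | rfl
  · have hlt := Dim_add_lt_Dim hmn hi
    obtain ⟨hother, hcross⟩ := hφ (Dim m + i) (by rwa [length_baseWord])
    rw [wireX_baseWord hmn hi, wireY_baseWord hmn hi] at hother hcross
    refine ⟨fun r hp hq => ?_, ?_⟩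
    · by_cases hr : r = n + 2
      · subst hr
        simp only [StringPolytope.extendLabelling, if_true, Nat.sub_eq_zero_of_le hlt.le,
          Nat.sub_eq_zero_of_le (Nat.succ_le_of_lt hlt)]
      · rw [extendLabelling_of_le hr hlt.le, extendLabelling_of_le hr hlt, hother r hp hq]
    · rwa [extendLabelling_of_le (by omega) hlt.le, extendLabelling_of_le (by omega) hlt.le,
        extendLabelling_of_le (by omega) hlt, extendLabelling_of_le (by omega) hlt]
  · refine ⟨fun r hp hq => ?_, ?_⟩
    · rw [add_assoc]
      by_cases hri : r = 0 ∨ i < r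
      · rw [extendLabelling_of_not_crossed hq hri, extendLabelling_of_not_crossed hq (by omega)]
      · rw [extendLabelling_of_crossed hq (by omega) (by omega),
          extendLabelling_of_crossed hq (by omega) (by omega)]
    · rw [add_assoc, extendLabelling_new, extendLabelling_new,
        extendLabelling_of_not_crossed (by omega) (by omega),
        extendLabelling_of_crossed (by omega) (by omega) le_rfl]
      exact h i hi

lemma IsLabelling.of_baseWord_succ (h : IsLabelling (baseWord (n + 1)) S φ) :
    IsLabelling (baseWord n) S φ := by
  intro j hj
  rw [length_baseWord] at hj
  obtain ⟨m, i, hm, hi, rfl⟩ := exists_eq_Dim_add hj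
  have hcross := h (Dim m + i) (by rw [length_baseWord]; exact Dim_add_lt_Dim (by omega) hi)
  rwa [wireX_baseWord (by omega) hi, wireY_baseWord (by omega) hi] at hcross ⊢

lemma IsLabelling.last_row (h : IsLabelling (baseWord (n + 1)) S φ) {i : ℕ} (hi : i ≤ n) :
    S (Dim n + i) (i + 1) (n + 2) (φ (Dim n) (i + 1)) (φ (Dim n + i) (n + 2))
      (φ (Dim (n + 1)) (i + 1)) (φ (Dim n + (i + 1)) (n + 2)) := by
  have hrow : ∀ i ≤ n, CrossingRel (S (Dim n + i) (i + 1) (n + 2)) (i + 1) (n + 2)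
      (φ (Dim n + i)) (φ (Dim n + (i + 1))) := by
    intro i hi
    have hcross := h (Dim n + i) (by rw [length_baseWord, Dim_succ]; omega)
    rwa [wireX_baseWord (by omega) hi, wireY_baseWord (by omega) hi] at hcross
  have hbefore : ∀ d ≤ i, φ (Dim n + d) (i + 1) = φ (Dim n) (i + 1) := by
    intro d hd
    induction d with
    | zero => rfl
    | succ d ih =>
      rw [← (hrow d (by omega)).1 (i + 1) (by omega) (by omega), ih (by omega)]
  have hafter : ∀ d, i + 1 + d ≤ n + 1 →
      φ (Dim n + (i + 1 + d)) (i + 1) = φ (Dim n + (i + 1)) (i + 1) := by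
    intro d hd
    induction d with
    | zero => rfl
    | succ d ih =>
      rw [← add_assoc (i + 1), ← (hrow (i + 1 + d) (by omega)).1 (i + 1) (by omega) (by omega),
        ih (by omega)]
  have hend := hafter (n - i) (by omega)
  rw [show Dim n + (i + 1 + (n - i)) = Dim (n + 1) by rw [Dim_succ]; omega] at hend
  rw [← hbefore i le_rfl, hend]
  exact (hrow i hi).2

end BaseWordLabelling

lemma exists_forall_le_apply_le (f : ℕ → ℝ) (m : ℕ) : ∃ H, ∀ i ≤ m, f i ≤ H := by
  obtain ⟨H, hH⟩ := ((Set.finite_Iic m).image f).bddAbove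
  exact ⟨H, fun i hi => hH ⟨i, hi, rfl⟩⟩

lemma exists_isTimeFunction_baseWord (n k : ℕ) : ∃ τ, IsTimeFunction (baseWord n) k 1 τ := by
  induction n with
  | zero => exact ⟨0, fun j hj => absurd hj (by simp [baseWord])⟩
  | succ n ih =>
    obtain ⟨τ, hτ⟩ := ih
    obtain ⟨H, hH⟩ := exists_forall_le_apply_le (fun i => |τ (Dim n) (i + 1)|) n
    refine ⟨_, hτ.extendLabelling
      (η := fun i => if n + 2 ≤ k then -H - i else if i ≤ k then -H - (n + 2) + i else H + i)
      (Ψ := fun j => if n + 2 ≤ k then -H - j else if j ≤ k then -H - (n + 2) else H + j)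
      fun i hi => ?_⟩
    obtain ⟨hlow, hhigh⟩ := abs_le.1 (hH i hi)
    have hin : (i : ℝ) ≤ n := by exact_mod_cast hi
    rcases le_or_gt (n + 2) k with hnk | hnk
    · rw [timeStep_up hnk]
      simp only [if_pos hnk]
      push_cast
      refine ⟨⟨?_, ?_⟩, ?_, ?_⟩ <;> linarith
    · rcases le_or_gt (i + 1) k with hik | hik
      · rw [timeStep_mixed hik hnk]
        simp only [if_neg hnk.not_ge, if_pos hik, if_pos (Nat.le_of_succ_le hik)]
        push_cast
        refine ⟨⟨?_, ?_⟩, ?_, ?_⟩ <;> linarith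
      · rw [timeStep_down (by omega) hik]
        have hle : (if i ≤ k then -H - (n + 2) + i else H + i) ≤ H + i := by
          split_ifs <;> linarith
        simp only [if_neg hnk.not_ge, if_neg hik.not_ge]
        push_cast
        refine ⟨⟨?_, ?_⟩, ?_, ?_⟩ <;> linarith

section BaseWordCone

variable {n c : ℕ} {t : ℕ → ℝ}

/-- A label exceeding all others is put on the edges that do not influence the endpoints, so that
only the crossings of the new wire with `c + 1` and `c + 2` impose a condition. -/
lemma IsPotential.exists_extend {φ : ℕ → ℕ → ℝ} (hφ : IsPotential (baseWord n) (c + 1) t φ)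
    (hc : c ≤ n) :
    ∃ ψ, IsPotential (baseWord (n + 1)) (c + 1) t ψ ∧
      ψ (Dim (n + 1)) (c + 1) = φ (Dim n) (c + 1) ∧
      (c < n → ψ (Dim (n + 1)) (c + 2) = min (φ (Dim n) (c + 2))
        (φ (Dim n) (c + 1) + t (Dim n + c) - t (Dim n + (c + 1)))) ∧
      (c = n → ψ (Dim (n + 1)) (c + 2) = φ (Dim n) (c + 1) + t (Dim n + c)) := by
  obtain ⟨H, hH⟩ := exists_forall_le_apply_le (fun i => |φ (Dim n) (i + 1)| + |t (Dim n + i)|) n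
  set m := min (φ (Dim n) (c + 2)) (φ (Dim n) (c + 1) + t (Dim n + c) - t (Dim n + (c + 1)))
    with hm
  refine ⟨_, hφ.extendLabelling
    (η := fun i => if i < c + 1 then H
      else if i = c + 1 then φ (Dim n) (c + 1) + t (Dim n + c) else -H)
    (Ψ := fun j => if j < c + 1 then 2 * H else if j = c + 1 then φ (Dim n) (c + 1)
      else if j = c + 2 then m else -(2 * H)) fun i hi => ?_, ?_, fun hcn => ?_, ?_⟩
  · have hHi := hH i hi
    obtain ⟨hφlow, hφhigh⟩ := abs_le.1 (le_refl |φ (Dim n) (i + 1)|)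
    obtain ⟨htlow, hthigh⟩ := abs_le.1 (le_refl |t (Dim n + i)|)
    rcases lt_trichotomy i c with hic | rfl | hic
    · rw [potentialStep_mixed (by omega) (by omega), if_pos (by omega), if_pos (by omega),
        if_pos (by omega)]
      refine ⟨?_, ?_, ?_, ?_⟩ <;> linarith
    · rw [potentialStep_mixed le_rfl (by omega)]
      simp only [lt_irrefl, Nat.lt_succ_self, if_true, if_false]
      refine ⟨?_, ?_, ?_, ?_⟩ <;> linarith
    · rw [potentialStep_down (by omega) (by omega)]
      rcases eq_or_ne i (c + 1) with rfl | hne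
      · simp only [lt_irrefl, if_true, if_false, show ¬(c + 1 + 1 < c + 1) by omega,
          show ¬(c + 1 + 1 = c + 1) by omega]
        exact ⟨min_le_left _ _, by linarith, min_le_right _ _⟩
      · simp only [hne, show ¬(i < c + 1) by omega, show ¬(i + 1 < c + 1) by omega,
          show ¬(i + 1 = c + 1) by omega, show ¬(i + 1 = c + 2) by omega, if_false]
        refine ⟨?_, ?_, ?_⟩ <;> linarith
  · rw [Dim_succ, extendLabelling_of_crossed (by omega) (by omega) (by omega)]
    simp only [lt_irrefl, if_true, if_false]
  · rw [Dim_succ, extendLabelling_of_crossed (by omega) (by omega) (by omega)]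
    simp only [if_true, if_false, show ¬(c + 2 < c + 1) by omega, show c + 2 ≠ c + 1 by omega]
  · rintro rfl
    rw [Dim_succ, extendLabelling_new]
    simp only [lt_irrefl, if_true, if_false]

lemma mem_potentialCone_baseWord_succ_of_lt (hc : c < n) :
    t ∈ potentialCone (baseWord (n + 1)) (c + 1) ↔
      t ∈ potentialCone (baseWord n) (c + 1) ∧ t (Dim n + (c + 1)) ≤ t (Dim n + c) := by
  simp only [potentialCone, Set.mem_ofPred_eq, length_baseWord]
  constructor
  · rintro ⟨φ, hφ, hle⟩
    have hleft := hφ.last_row hc.le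
    have hright := hφ.last_row (Nat.succ_le_of_lt hc)
    rw [potentialStep_mixed le_rfl (by omega)] at hleft
    rw [potentialStep_down (by omega) (by omega)] at hright
    exact ⟨⟨φ, hφ.of_baseWord_succ, by linarith⟩, by linarith⟩
  · rintro ⟨⟨φ, hφ, hle⟩, ht⟩
    obtain ⟨ψ, hψ, hleft, hright, -⟩ := hφ.exists_extend hc.le
    refine ⟨ψ, hψ, ?_⟩
    rw [hleft, hright hc]
    exact le_min hle (by linarith)

lemma mem_potentialCone_baseWord_succ_self :
    t ∈ potentialCone (baseWord (n + 1)) (n + 1) ↔ 0 ≤ t (Dim n + n) := by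
  simp only [potentialCone, Set.mem_ofPred_eq, length_baseWord]
  constructor
  · rintro ⟨φ, hφ, hle⟩
    have hlast := hφ.last_row le_rfl
    rw [potentialStep_mixed le_rfl (by omega), ← Dim_succ] at hlast
    linarith
  · intro ht
    obtain ⟨τ, hτ⟩ := exists_isTimeFunction_baseWord n (n + 1)
    obtain ⟨φ, hφ⟩ := hτ.exists_isPotential t
    obtain ⟨ψ, hψ, hleft, -, hright⟩ := hφ.exists_extend le_rfl
    exact ⟨ψ, hψ, by rw [hleft, hright rfl]; linarith⟩

/-- The cone of the sequences `t` with `t (Dim m) ≥ t (Dim m + 1) ≥ ⋯ ≥ t (Dim m + m) ≥ 0` for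
all `m < n`; this is `chainCone`, for sequences and with `0`-based rows. -/
def rowChainCone (n : ℕ) : Set (ℕ → ℝ) :=
  {t | ∀ m < n, ∀ i ≤ m, (if i = m then 0 else t (Dim m + (i + 1))) ≤ t (Dim m + i)}

lemma mem_rowChainCone_succ : t ∈ rowChainCone (n + 1) ↔ t ∈ rowChainCone n ∧
    ∀ i ≤ n, (if i = n then 0 else t (Dim n + (i + 1))) ≤ t (Dim n + i) := by
  simp only [rowChainCone, Set.mem_ofPred_eq, Nat.forall_lt_succ_right]

lemma forall_mem_potentialCone_baseWord_iff :
    (∀ k, 1 ≤ k → k ≤ n → t ∈ potentialCone (baseWord n) k) ↔ t ∈ rowChainCone n := by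
  induction n with
  | zero => exact ⟨fun _ m hm => absurd hm (by omega), fun _ k h1 h0 => absurd h1 (by omega)⟩
  | succ n ih =>
    rw [mem_rowChainCone_succ, ← ih]
    constructor
    · intro h
      refine ⟨fun k h1 hk => ?_, fun i hi => ?_⟩
      · obtain ⟨c, rfl⟩ := Nat.exists_eq_add_of_le' h1
        exact ((mem_potentialCone_baseWord_succ_of_lt hk).1 (h _ h1 (by omega))).1
      · split_ifs with hin
        · subst hin
          exact mem_potentialCone_baseWord_succ_self.1 (h _ (by omega) le_rfl)
        · exact ((mem_potentialCone_baseWord_succ_of_lt (by omega)).1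
            (h (i + 1) (by omega) (by omega))).2
    · rintro ⟨hcone, hrow⟩ k h1 hk
      obtain ⟨c, rfl⟩ := Nat.exists_eq_add_of_le' h1
      rcases Nat.lt_or_eq_of_le (Nat.le_of_succ_le_succ hk) with hcn | rfl
      · refine (mem_potentialCone_baseWord_succ_of_lt hcn).2 ⟨hcone _ h1 hcn, ?_⟩
        simpa only [if_neg hcn.ne] using hrow c hcn.le
      · exact mem_potentialCone_baseWord_succ_self.2 (by simpa only [if_true] using hrow c le_rfl)

end BaseWordCone

lemma IsReduced.exists_isTimeFunction {n : ℕ} {w : List ℕ} (hw : IsReduced n w) (k : ℕ) :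
    ∃ τ, IsTimeFunction w k 1 τ :=
  hw.braid_induction (Q := fun w => ∃ τ, IsTimeFunction w k 1 τ)
    (exists_isTimeFunction_baseWord n k) fun _ _ hw _ hww' hτ =>
      exists_isTimeFunction_of_braidMove hw.isReducedExpr.reduced hww' hτ

lemma IsReduced.mem_stringCone_iff {n : ℕ} {w : List ℕ} (hw : IsReduced n w)
    {t : Fin (Dim n) → ℝ} :
    t ∈ stringCone n w ↔ ∀ k, 1 ≤ k → k ≤ n → entry n t ∈ potentialCone w k :=
  StringPolytope.mem_stringCone_iff hw fun k _ _ => hw.exists_isTimeFunction k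

lemma mem_stringCone_baseWord_iff {n : ℕ} {t : Fin (Dim n) → ℝ} :
    t ∈ stringCone n (baseWord n) ↔ entry n t ∈ rowChainCone n := by
  rw [(isReduced_baseWord n).mem_stringCone_iff, forall_mem_potentialCone_baseWord_iff]

/-! ### The `λ`-inequalities under braid moves -/

/-- The coefficient of a node in column `l` in the `λ`-inequality of a node in column `c`. -/
def columnCoeff (l c : ℕ) : ℝ := if l = c then -2 else if l = c + 1 ∨ l + 1 = c then 1 else 0

lemma columnCoeff_self (c : ℕ) : columnCoeff c c = -2 := if_pos rfl

lemma columnCoeff_succ_left (c : ℕ) : columnCoeff (c + 1) c = 1 := by simp [columnCoeff]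

lemma columnCoeff_succ_right (c : ℕ) : columnCoeff c (c + 1) = 1 := by simp [columnCoeff]

lemma columnCoeff_of_far {l c : ℕ} (h : l + 1 < c ∨ c + 1 < l) : columnCoeff l c = 0 := by
  rw [columnCoeff, if_neg (by omega), if_neg (by omega)]

/-- The contribution of the nodes with `0`-based indices in `[j, N)` to the `λ`-inequality of a
node in column `c`. -/
def columnSum (w : List ℕ) (N c j : ℕ) (t : ℕ → ℝ) : ℝ :=
  ∑ k ∈ Finset.Ico j N, columnCoeff (letterAt w (k + 1)) c * t k

/-- The `λ`-inequality of the node with `0`-based index `j` among `N` nodes, for real `λ`. -/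
def LamIneqAt (w : List ℕ) (N : ℕ) (lam : ℕ → ℝ) (t : ℕ → ℝ) (j : ℕ) : Prop :=
  t j ≤ lam (letterAt w (j + 1)) + columnSum w N (letterAt w (j + 1)) (j + 1) t

lemma entry_of_lt {n a : ℕ} (h : a < Dim n) (t : Fin (Dim n) → ℝ) : entry n t a = t ⟨a, h⟩ :=
  dif_pos h

lemma lamIneq_iff {n : ℕ} {w : List ℕ} {lam : ℕ → ℤ} {t : Fin (Dim n) → ℝ} (j : Fin (Dim n)) :
    LamIneq n w lam j t ↔ LamIneqAt w (Dim n) (fun i => lam i) (entry n t) j := by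
  have hIco : Finset.Ico ((j : ℕ) + 1) (Dim n) =
      (Finset.range (Dim n)).filter fun k => (j : ℕ) < k := by
    ext k
    simp only [Finset.mem_Ico, Finset.mem_filter, Finset.mem_range]
    omega
  rw [LamIneq, LamIneqAt, columnSum, hIco, Finset.sum_filter, Finset.sum_range,
    entry_of_lt j.2]
  simp only [entry_of_lt (Fin.is_lt _), ite_mul, zero_mul]
  rfl

lemma mem_lamCone_iff {n : ℕ} {w : List ℕ} {lam : ℕ → ℤ} {t : Fin (Dim n) → ℝ} :
    t ∈ lamCone n w lam ↔ ∀ j < Dim n, LamIneqAt w (Dim n) (fun i => lam i) (entry n t) j :=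
  ⟨fun h j hj => (lamIneq_iff ⟨j, hj⟩).1 (h ⟨j, hj⟩), fun h j => (lamIneq_iff j).2 (h j j.2)⟩

section Block

variable {w w' u v : List ℕ} {N a b c j m l : ℕ} {lam t t' : ℕ → ℝ}

lemma columnSum_self : columnSum w N c N t = 0 := by
  rw [columnSum, Finset.Ico_self, Finset.sum_empty]

lemma columnSum_succ (h : j < N) : columnSum w N c j t =
    columnCoeff (letterAt w (j + 1)) c * t j + columnSum w N c (j + 1) t :=
  Finset.sum_eq_sum_Ico_succ_bot h _

lemma columnSum_add_columnSum (hj : j ≤ m) (hm : m ≤ N) :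
    columnSum w m c j t + columnSum w N c m t = columnSum w N c j t :=
  Finset.sum_Ico_consecutive _ hj hm

lemma columnSum_congr
    (h : ∀ k, j ≤ k → k < N → letterAt w' (k + 1) = letterAt w (k + 1) ∧ t' k = t k) :
    columnSum w' N c j t' = columnSum w N c j t :=
  Finset.sum_congr rfl fun k hk => by
    rw [Finset.mem_Ico] at hk
    rw [(h k hk.1 hk.2).1, (h k hk.1 hk.2).2]

/-- Nodes below the block see it only through its `columnSum`. -/
lemma forall_lamIneqAt_iff_of_block (hN : m + l ≤ N)
    (hout : ∀ j, (j < m ∨ m + l ≤ j) → letterAt w' (j + 1) = letterAt w (j + 1) ∧ t' j = t j)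
    (hsum : ∀ c, columnSum w' (m + l) c m t' = columnSum w (m + l) c m t)
    (hblock : (∀ i < l, LamIneqAt w N lam t (m + i)) ↔
      ∀ i < l, LamIneqAt w' N lam t' (m + i)) :
    (∀ j < N, LamIneqAt w N lam t j) ↔ ∀ j < N, LamIneqAt w' N lam t' j := by
  have habove : ∀ c j, m + l ≤ j → columnSum w' N c j t' = columnSum w N c j t :=
    fun c j hj => columnSum_congr fun k hk _ => hout k (by omega)
  have hbelow : ∀ c j, j ≤ m → columnSum w' N c j t' = columnSum w N c j t := by
    intro c j hj
    rw [← columnSum_add_columnSum (show j ≤ m + l by omega) hN,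
      ← columnSum_add_columnSum hj (Nat.le_add_right m l), hsum, habove _ _ le_rfl,
      columnSum_congr fun k _ hk => hout k (Or.inl hk),
      columnSum_add_columnSum hj (Nat.le_add_right m l), columnSum_add_columnSum (by omega) hN]
  have hoff : ∀ j, (j < m ∨ m + l ≤ j) → (LamIneqAt w N lam t j ↔ LamIneqAt w' N lam t' j) := by
    intro j hj
    rw [LamIneqAt, LamIneqAt, (hout j hj).1, (hout j hj).2]
    rcases hj with hj | hj
    · rw [hbelow _ _ hj]
    · rw [habove _ _ (by omega)]
  have hsplit : ∀ P : ℕ → Prop, (∀ j < N, P j) ↔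
      (∀ j < N, (j < m ∨ m + l ≤ j) → P j) ∧ ∀ i < l, P (m + i) := by
    refine fun P => ⟨fun h => ⟨fun j hj _ => h j hj, fun i hi => h _ (by omega)⟩,
      fun ⟨hoff, hin⟩ j hj => ?_⟩
    by_cases hjm : j < m ∨ m + l ≤ j
    · exact hoff j hj hjm
    · obtain ⟨i, rfl⟩ := Nat.exists_eq_add_of_le (show m ≤ j by omega)
      exact hin i (by omega)
  rw [hsplit, hsplit (LamIneqAt w' N lam t'), hblock]
  exact and_congr_left' (forall₃_congr fun j _ hj => hoff j hj)

lemma letterAt_pair (u v : List ℕ) (a b : ℕ) :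
    letterAt (u ++ [a, b] ++ v) (u.length + 1) = a ∧
      letterAt (u ++ [a, b] ++ v) (u.length + 1 + 1) = b :=
  ⟨letterAt_block (i := 0) (by simp), letterAt_block (i := 1) (by simp)⟩

lemma letterAt_triple (u v : List ℕ) (a b c : ℕ) :
    letterAt (u ++ [a, b, c] ++ v) (u.length + 1) = a ∧
      letterAt (u ++ [a, b, c] ++ v) (u.length + 1 + 1) = b ∧
      letterAt (u ++ [a, b, c] ++ v) (u.length + 2 + 1) = c :=
  ⟨letterAt_block (i := 0) (by simp), letterAt_block (i := 1) (by simp),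
    letterAt_block (i := 2) (by simp)⟩

lemma forall_lamIneqAt_comp_sTrans_iff (hab : a + 1 < b ∨ b + 1 < a) (hN : u.length + 2 ≤ N) :
    (∀ j < N, LamIneqAt (u ++ [a, b] ++ v) N lam t j) ↔
      ∀ j < N, LamIneqAt (u ++ [b, a] ++ v) N lam (t ∘ sTrans u.length) j := by
  have hout : ∀ j, (j < u.length ∨ u.length + 2 ≤ j) →
      letterAt (u ++ [b, a] ++ v) (j + 1) = letterAt (u ++ [a, b] ++ v) (j + 1) ∧
        (t ∘ sTrans u.length) j = t j := fun j hj =>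
    ⟨letterAt_congr_block (mid := [a, b]) (mid' := [b, a]) rfl hj,
      congrArg t (sTrans_apply_of_ne (by omega) (by omega))⟩
  obtain ⟨hw₀, hw₁⟩ := letterAt_pair u v a b
  obtain ⟨hw₀', hw₁'⟩ := letterAt_pair u v b a
  have ht₀ : (t ∘ sTrans u.length) u.length = t (u.length + 1) :=
    congrArg t (sTrans_apply_left _)
  have ht₁ : (t ∘ sTrans u.length) (u.length + 1) = t u.length :=
    congrArg t (sTrans_apply_right _)
  refine forall_lamIneqAt_iff_of_block hN hout (fun c => ?_) ?_
  · simp only [columnSum_succ (show u.length < u.length + 2 by omega),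
      columnSum_succ (show u.length + 1 < u.length + 2 by omega), columnSum_self, hw₀, hw₁, hw₀',
      hw₁', ht₀, ht₁]
    ring
  · have hend : ∀ c, columnSum (u ++ [b, a] ++ v) N c (u.length + 2) (t ∘ sTrans u.length) =
        columnSum (u ++ [a, b] ++ v) N c (u.length + 2) t :=
      fun c => columnSum_congr fun k hk _ => hout k (Or.inr hk)
    simp only [Nat.forall_lt_succ_right, not_lt_zero, IsEmpty.forall_iff, forall_const,
      true_and, add_zero, LamIneqAt, columnSum_succ (show u.length + 1 < N by omega), hend,
      hw₀, hw₁, hw₀', hw₁', ht₀, ht₁, columnCoeff_of_far hab, columnCoeff_of_far hab.symm,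
      zero_mul, zero_add]
    exact and_comm

lemma IsTropicalMoveAt.forall_lamIneqAt_iff (ht : IsTropicalMoveAt u.length t t')
    (hN : u.length + 3 ≤ N) :
    (∀ j < N, LamIneqAt (u ++ [a, a + 1, a] ++ v) N lam t j) ↔
      ∀ j < N, LamIneqAt (u ++ [a + 1, a, a + 1] ++ v) N lam t' j := by
  have hout : ∀ j, (j < u.length ∨ u.length + 3 ≤ j) →
      letterAt (u ++ [a + 1, a, a + 1] ++ v) (j + 1) =
        letterAt (u ++ [a, a + 1, a] ++ v) (j + 1) ∧ t' j = t j := fun j hj =>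
    ⟨letterAt_congr_block (mid := [a, a + 1, a]) (mid' := [a + 1, a, a + 1]) rfl hj,
      ht.eq_of_outside j hj⟩
  obtain ⟨hw₀, hw₁, hw₂⟩ := letterAt_triple u v a (a + 1) a
  obtain ⟨hw₀', hw₁', hw₂'⟩ := letterAt_triple u v (a + 1) a (a + 1)
  refine forall_lamIneqAt_iff_of_block hN hout (fun c => ?_) ?_
  · simp only [columnSum_succ (show u.length < u.length + 3 by omega),
      columnSum_succ (show u.length + 1 < u.length + 3 by omega),
      columnSum_succ (show u.length + 2 < u.length + 3 by omega), columnSum_self, hw₀, hw₁, hw₂,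
      hw₀', hw₁', hw₂']
    rcases ht.isTropicalMove.cases with ⟨-, hx, hy, hz⟩ | ⟨-, hx, hy, hz⟩ <;>
    · rw [hx, hy, hz]
      ring
  · have hend : ∀ c, columnSum (u ++ [a + 1, a, a + 1] ++ v) N c (u.length + 3) t' =
        columnSum (u ++ [a, a + 1, a] ++ v) N c (u.length + 3) t :=
      fun c => columnSum_congr fun k hk _ => hout k (Or.inr hk)
    simp only [Nat.forall_lt_succ_right, not_lt_zero, IsEmpty.forall_iff, forall_const,
      true_and, add_zero, LamIneqAt, columnSum_succ (show u.length + 1 < N by omega),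
      columnSum_succ (show u.length + 2 < N by omega), hend, hw₀, hw₁, hw₂, hw₀', hw₁', hw₂',
      columnCoeff_self, columnCoeff_succ_left, columnCoeff_succ_right]
    rcases ht.isTropicalMove.cases with ⟨hxz, hx, hy, hz⟩ | ⟨hxz, hx, hy, hz⟩ <;>
    · rw [hx, hy, hz]
      constructor <;> rintro ⟨⟨h₀, h₁⟩, h₂⟩ <;> refine ⟨⟨?_, ?_⟩, ?_⟩ <;> linarith

end Block

/-! ### Unimodular maps and volume -/

section Unimodular

open MeasureTheory

variable {ι : Type*}

/-- The lattice `ℤ^ι` of integral points of `ℝ^ι`; a linear map is unimodular if it maps this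
lattice onto itself. -/
def integerLattice (ι : Type*) : Set (ι → ℝ) := {x | ∀ i, x i ∈ (Int.castRingHom ℝ).range}

lemma single_one_mem_integerLattice (j : ι) : Pi.single j (1 : ℝ) ∈ integerLattice ι := by
  intro i
  rw [Pi.single_apply]
  split_ifs
  exacts [one_mem _, zero_mem _]

section Finite

variable [Finite ι] {L : (ι → ℝ) →ₗ[ℝ] (ι → ℝ)}

lemma det_mem_of_mapsTo_integerLattice
    (hL : Set.MapsTo L (integerLattice ι) (integerLattice ι)) :
    LinearMap.det L ∈ (Int.castRingHom ℝ).range := by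
  have := Fintype.ofFinite ι
  rw [← LinearMap.det_toMatrix', Matrix.det_apply]
  refine sum_mem fun σ _ => Subring.zsmul_mem _ (prod_mem fun j _ => ?_) _
  exact hL (single_one_mem_integerLattice j) (σ j)

lemma exists_rightInverse_of_surjOn_integerLattice
    (hL : Set.SurjOn L (integerLattice ι) (integerLattice ι)) :
    ∃ M : (ι → ℝ) →ₗ[ℝ] (ι → ℝ), L ∘ₗ M = LinearMap.id ∧
      Set.MapsTo M (integerLattice ι) (integerLattice ι) := by
  have := Fintype.ofFinite ι
  choose g hg hLg using fun j => hL (single_one_mem_integerLattice j)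
  have hM : ∀ x, (Pi.basisFun ℝ ι).constr ℝ g x = ∑ j, x j • g j := fun x => by
    simp only [Module.Basis.constr_apply_fintype, Pi.basisFun_equivFun, LinearEquiv.refl_apply]
  refine ⟨(Pi.basisFun ℝ ι).constr ℝ g, (Pi.basisFun ℝ ι).ext fun j => ?_, fun x hx i => ?_⟩
  · rw [LinearMap.comp_apply, Module.Basis.constr_basis, hLg, LinearMap.id_apply,
      Pi.basisFun_apply]
  · rw [hM, Finset.sum_apply]
    exact sum_mem fun j _ => mul_mem (hx j) (hg j i)

lemma abs_det_eq_one_of_integerLattice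
    (hL : Set.MapsTo L (integerLattice ι) (integerLattice ι))
    (hL' : Set.SurjOn L (integerLattice ι) (integerLattice ι)) : |LinearMap.det L| = 1 := by
  obtain ⟨M, hLM, hM⟩ := exists_rightInverse_of_surjOn_integerLattice hL'
  obtain ⟨d, hd⟩ := det_mem_of_mapsTo_integerLattice hL
  obtain ⟨e, he⟩ := det_mem_of_mapsTo_integerLattice hM
  rw [eq_intCast] at hd he
  have hde : d * e = 1 := by
    have h : LinearMap.det L * LinearMap.det M = 1 := by
      rw [← LinearMap.det_comp, hLM, LinearMap.det_id]
    rw [← hd, ← he] at h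
    exact_mod_cast h
  rw [← hd, ← Int.cast_abs, Int.isUnit_iff_abs_eq.1 (IsUnit.of_mul_eq_one e hde), Int.cast_one]

end Finite

lemma volume_preimage_of_integerLattice [Fintype ι] {L : (ι → ℝ) →ₗ[ℝ] (ι → ℝ)}
    (hL : Set.MapsTo L (integerLattice ι) (integerLattice ι))
    (hL' : Set.SurjOn L (integerLattice ι) (integerLattice ι)) (S : Set (ι → ℝ)) :
    volume (L ⁻¹' S) = volume S := by
  have hdet := abs_det_eq_one_of_integerLattice hL hL'
  have hdet₀ : LinearMap.det L ≠ 0 := abs_pos.1 (hdet ▸ one_pos)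
  rw [Measure.addHaar_preimage_linearMap _ hdet₀, abs_inv, hdet, inv_one, ENNReal.ofReal_one,
    one_mul]

lemma volume_preimage_comp_perm [Fintype ι] (σ : Equiv.Perm ι) (S : Set (ι → ℝ)) :
    volume ((fun t : ι → ℝ => t ∘ σ) ⁻¹' S) = volume S :=
  volume_preimage_of_integerLattice (L := LinearMap.funLeft ℝ ℝ σ) (fun _ hx _ => hx _)
    (fun y hy => ⟨y ∘ σ.symm, fun _ => hy _, funext fun i => congrArg y (σ.symm_apply_apply i)⟩) S

end Unimodular

section TropicalPiece

open MeasureTheory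

variable {ι : Type*} {a b c : ι}

/-- The linear map `(x, y, z) ↦ (y - x, x + z, x)` of the coordinates `a, b, c`. It is the tropical
move where `x + z ≤ y`; the tropical move where `y ≤ x + z` is `tropicalPiece c b a`, which is also
its inverse. -/
def tropicalPiece (a b c : ι) : (ι → ℝ) →ₗ[ℝ] (ι → ℝ) where
  toFun t j := if j = a then t b - t a else if j = b then t a + t c else if j = c then t a else t j
  map_add' s t := by
    ext j
    simp only [Pi.add_apply]
    split_ifs <;> ring
  map_smul' r t := by
    ext j
    simp only [Pi.smul_apply, smul_eq_mul, RingHom.id_apply]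
    split_ifs <;> ring

lemma tropicalPiece_apply (t : ι → ℝ) (j : ι) : tropicalPiece a b c t j =
    if j = a then t b - t a else if j = b then t a + t c else if j = c then t a else t j :=
  rfl

lemma tropicalPiece_tropicalPiece (hab : a ≠ b) (hac : a ≠ c) (hbc : b ≠ c) (t : ι → ℝ) :
    tropicalPiece a b c (tropicalPiece c b a t) = t := by
  ext j
  simp only [tropicalPiece_apply, if_true, hab, hac, hbc, hab.symm, hac.symm, hbc.symm, if_false]
  split_ifs with ha hb hc
  · rw [ha]; ring
  · rw [hb]; ring
  · rw [hc]
  · rfl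

lemma mapsTo_tropicalPiece_integerLattice :
    Set.MapsTo (tropicalPiece a b c) (integerLattice ι) (integerLattice ι) := by
  intro t ht j
  rw [tropicalPiece_apply]
  split_ifs
  exacts [sub_mem (ht b) (ht a), add_mem (ht a) (ht c), ht a, ht j]

lemma volume_preimage_tropicalPiece [Fintype ι] (hab : a ≠ b) (hac : a ≠ c) (hbc : b ≠ c)
    (S : Set (ι → ℝ)) : volume (tropicalPiece a b c ⁻¹' S) = volume S :=
  volume_preimage_of_integerLattice mapsTo_tropicalPiece_integerLattice
    (fun y hy => ⟨_, mapsTo_tropicalPiece_integerLattice hy,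
      tropicalPiece_tropicalPiece hab hac hbc y⟩) S

lemma volume_eq_of_tropicalMove [Fintype ι] (hab : a ≠ b) (hac : a ≠ c) (hbc : b ≠ c)
    {S S' : Set (ι → ℝ)}
    (h : ∀ t t' : ι → ℝ, (∀ j, j ≠ a → j ≠ b → j ≠ c → t' j = t j) →
      IsTropicalMove (t a) (t b) (t c) (t' a) (t' b) (t' c) → (t ∈ S ↔ t' ∈ S')) :
    volume S = volume S' := by
  set A : Set (ι → ℝ) := {t | t a + t c ≤ t b} with hA
  set A' : Set (ι → ℝ) := {t | t b ≤ t a + t c} with hA'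
  have hAm : MeasurableSet A := measurableSet_le (by fun_prop) (by fun_prop)
  have hAm' : MeasurableSet A' := measurableSet_le (by fun_prop) (by fun_prop)
  have hinter : S ∩ A = tropicalPiece a b c ⁻¹' (S' ∩ A') := by
    ext t
    simp only [Set.mem_preimage, Set.mem_inter_iff, hA, hA', Set.mem_ofPred_eq,
      tropicalPiece_apply, if_true, hab.symm, hac.symm, hbc.symm, if_false, sub_add_cancel]
    refine and_congr_left fun ht => h t _ (fun j ha hb hc => ?_) ⟨?_, ?_, ?_⟩ <;>
      simp only [tropicalPiece_apply, if_true, hab.symm, hac.symm, hbc.symm, if_false]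
    · simp only [ha, hb, hc, if_false]
    · rw [max_eq_right (by linarith)]
    · rw [min_eq_left (by linarith)]
  have hsdiff : S \ A = tropicalPiece c b a ⁻¹' (S' \ A') := by
    ext t
    simp only [Set.mem_preimage, Set.mem_sdiff, hA, hA', Set.mem_ofPred_eq,
      tropicalPiece_apply, if_true, hab, hac, hbc, if_false, sub_add_cancel, add_comm (t c)]
    refine and_congr_left fun ht => h t _ (fun j ha hb hc => ?_) ⟨?_, ?_, ?_⟩ <;>
      simp only [tropicalPiece_apply, if_true, hab, hac, hbc, if_false, add_comm (t c)]
    · simp only [ha, hb, hc, if_false]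
    · rw [max_eq_left (by linarith)]
    · rw [min_eq_right (by linarith)]
  rw [← measure_inter_add_sdiff S hAm, hinter, hsdiff, volume_preimage_tropicalPiece hab hac hbc,
    volume_preimage_tropicalPiece hbc.symm hac.symm hab.symm, measure_inter_add_sdiff S' hAm']

end TropicalPiece

/-! ### Invariance of the volume under braid moves -/

/-- The string polytope `Δ_w(λ)` for an arbitrary real weight `λ`. -/
def realStringPolytope (n : ℕ) (w : List ℕ) (lam : ℕ → ℝ) : Set (Fin (Dim n) → ℝ) :=
  stringCone n w ∩ {t | ∀ j < Dim n, LamIneqAt w (Dim n) lam (entry n t) j}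

lemma stringPolytope_eq_realStringPolytope (n : ℕ) (w : List ℕ) (lam : ℕ → ℤ) :
    stringPolytope n w lam = realStringPolytope n w fun j => lam j :=
  Set.ext fun _ => and_congr_right fun _ => mem_lamCone_iff

lemma entry_comp_swap {n m : ℕ} (h₀ : m < Dim n) (h₁ : m + 1 < Dim n) (t : Fin (Dim n) → ℝ) :
    entry n (t ∘ Equiv.swap ⟨m, h₀⟩ ⟨m + 1, h₁⟩) = entry n t ∘ sTrans m := by
  ext j
  by_cases hj : j < Dim n
  · rw [entry_of_lt hj, Function.comp_apply, Function.comp_apply, sTrans_apply,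
      Equiv.swap_apply_def]
    simp only [Fin.mk.injEq]
    split_ifs
    exacts [(entry_of_lt _ t).symm, (entry_of_lt _ t).symm, (entry_of_lt hj t).symm]
  · rw [Function.comp_apply, sTrans_apply_of_ne (by omega) (by omega), entry, entry, dif_neg hj,
      dif_neg hj]

section BraidVolume

open MeasureTheory

variable {n : ℕ} {u v w w' : List ℕ} {a b : ℕ} {lam : ℕ → ℝ}

lemma volume_realStringPolytope_pair (hab : a + 1 < b ∨ b + 1 < a)
    (hw : IsReduced n (u ++ [a, b] ++ v)) (hw' : IsReduced n (u ++ [b, a] ++ v)) :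
    volume (realStringPolytope n (u ++ [a, b] ++ v) lam) =
      volume (realStringPolytope n (u ++ [b, a] ++ v) lam) := by
  have hlen : u.length + 2 ≤ Dim n := by
    have : (u ++ [a, b] ++ v).length = Dim n := hw.1
    simp only [List.length_append, List.length_cons, List.length_nil] at this
    omega
  let σ : Equiv.Perm (Fin (Dim n)) :=
    Equiv.swap ⟨u.length, by omega⟩ ⟨u.length + 1, by omega⟩
  rw [← volume_preimage_comp_perm σ (realStringPolytope n (u ++ [b, a] ++ v) lam)]
  congr 1
  ext t
  have hσ : entry n (t ∘ σ) = entry n t ∘ sTrans u.length := entry_comp_swap _ _ t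
  rw [Set.mem_preimage, realStringPolytope, realStringPolytope, Set.mem_inter_iff,
    Set.mem_inter_iff, hw.mem_stringCone_iff, hw'.mem_stringCone_iff, Set.mem_ofPred_eq,
    Set.mem_ofPred_eq, hσ]
  refine and_congr (forall₃_congr fun k _ _ => ⟨comp_sTrans_mem_potentialCone hab, fun h => ?_⟩)
    (forall_lamIneqAt_comp_sTrans_iff hab hlen)
  have := comp_sTrans_mem_potentialCone hab.symm h
  rwa [show (entry n t ∘ sTrans u.length) ∘ sTrans u.length = entry n t from
    funext fun j => congrArg (entry n t) (sTrans_sTrans _ j)] at this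

lemma volume_realStringPolytope_triple (hw : IsReduced n (u ++ [a, a + 1, a] ++ v))
    (hw' : IsReduced n (u ++ [a + 1, a, a + 1] ++ v)) :
    volume (realStringPolytope n (u ++ [a, a + 1, a] ++ v) lam) =
      volume (realStringPolytope n (u ++ [a + 1, a, a + 1] ++ v) lam) := by
  have hlen : u.length + 3 ≤ Dim n := by
    have : (u ++ [a, a + 1, a] ++ v).length = Dim n := hw.1
    simp only [List.length_append, List.length_cons, List.length_nil] at this
    omega
  have h₀ : u.length < Dim n := by omega
  have h₁ : u.length + 1 < Dim n := by omega
  have h₂ : u.length + 2 < Dim n := by omega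
  refine volume_eq_of_tropicalMove (a := ⟨u.length, h₀⟩) (b := ⟨u.length + 1, h₁⟩)
    (c := ⟨u.length + 2, h₂⟩) (by simp) (by simp) (by simp) fun t t' hout hmove => ?_
  have ht : IsTropicalMoveAt u.length (entry n t) (entry n t') := by
    refine ⟨fun j hj => ?_, by simpa only [entry_of_lt, h₀, h₁, h₂] using hmove⟩
    unfold entry
    split_ifs
    · exact hout _ (by simp; omega) (by simp; omega) (by simp; omega)
    · rfl
  rw [realStringPolytope, realStringPolytope, Set.mem_inter_iff, Set.mem_inter_iff,
    hw.mem_stringCone_iff, hw'.mem_stringCone_iff]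
  exact and_congr (forall₃_congr fun k _ _ => ⟨ht.mem_potentialCone hw.isReducedExpr.reduced,
    ht.mem_potentialCone_symm hw'.isReducedExpr.reduced⟩) (ht.forall_lamIneqAt_iff hlen)

lemma BraidMove.volume_realStringPolytope_eq (h : BraidMove w w') (hw : IsReduced n w)
    (hw' : IsReduced n w') :
    volume (realStringPolytope n w lam) = volume (realStringPolytope n w' lam) := by
  rcases h with ⟨u, v, a, b, hab, rfl, rfl⟩ | ⟨u, v, a, b, rfl | rfl, rfl, rfl⟩
  · exact volume_realStringPolytope_pair hab hw hw'
  · exact volume_realStringPolytope_triple hw hw'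
  · exact (volume_realStringPolytope_triple hw' hw).symm

lemma IsReduced.volume_realStringPolytope_eq_baseWord (hw : IsReduced n w) :
    volume (realStringPolytope n w lam) = volume (realStringPolytope n (baseWord n) lam) :=
  IsReduced.braid_induction
    (Q := fun w => volume (realStringPolytope n w lam) =
      volume (realStringPolytope n (baseWord n) lam)) rfl
    (fun _ _ hw hw' h ih => (h.volume_realStringPolytope_eq hw hw').symm.trans ih) hw

end BraidVolume

/-! ### The base word and the Gelfand–Cetlin polytope -/

section Rows

variable {n m i : ℕ}

/-- The vector of `ℝ^N` whose coordinate at position `i` of row `m`, that is, with `0`-based index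
`Dim m + i` for `i ≤ m < n`, is `f m i`. -/
def ofRows (n : ℕ) (f : ℕ → ℕ → ℝ) (j : Fin (Dim n)) : ℝ :=
  f (exists_eq_Dim_add j.2).choose (exists_eq_Dim_add j.2).choose_spec.choose

lemma ofRows_apply (f : ℕ → ℕ → ℝ) (hm : m < n) (hi : i ≤ m) :
    ofRows n f ⟨Dim m + i, Dim_add_lt_Dim hm hi⟩ = f m i := by
  obtain ⟨_, hi', h⟩ := (exists_eq_Dim_add (Dim_add_lt_Dim hm hi)).choose_spec.choose_spec
  obtain ⟨hm_eq, hi_eq⟩ := Dim_add_inj hi hi' h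
  rw [ofRows, ← hi_eq, ← hm_eq]

lemma entry_ofRows (f : ℕ → ℕ → ℝ) (hm : m < n) (hi : i ≤ m) :
    entry n (ofRows n f) (Dim m + i) = f m i := by
  rw [entry_of_lt (Dim_add_lt_Dim hm hi), ofRows_apply f hm hi]

lemma eq_ofRows {x : Fin (Dim n) → ℝ} {f : ℕ → ℕ → ℝ}
    (h : ∀ m < n, ∀ i ≤ m, entry n x (Dim m + i) = f m i) : x = ofRows n f := by
  ext ⟨j, hj⟩
  obtain ⟨m, i, hm, hi, rfl⟩ := exists_eq_Dim_add hj
  rw [ofRows_apply f hm hi, ← h m hm i hi, entry_of_lt hj]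

lemma ofRows_mem_integerLattice {f : ℕ → ℕ → ℝ}
    (h : ∀ m i, f m i ∈ (Int.castRingHom ℝ).range) : ofRows n f ∈ integerLattice (Fin (Dim n)) :=
  fun _ => h _ _

end Rows

section StringParams

/-- The sum of the first `l` differences between the rows `m + 1` and `m` of the pattern `X`. -/
def rowIncrement (X : ℕ → ℕ → ℝ) (m l : ℕ) : ℝ := ∑ c ∈ Finset.range l, (X (m + 1) c - X m c)

/-- The string parameters, with respect to the base word, of the triangular pattern `X` with rows
`X 0, …, X n`. -/
def stringParams (n : ℕ) (X : ℕ → ℕ → ℝ) : Fin (Dim n) → ℝ :=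
  ofRows n fun m i => rowIncrement X m (m + 1 - i)

/-- The interlacing inequalities `X (m + 1) c ≥ X m c ≥ X (m + 1) (c + 1)` of the triangular pattern
`X` with rows `X 0, …, X n`. -/
def IsInterlacing (n : ℕ) (X : ℕ → ℕ → ℝ) : Prop :=
  ∀ m < n, ∀ c ≤ m, X m c ≤ X (m + 1) c ∧ X (m + 1) (c + 1) ≤ X m c

variable {n m i l c : ℕ} {X Y : ℕ → ℕ → ℝ}

lemma rowIncrement_zero : rowIncrement X m 0 = 0 := Finset.sum_range_zero _

lemma rowIncrement_succ :
    rowIncrement X m (l + 1) = rowIncrement X m l + (X (m + 1) l - X m l) :=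
  Finset.sum_range_succ _ l

lemma rowIncrement_add : rowIncrement (X + Y) m l = rowIncrement X m l + rowIncrement Y m l := by
  simp only [rowIncrement, Pi.add_apply, add_sub_add_comm, Finset.sum_add_distrib]

lemma rowIncrement_smul (r : ℝ) : rowIncrement (r • X) m l = r * rowIncrement X m l := by
  simp only [rowIncrement, Pi.smul_apply, smul_eq_mul, ← mul_sub, Finset.mul_sum]

lemma stringParams_add : stringParams n (X + Y) = stringParams n X + stringParams n Y :=
  funext fun _ => rowIncrement_add

lemma stringParams_smul (r : ℝ) : stringParams n (r • X) = r • stringParams n X :=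
  funext fun _ => rowIncrement_smul r

lemma entry_stringParams (hm : m < n) (hi : i ≤ m) :
    entry n (stringParams n X) (Dim m + i) = rowIncrement X m (m + 1 - i) :=
  entry_ofRows _ hm hi

lemma entry_stringParams_sub (hm : m < n) (hc : c ≤ m) :
    entry n (stringParams n X) (Dim m + (m - c)) = rowIncrement X m (c + 1) := by
  rw [entry_stringParams hm (Nat.sub_le m c), show m + 1 - (m - c) = c + 1 by omega]

lemma sum_range_columnCoeff_mul (c : ℕ) (Q : ℕ → ℝ) :
    ∑ l ∈ Finset.range (c + 1), columnCoeff l (c + 1) * Q l = Q c := by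
  rw [Finset.sum_range_succ, columnCoeff_succ_right, one_mul, add_eq_right]
  refine Finset.sum_eq_zero fun l hl => ?_
  rw [columnCoeff_of_far (Or.inl (Nat.add_lt_add_right (Finset.mem_range.1 hl) 1)), zero_mul]

lemma sum_range_columnCoeff_mul_of_le {k : ℕ} (hk : c + 3 ≤ k) (Q : ℕ → ℝ) :
    ∑ l ∈ Finset.range k, columnCoeff l (c + 1) * Q l = Q c - 2 * Q (c + 1) + Q (c + 2) := by
  induction k, hk using Nat.le_induction with
  | base =>
    rw [Finset.sum_range_succ, Finset.sum_range_succ, sum_range_columnCoeff_mul, columnCoeff_self,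
      columnCoeff_succ_left]
    ring
  | succ k hk ih =>
    rw [Finset.sum_range_succ, ih, columnCoeff_of_far (Or.inr (by omega)), zero_mul, add_zero]

lemma columnSum_baseWord_row (hm : m < n) (a : ℕ) (h : i + l = m + 1) :
    columnSum (baseWord n) (Dim (m + 1)) a (Dim m + i) (entry n (stringParams n X)) =
      ∑ k ∈ Finset.range (l + 1), columnCoeff k a * rowIncrement X m k := by
  induction l generalizing i with
  | zero =>
    rw [show Dim m + i = Dim (m + 1) by rw [Dim_succ]; omega, columnSum_self,
      Finset.sum_range_one, rowIncrement_zero, mul_zero]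
  | succ l ih =>
    rw [columnSum_succ (by rw [Dim_succ]; omega), letterAt_baseWord hm (by omega), add_assoc,
      ih (i := i + 1) (by omega), entry_stringParams hm (by omega),
      show m + 1 - i = l + 1 by omega, Finset.sum_range_succ _ (l + 1), add_comm]

lemma columnSum_baseWord_Dim (hm : m ≤ n) (hc : c < m) :
    columnSum (baseWord n) (Dim n) (c + 1) (Dim m) (entry n (stringParams n X)) =
      (X n (c + 1) - X n c) - (X m (c + 1) - X m c) := by
  induction hm using Nat.decreasingInduction with
  | self => rw [columnSum_self, sub_self]
  | of_succ m hm ih =>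
    have hrow := columnSum_baseWord_row (X := X) hm (c + 1) (Nat.zero_add (m + 1))
    rw [add_zero, sum_range_columnCoeff_mul_of_le (by omega)] at hrow
    rw [← columnSum_add_columnSum (Dim_mono (Nat.le_succ m)) (Dim_mono hm), hrow,
      ih (hc.trans (Nat.lt_succ_self m))]
    simp only [rowIncrement_succ]
    ring

lemma columnSum_baseWord_succ (hm : m < n) (hc : c ≤ m) :
    columnSum (baseWord n) (Dim n) (c + 1) (Dim m + (m - c) + 1) (entry n (stringParams n X)) =
      rowIncrement X m c + ((X n (c + 1) - X n c) - (X (m + 1) (c + 1) - X (m + 1) c)) := by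
  rw [← columnSum_add_columnSum (m := Dim (m + 1)) (by rw [Dim_succ]; omega) (Dim_mono hm),
    columnSum_baseWord_Dim hm (Nat.lt_succ_of_le hc), add_assoc,
    columnSum_baseWord_row (l := c) hm _ (by omega), sum_range_columnCoeff_mul]

lemma stringParams_mem_rowChainCone_iff : entry n (stringParams n X) ∈ rowChainCone n ↔
    ∀ m < n, ∀ c ≤ m, X m c ≤ X (m + 1) c := by
  have key : ∀ m < n, ∀ c ≤ m,
      ((if m - c = m then 0 else entry n (stringParams n X) (Dim m + (m - c + 1))) ≤
        entry n (stringParams n X) (Dim m + (m - c)) ↔ X m c ≤ X (m + 1) c) := by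
    intro m hm c hc
    have hnext : (if m - c = m then 0 else entry n (stringParams n X) (Dim m + (m - c + 1))) =
        rowIncrement X m c := by
      split_ifs with h
      · rw [show c = 0 by omega, rowIncrement_zero]
      · rw [entry_stringParams hm (by omega), show m + 1 - (m - c + 1) = c by omega]
    rw [hnext, entry_stringParams_sub hm hc, rowIncrement_succ, le_add_iff_nonneg_right,
      sub_nonneg]
  refine ⟨fun h m hm c hc => (key m hm c hc).1 (h m hm _ (Nat.sub_le m c)), fun h m hm i hi => ?_⟩
  have := (key m hm (m - i) (Nat.sub_le m i)).2 (h m hm _ (Nat.sub_le m i))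
  rwa [Nat.sub_sub_self hi] at this

lemma forall_lamIneqAt_stringParams_iff {lam : ℕ → ℝ}
    (hX : ∀ c < n, X n c - X n (c + 1) = lam (c + 1)) :
    (∀ j < Dim n, LamIneqAt (baseWord n) (Dim n) lam (entry n (stringParams n X)) j) ↔
      ∀ m < n, ∀ c ≤ m, X (m + 1) (c + 1) ≤ X m c := by
  have key : ∀ m < n, ∀ c ≤ m,
      (LamIneqAt (baseWord n) (Dim n) lam (entry n (stringParams n X)) (Dim m + (m - c)) ↔
        X (m + 1) (c + 1) ≤ X m c) := by
    intro m hm c hc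
    rw [LamIneqAt, letterAt_baseWord hm (Nat.sub_le m c), show m + 1 - (m - c) = c + 1 by omega,
      columnSum_baseWord_succ hm hc, entry_stringParams_sub hm hc, rowIncrement_succ,
      ← hX c (by omega)]
    constructor <;> intro h <;> linarith
  refine ⟨fun h m hm c hc => (key m hm c hc).1 (h _ (Dim_add_lt_Dim hm (Nat.sub_le m c))),
    fun h j hj => ?_⟩
  obtain ⟨m, i, hm, hi, rfl⟩ := exists_eq_Dim_add hj
  have := (key m hm (m - i) (Nat.sub_le m i)).2 (h m hm _ (Nat.sub_le m i))
  rwa [Nat.sub_sub_self hi] at this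

lemma stringParams_mem_realStringPolytope_iff {lam : ℕ → ℝ}
    (hX : ∀ c < n, X n c - X n (c + 1) = lam (c + 1)) :
    stringParams n X ∈ realStringPolytope n (baseWord n) lam ↔ IsInterlacing n X := by
  rw [realStringPolytope, Set.mem_inter_iff, mem_stringCone_baseWord_iff,
    stringParams_mem_rowChainCone_iff, Set.mem_ofPred_eq, forall_lamIneqAt_stringParams_iff hX]
  simp only [IsInterlacing, forall_and]

end StringParams

section GelfandCetlin

variable {n m c l : ℕ} {lam lam' : ℕ → ℝ} {x y : Fin (Dim n) → ℝ}

/-- The Gelfand–Cetlin pattern with top row given by the real weight `λ` and lower rows by `x`.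
Rows and positions are indexed from `0`, so this is `x_{m+1,c+1}`. -/
def gcPattern (n : ℕ) (lam : ℕ → ℝ) (x : Fin (Dim n) → ℝ) (m c : ℕ) : ℝ :=
  if m < n then entry n x (Dim m + c) else ∑ k ∈ Finset.Icc (c + 1) n, lam k

/-- The Gelfand–Cetlin polytope for an arbitrary real weight `λ`. -/
def realGCPolytope (n : ℕ) (lam : ℕ → ℝ) : Set (Fin (Dim n) → ℝ) :=
  {x | IsInterlacing n (gcPattern n lam x)}

lemma gcX_eq_gcPattern (lam : ℕ → ℤ) (hm : m ≤ n) :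
    gcX n lam x (m + 1) (c + 1) = gcPattern n (fun j => lam j) x m c := by
  unfold gcX gcPattern
  by_cases h : m < n
  · rw [if_neg (by omega), if_pos h, entry]
    simp only [Nat.add_sub_cancel, Dim, mul_comm m]
  · rw [if_pos (by omega), if_neg h, ite_eq_left_iff]
    exact fun hc => by rw [Finset.Icc_eq_empty hc, Finset.sum_empty]

lemma GCPolytope_eq_realGCPolytope (n : ℕ) (lam : ℕ → ℤ) :
    GCPolytope n lam = realGCPolytope n fun j => lam j := by
  ext x
  constructor
  · intro h m hm c hc
    have := h (m + 1) (c + 1) (by omega) (by omega) (by omega) (by omega)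
    simpa only [gcX_eq_gcPattern, hm, hm.le, Nat.succ_le_of_lt hm] using this
  · intro h k j hk hkn hj hjk
    obtain ⟨m, rfl⟩ := Nat.exists_eq_add_of_le' hk
    obtain ⟨c, rfl⟩ := Nat.exists_eq_add_of_le' hj
    rw [gcX_eq_gcPattern lam (by omega), gcX_eq_gcPattern lam hkn, gcX_eq_gcPattern lam hkn]
    exact h m hkn c (by omega)

lemma gcPattern_add :
    gcPattern n (lam + lam') (x + y) = gcPattern n lam x + gcPattern n lam' y := by
  ext m c
  simp only [gcPattern, entry, Pi.add_apply, Finset.sum_add_distrib]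
  split_ifs <;> simp only [add_zero]

lemma gcPattern_smul (r : ℝ) : gcPattern n (r • lam) (r • x) = r • gcPattern n lam x := by
  ext m c
  simp only [gcPattern, entry, Pi.smul_apply, smul_eq_mul, ← Finset.mul_sum]
  split_ifs <;> simp only [mul_zero]

lemma gcPattern_top_sub (hc : c < n) :
    gcPattern n lam x n c - gcPattern n lam x n (c + 1) = lam (c + 1) := by
  simp only [gcPattern, lt_irrefl, if_false]
  rw [← Finset.insert_Icc_add_one_left_eq_Icc (Nat.succ_le_of_lt hc),
    Finset.sum_insert (by simp), add_sub_cancel_right]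

/-- The linear part of the affine map from Gelfand–Cetlin patterns to string parameters with
respect to the base word. -/
def gcToString (n : ℕ) : (Fin (Dim n) → ℝ) →ₗ[ℝ] (Fin (Dim n) → ℝ) where
  toFun x := stringParams n (gcPattern n 0 x)
  map_add' x y := by rw [← stringParams_add, ← gcPattern_add, add_zero]
  map_smul' r x := by rw [RingHom.id_apply, ← stringParams_smul, ← gcPattern_smul, smul_zero]

lemma gcToString_apply : gcToString n x = stringParams n (gcPattern n 0 x) := rfl

lemma stringParams_gcPattern :
    stringParams n (gcPattern n lam x) = gcToString n x + stringParams n (gcPattern n lam 0) := by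
  rw [gcToString_apply, ← stringParams_add, ← gcPattern_add, zero_add, add_zero]

lemma entry_mem_of_mem_integerLattice (hx : x ∈ integerLattice (Fin (Dim n))) (a : ℕ) :
    entry n x a ∈ (Int.castRingHom ℝ).range := by
  unfold entry
  split_ifs
  exacts [hx _, zero_mem _]

lemma mapsTo_gcToString_integerLattice :
    Set.MapsTo (gcToString n) (integerLattice (Fin (Dim n))) (integerLattice (Fin (Dim n))) := by
  intro x hx
  have hpattern : ∀ m c, gcPattern n 0 x m c ∈ (Int.castRingHom ℝ).range := by
    intro m c
    unfold gcPattern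
    split_ifs
    exacts [entry_mem_of_mem_integerLattice hx _, sum_mem fun _ _ => zero_mem _]
  rw [gcToString_apply]
  exact ofRows_mem_integerLattice fun m i =>
    sum_mem fun c _ => sub_mem (hpattern (m + 1) c) (hpattern m c)

/-- The coordinates of row `m` of `y` in reverse order, preceded by `0`. -/
def reversedRow (n : ℕ) (y : Fin (Dim n) → ℝ) (m l : ℕ) : ℝ :=
  if l = 0 then 0 else entry n y (Dim m + (m + 1 - l))

/-- The triangular pattern with vanishing top row and string parameters `y`. -/
def patternOfParams (n : ℕ) (y : Fin (Dim n) → ℝ) (m c : ℕ) : ℝ :=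
  ∑ k ∈ Finset.Ico m n, (reversedRow n y k c - reversedRow n y k (c + 1))

lemma rowIncrement_patternOfParams (hm : m < n) :
    rowIncrement (patternOfParams n y) m l = reversedRow n y m l := by
  have hdiff : ∀ c, patternOfParams n y (m + 1) c - patternOfParams n y m c =
      reversedRow n y m (c + 1) - reversedRow n y m c := fun c => by
    rw [patternOfParams, patternOfParams, Finset.sum_eq_sum_Ico_succ_bot hm]
    ring
  simp only [rowIncrement, hdiff, Finset.sum_range_sub]
  rw [reversedRow, reversedRow, if_pos rfl, sub_zero]

lemma gcPattern_ofRows_patternOfParams (hm : m ≤ n) (hc : c ≤ m) :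
    gcPattern n 0 (ofRows n (patternOfParams n y)) m c = patternOfParams n y m c := by
  rw [gcPattern]
  split_ifs with h
  · exact entry_ofRows _ h hc
  · rw [hm.antisymm (not_lt.1 h), patternOfParams, Finset.Ico_self, Finset.sum_empty]
    exact Finset.sum_const_zero

lemma gcToString_ofRows_patternOfParams (y : Fin (Dim n) → ℝ) :
    gcToString n (ofRows n (patternOfParams n y)) = y := by
  rw [gcToString_apply, stringParams, eq_comm]
  refine eq_ofRows fun m hm i hi => ?_
  have hincr : rowIncrement (gcPattern n 0 (ofRows n (patternOfParams n y))) m (m + 1 - i) =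
      rowIncrement (patternOfParams n y) m (m + 1 - i) := by
    refine Finset.sum_congr rfl fun c hc => ?_
    rw [Finset.mem_range] at hc
    rw [gcPattern_ofRows_patternOfParams (by omega) (by omega),
      gcPattern_ofRows_patternOfParams (by omega) (by omega)]
  rw [hincr, rowIncrement_patternOfParams hm, reversedRow, if_neg (by omega),
    Nat.sub_sub_self (hi.trans (Nat.le_succ m))]

lemma surjOn_gcToString_integerLattice :
    Set.SurjOn (gcToString n) (integerLattice (Fin (Dim n))) (integerLattice (Fin (Dim n))) := by
  refine fun y hy => ⟨_, ofRows_mem_integerLattice fun m c => ?_,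
    gcToString_ofRows_patternOfParams y⟩
  have hrow : ∀ m l, reversedRow n y m l ∈ (Int.castRingHom ℝ).range := by
    intro m l
    unfold reversedRow
    split_ifs
    exacts [zero_mem _, entry_mem_of_mem_integerLattice hy _]
  exact sum_mem fun k _ => sub_mem (hrow k c) (hrow k (c + 1))

lemma realGCPolytope_eq_preimage : realGCPolytope n lam = gcToString n ⁻¹'
    ((fun s => s + stringParams n (gcPattern n lam 0)) ⁻¹'
      realStringPolytope n (baseWord n) lam) := by
  ext x
  rw [Set.mem_preimage, Set.mem_preimage, ← stringParams_gcPattern,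
    stringParams_mem_realStringPolytope_iff fun c hc => gcPattern_top_sub hc]
  rfl

open MeasureTheory in
lemma volume_realStringPolytope_baseWord :
    volume (realStringPolytope n (baseWord n) lam) = volume (realGCPolytope n lam) := by
  rw [realGCPolytope_eq_preimage, volume_preimage_of_integerLattice
    mapsTo_gcToString_integerLattice surjOn_gcToString_integerLattice, measure_preimage_add_right]

end GelfandCetlin

open MeasureTheory in
theorem statement15_general {n : ℕ} {w : List ℕ} (hw : IsReduced n w) (lam : ℕ → ℝ) :
    volume (realStringPolytope n w lam) = volume (realGCPolytope n lam) :=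
  hw.volume_realStringPolytope_eq_baseWord.trans volume_realStringPolytope_baseWord

open MeasureTheory in
/-- equal volumes.
For every reduced word `i ∈ Σ_{n+1}` and every dominant integral weight `λ`, the
Euclidean volume of the string polytope `Δ_i(λ)` equals that of the Gelfand–Cetlin
polytope `GC(λ)`. -/
theorem statement15 (n : ℕ) (hn : 1 ≤ n) (i : List ℕ) (hi : IsReduced n i)
    (lam : ℕ → ℤ) (hlam : Dominant n lam) :
    volume (stringPolytope n i lam) = volume (GCPolytope n lam) := by
  rw [stringPolytope_eq_realStringPolytope, GCPolytope_eq_realGCPolytope]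
  exact statement15_general hi _

end StringPolytope
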